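/- There exists a constant C > 0 depending only on n and C₀ such that for all θ ∈ (0,1) and all r ≥ ε: ε^{n−2} r^{6−2n} ∫_{U_r} Σ_{a,b,c,d=1}^n Z_{abcd}² dx ≤ (C/θ) ∫_{B⁺_{2r}(0)∖B⁺_r(0)} Σ_{a,b,c=1}^n Q_{ab,c}² dx + θ ε^{n−2} Σ_{i,j=1}^{n−1} Σ_{1≤|α|≤d} h_{ij,α}² r^{2|α|+2−n}, where U_r = {x ∈ ℝⁿ : |x − (0,…,0,3r/2)| < r/4}. -/

import Mathlib

open MeasureTheory

namespace B5
open MvPolynomial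

lemma pderiv_comm' {σ : Type*} (i j : σ) (p : MvPolynomial σ ℝ) :
    pderiv i (pderiv j p) = pderiv j (pderiv i p) := by
  classical
  ext m
  simp only [coeff_pderiv, Finsupp.add_apply, Finsupp.single_apply, add_right_comm m]
  by_cases h : i = j
  · subst h; simp
  · simp [h, Ne.symm h]; ring

noncomputable def Eu {σ : Type*} [Fintype σ] (p : MvPolynomial σ ℝ) : MvPolynomial σ ℝ :=
  ∑ i, X i * pderiv i p

noncomputable def Lap {σ : Type*} [Fintype σ] (p : MvPolynomial σ ℝ) : MvPolynomial σ ℝ :=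
  ∑ i, pderiv i (pderiv i p)

noncomputable def qq (σ : Type*) [Fintype σ] : MvPolynomial σ ℝ := ∑ i, X i * X i

section
variable {σ : Type*} [Fintype σ]

lemma coeff_X_pderiv (i : σ) (p : MvPolynomial σ ℝ) (m : σ →₀ ℕ) :
    coeff m (X i * pderiv i p) = (m i : ℝ) * coeff m p := by
  classical
  rw [coeff_X_mul']
  split_ifs with h
  · rw [coeff_pderiv]
    have h1 : 1 ≤ m i := by
      rw [Finsupp.mem_support_iff] at h; omega
    have h2 : m - Finsupp.single i 1 + Finsupp.single i 1 = m :=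
      tsub_add_cancel_of_le (by simpa [Finsupp.single_le_iff] using h1)
    rw [h2]
    have : (((m - Finsupp.single i 1 : σ →₀ ℕ) i : ℕ) : ℝ) + 1 = m i := by
      simp [Nat.cast_sub h1]
    rw [this]; ring
  · simp at h; simp [h]

lemma coeff_Eu (p : MvPolynomial σ ℝ) (m : σ →₀ ℕ) :
    coeff m (Eu p) = (∑ i, (m i : ℝ)) * coeff m p := by
  simp only [Eu, coeff_sum, coeff_X_pderiv, Finset.sum_mul]

lemma Eu_quad {a b c : ℝ} (ha : 0 ≤ a) (hb : 0 ≤ b) (hc : 0 < c) {p : MvPolynomial σ ℝ}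
    (h : C a * Eu (Eu p) + C b * Eu p + C c * p = 0) : p = 0 := by
  ext m
  have := congrArg (coeff m) h
  simp only [coeff_add, coeff_C_mul, coeff_Eu, coeff_zero] at this
  have hs : (0:ℝ) ≤ ∑ i, (m i : ℝ) := Finset.sum_nonneg fun i _ => by positivity
  set s := ∑ i, (m i : ℝ)
  have h2 : (a * (s * s) + b * s + c) * coeff m p = 0 := by linarith
  have h3 : (a * (s * s) + b * s + c) ≠ 0 := by positivity
  simpa [h3] using h2

lemma Eu_one {p : MvPolynomial σ ℝ} (h : Eu p + p = 0) : p = 0 :=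
  Eu_quad (a := 0) (b := 1) (c := 1) (by simp) (by simp) (by simp) (by simpa using h)

lemma Eu_add (p q : MvPolynomial σ ℝ) : Eu (p + q) = Eu p + Eu q := by
  simp [Eu, mul_add, Finset.sum_add_distrib]
lemma Eu_sub (p q : MvPolynomial σ ℝ) : Eu (p - q) = Eu p - Eu q := by
  simp [Eu, mul_sub, Finset.sum_sub_distrib]
lemma Eu_sum {ι : Type*} (s : Finset ι) (f : ι → MvPolynomial σ ℝ) :
    Eu (∑ i ∈ s, f i) = ∑ i ∈ s, Eu (f i) := by
  simp only [Eu, map_sum, Finset.mul_sum]; exact Finset.sum_comm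
lemma Lap_sum {ι : Type*} (s : Finset ι) (f : ι → MvPolynomial σ ℝ) :
    Lap (∑ i ∈ s, f i) = ∑ i ∈ s, Lap (f i) := by
  simp only [Lap, map_sum]; exact Finset.sum_comm
lemma Lap_C_mul (a : ℝ) (p : MvPolynomial σ ℝ) : Lap (C a * p) = C a * Lap p := by
  simp [Lap, pderiv_C_mul, Finset.mul_sum]
lemma Lap_add (p q : MvPolynomial σ ℝ) : Lap (p + q) = Lap p + Lap q := by
  simp [Lap, Finset.sum_add_distrib]
lemma Lap_neg (p : MvPolynomial σ ℝ) : Lap (-p) = - Lap p := by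
  simp [Lap]

lemma pderiv_Xmul [DecidableEq σ] (i j : σ) (p : MvPolynomial σ ℝ) :
    pderiv j (X i * p) = (if i = j then p else 0) + X i * pderiv j p := by
  rw [pderiv_mul, pderiv_X]
  by_cases h : i = j
  · subst h; simp
  · have : (Pi.single j (1 : MvPolynomial σ ℝ) : σ → _) i = 0 := Pi.single_eq_of_ne h _
    simp [h, Ne.symm h]

lemma pderiv_Eu (j : σ) (p : MvPolynomial σ ℝ) :
    pderiv j (Eu p) = Eu (pderiv j p) + pderiv j p := by
  classical
  simp only [Eu, map_sum, pderiv_Xmul, Finset.sum_add_distrib]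
  simp [add_comm, pderiv_comm' j]

lemma Lap_Eu (p : MvPolynomial σ ℝ) : Lap (Eu p) = Eu (Lap p) + 2 * Lap p := by
  simp only [Lap, pderiv_Eu, map_add, Eu_sum, Finset.sum_add_distrib]; ring

lemma Eu_Xmul (i : σ) (p : MvPolynomial σ ℝ) : Eu (X i * p) = X i * p + X i * Eu p := by
  classical
  simp only [Eu, pderiv_Xmul, mul_add, Finset.sum_add_distrib, Finset.mul_sum]
  refine congrArg₂ (· + ·) ?_ ?_
  · simp
  · exact Finset.sum_congr rfl fun j _ => by ring

lemma Lap_Xmul (i : σ) (p : MvPolynomial σ ℝ) :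
    Lap (X i * p) = 2 * pderiv i p + X i * Lap p := by
  classical
  simp only [Lap, pderiv_Xmul, map_add, Finset.sum_add_distrib, Finset.mul_sum]
  have : ∀ j, pderiv j (if i = j then p else 0) = if i = j then pderiv j p else 0 := by
    intro j; split_ifs <;> simp
  simp only [this]
  simp; ring

lemma Lap_qq (p : MvPolynomial σ ℝ) :
    Lap (qq σ * p) = C (2 * (Fintype.card σ : ℝ)) * p + 4 * Eu p + qq σ * Lap p := by
  classical
  simp only [qq, Finset.sum_mul, Lap_sum, mul_assoc, Lap_Xmul, pderiv_Xmul]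
  simp only [if_true, mul_add, Finset.sum_add_distrib, Eu, Finset.mul_sum]
  simp only [Finset.sum_const, Finset.card_univ, nsmul_eq_mul, map_mul, map_ofNat, map_natCast]
  have h1 : ∑ x : σ, 2 * (X x * (pderiv x) p) = 2 * Eu p := by simp [Eu, Finset.mul_sum]
  have h2 : ∑ x : σ, X x * (2 * (pderiv x) p) = 2 * Eu p := by
    simp only [Eu, Finset.mul_sum]; exact Finset.sum_congr rfl fun j _ => by ring
  have h3 : ∑ x : σ, 4 * (X x * (pderiv x) p) = 4 * Eu p := by simp [Eu, Finset.mul_sum]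
  rw [h1, h2, h3]; ring

lemma keyneg (N : ℕ) : ∀ (a b c : ℝ), 0 ≤ a → 0 ≤ b → 0 < c → ∀ s : MvPolynomial σ ℝ,
    (∀ m : σ →₀ ℕ, N ≤ ∑ i, m i → coeff m s = 0) →
    qq σ * Lap s = -(C a * Eu (Eu s) + C b * Eu s + C c * s) → s = 0 := by
  induction N with
  | zero => intro a b c _ _ _ s hs _; ext m; simpa using hs m (Nat.zero_le _)
  | succ N ih =>
    intro a b c ha hb hc s hs h
    have ht : Lap s = 0 := by
      refine ih a (4 * a + b + 4) (4 * a + 2 * b + c + 2 * (Fintype.card σ : ℝ)) ha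
        (by positivity) (by positivity) _ ?_ ?_
      · intro m hm
        classical
        simp only [Lap, coeff_sum, coeff_pderiv]
        refine Finset.sum_eq_zero fun i _ => ?_
        rw [hs]
        · simp
        · simp only [Finsupp.add_apply, Finset.sum_add_distrib]
          simp [Finsupp.single_apply]; omega
      · have h2 := congrArg Lap h
        rw [Lap_qq, Lap_neg, Lap_add, Lap_add, Lap_C_mul, Lap_C_mul, Lap_C_mul, Lap_Eu, Lap_Eu,
          Eu_add] at h2
        have h3 : Eu (2 * Lap s) = 2 * Eu (Lap s) := by
          rw [two_mul, Eu_add, two_mul]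
        rw [h3] at h2
        simp only [map_add, map_mul, map_ofNat] at h2 ⊢
        linear_combination h2
    rw [ht, mul_zero] at h
    refine Eu_quad ha hb hc ?_
    linear_combination h

end

/-- Kulkarni–Nomizu style product with delta. -/
def KN {n : ℕ} {R : Type*} [CommRing R] (M : Fin n → Fin n → R) (a b c d : Fin n) : R :=
  M a c * (if b = d then 1 else 0) - M a d * (if b = c then 1 else 0)
    + M b d * (if a = c then 1 else 0) - M b c * (if a = d then 1 else 0)

noncomputable def Rp {n : ℕ} (H : Fin n → Fin n → MvPolynomial (Fin n) ℝ) (a b c d : Fin n) :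
    MvPolynomial (Fin n) ℝ :=
  pderiv b (pderiv d (H a c)) - pderiv b (pderiv c (H a d))
    + pderiv a (pderiv c (H d b)) - pderiv a (pderiv d (H b c))

lemma KN_contr {n : ℕ} {R : Type*} [CommRing R] (M : Fin n → Fin n → R) (a c : Fin n) :
    ∑ b, KN M a b c b = ((n : R) - 2) * M a c + (∑ b, M b b) * (if a = c then 1 else 0) := by
  simp only [KN, Finset.sum_sub_distrib, Finset.sum_add_distrib, ← Finset.sum_mul,
    ← Finset.mul_sum]
  simp
  ring

set_option maxHeartbeats 1000000 in
lemma bdry_zero {m : ℕ} (hm : 3 ≤ m) (h B : Fin m → Fin m → MvPolynomial (Fin m) ℝ)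
    (hsym : ∀ a b, h a b = h b a) (htr : ∑ a, h a a = 0)
    (hx : ∀ a, ∑ b, X b * h a b = 0) (hB : ∀ a b, B a b = B b a)
    (hR : ∀ a b c d, Rp h a b c d = KN B a b c d)
    (hC : ∀ a b c, pderiv a (B b c) = pderiv b (B a c)) :
    ∀ a b, h a b = 0 := by
  have hx' : ∀ a k, ∑ b, X b * pderiv k (h a b) = - h a k := by
    intro a k
    have := congrArg (pderiv k) (hx a)
    simp only [map_sum, pderiv_Xmul, Finset.sum_add_distrib] at this
    simp at this
    linear_combination this
  have hx'' : ∀ a k l, ∑ b, X b * pderiv l (pderiv k (h a b))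
      = - pderiv l (h a k) - pderiv k (h a l) := by
    intro a k l
    have := congrArg (pderiv l) (hx' a k)
    simp only [map_sum, pderiv_Xmul, Finset.sum_add_distrib] at this
    simp at this
    linear_combination this
  obtain ⟨v, hv⟩ : ∃ v : Fin m → MvPolynomial (Fin m) ℝ, v = fun a => ∑ b, pderiv b (h a b) := ⟨_, rfl⟩
  obtain ⟨t, ht⟩ : ∃ t, t = ∑ b, B b b := ⟨_, rfl⟩
  obtain ⟨y, hy⟩ : ∃ y : Fin m → MvPolynomial (Fin m) ℝ, y = fun a => ∑ b, X b * B a b := ⟨_, rfl⟩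
  obtain ⟨ψ, hψ⟩ : ∃ ψ, ψ = ∑ a, X a * y a := ⟨_, rfl⟩
  have hxv : ∑ a, X a * v a = 0 := by
    simp only [hv, Finset.mul_sum]
    rw [Finset.sum_comm]
    have : ∀ b, ∑ a, X a * pderiv b (h a b) = - h b b := by
      intro b
      rw [← hx' b b]
      exact Finset.sum_congr rfl fun a _ => by rw [hsym a b]
    simp [this, htr]
  -- contraction
  have hcon : ∀ a c, (((m:ℕ) : MvPolynomial (Fin m) ℝ) - 2) * B a c + t * (if a = c then 1 else 0)
      = Lap (h a c) - pderiv c (v a) - pderiv a (v c) := by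
    intro a c
    rw [ht, ← KN_contr]
    simp only [← hR, Rp, Finset.sum_sub_distrib, Finset.sum_add_distrib, Lap, hv, map_sum]
    have e1 : ∑ x, pderiv a (pderiv c (h x x)) = 0 := by
      rw [← map_sum, ← map_sum, htr]; simp
    have e2 : ∑ x, pderiv x (pderiv c (h a x)) = ∑ x, pderiv c (pderiv x (h a x)) :=
      Finset.sum_congr rfl fun b _ => by rw [pderiv_comm' b c]
    have e3 : ∑ x, pderiv a (pderiv x (h x c)) = ∑ x, pderiv a (pderiv x (h c x)) :=
      Finset.sum_congr rfl fun b _ => by rw [hsym b c]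
    rw [e1, e2, e3, add_zero]
  have hψt : (((m:ℕ) : MvPolynomial (Fin m) ℝ) - 2) * ψ + t * qq (Fin m) = 0 := by
    have e0 : ∑ a, ∑ c, X a * (X c * ((((m:ℕ) : MvPolynomial (Fin m) ℝ) - 2) * B a c + t * (if a = c then 1 else 0)))
      = (((m:ℕ) : MvPolynomial (Fin m) ℝ) - 2) * ψ + t * qq (Fin m) := by
      simp only [hψ, hy, qq, Finset.mul_sum, mul_add, Finset.sum_add_distrib]
      refine congrArg₂ (· + ·) ?_ ?_
      · refine Finset.sum_congr rfl fun a _ => Finset.sum_congr rfl fun b _ => by ring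
      · simp
        exact Finset.sum_congr rfl fun a _ => by ring
    rw [← e0]
    simp only [hcon, mul_sub, Finset.sum_sub_distrib, ← Finset.mul_sum]
    have e1 : ∀ a, ∑ c, X c * Lap (h a c) = - 2 * v a := by
      intro a
      have := congrArg Lap (hx a)
      simp only [Lap_sum, Lap_Xmul, Finset.sum_add_distrib, ← Finset.mul_sum] at this
      simp only [hv]
      have l0 : Lap (0 : MvPolynomial (Fin m) ℝ) = 0 := by simp [Lap]
      rw [l0] at this
      linear_combination this
    have e2 : ∀ a, ∑ c, X c * pderiv a (v c) = - v a := by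
      intro a
      have := congrArg (pderiv a) hxv
      simp only [map_sum, pderiv_Xmul, Finset.sum_add_distrib] at this
      simp at this
      linear_combination this
    have e3 : ∑ a, X a * ∑ c, X c * pderiv c (v a) = 0 := by
      simp only [Finset.mul_sum]
      rw [Finset.sum_comm]
      have : ∀ c, ∑ a, X a * (X c * pderiv c (v a)) = - (X c * v c) := by
        intro c
        have := e2 c
        rw [← mul_neg, ← this, Finset.mul_sum]
        exact Finset.sum_congr rfl fun a _ => by ring
      simp [this, hxv]
    rw [e3]
    simp only [e1, e2]
    have e4 : ∑ a, X a * (-2 * v a) = -2 * ∑ a, X a * v a := by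
      rw [Finset.mul_sum]; exact Finset.sum_congr rfl fun a _ => by ring
    rw [e4]
    simp [hxv]
  have hBy : ∀ j k, Eu (B j k) = pderiv j (y k) - B j k := by
    intro j k
    simp only [Eu, hy, map_sum, pderiv_Xmul, Finset.sum_add_distrib]
    simp only [hC _ j k]
    simp only [Finset.sum_ite_eq', Finset.mem_univ, if_true]
    rw [hB k j]
    have : ∀ i, pderiv j (B k i) = pderiv j (B i k) := fun i => by rw [hB k i]
    simp only [this]; ring
  have hEy : ∀ j, Eu (y j) + y j = pderiv j ψ := by
    intro j
    have e1 : Eu (y j) = ∑ k, X k * pderiv j (y k) := by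
      conv_lhs => simp only [hy, Eu_sum, Eu_Xmul]
      refine Finset.sum_congr rfl fun k _ => ?_
      rw [hBy j k]; ring
    rw [e1, hψ]
    simp only [map_sum, pderiv_Xmul, Finset.sum_add_distrib]
    simp; ring
  have hEt : Eu t + t = ∑ j, pderiv j (y j) := by
    simp only [ht, Eu_sum, hBy, Finset.sum_sub_distrib]; ring
  have hLψ : Eu (Eu t) + 3 * Eu t + 2 * t = Lap ψ := by
    have : Lap ψ = ∑ j, pderiv j (Eu (y j) + y j) := by
      simp only [hEy, Lap]
    rw [this]
    simp only [map_add, pderiv_Eu, Finset.sum_add_distrib, ← Eu_sum]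
    rw [← hEt, Eu_add]; ring
  have ht0 : t = 0 := by
    obtain ⟨N, hN⟩ : ∃ N : ℕ, ∀ m' : Fin m →₀ ℕ, N ≤ ∑ i, m' i → coeff m' t = 0 := by
      refine ⟨t.totalDegree + 1, fun m' hm' => coeff_eq_zero_of_totalDegree_lt ?_⟩
      rw [← Finsupp.degree_eq_sum] at hm'
      exact hm'
    have hm' : (3:ℝ) ≤ m := by exact_mod_cast hm
    refine keyneg N (m - 2) (3 * (m-2) + 4) (2 * (m - 2) + 2 * m) (by linarith) (by linarith)
      (by linarith) t hN ?_
    have h1 := congrArg Lap hψt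
    have e0 : (((m:ℕ) : MvPolynomial (Fin m) ℝ) - 2) = C ((m:ℝ) - 2) := by
      rw [map_sub, map_natCast, map_ofNat]
    rw [e0, Lap_add, Lap_C_mul, mul_comm t, Lap_qq, ← hLψ] at h1
    have l0 : Lap (0 : MvPolynomial (Fin m) ℝ) = 0 := by simp [Lap]
    rw [l0] at h1
    simp only [Fintype.card_fin, map_add, map_sub, map_mul, map_ofNat, map_natCast] at h1 ⊢
    linear_combination h1
  have hψ0 : ψ = 0 := by
    rw [ht0, zero_mul, add_zero] at hψt
    have e0 : (((m:ℕ) : MvPolynomial (Fin m) ℝ) - 2) = C ((m:ℝ) - 2) := by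
      rw [map_sub, map_natCast, map_ofNat]
    rw [e0] at hψt
    have hm' : (3:ℝ) ≤ m := by exact_mod_cast hm
    rcases mul_eq_zero.1 hψt with h' | h'
    · rw [C_eq_zero] at h'; linarith
    · exact h'
  have hy0 : ∀ j, y j = 0 := fun j => Eu_one (by rw [hEy, hψ0]; simp)
  have hB0 : ∀ j k, B j k = 0 := fun j k => Eu_one (by rw [hBy, hy0]; simp)
  have hR0 : ∀ a b c d, Rp h a b c d = 0 := by
    intro a b c d; rw [hR]; simp [KN, hB0]
  have hcod : ∀ b c d, pderiv c (h b d) - pderiv d (h b c) = 0 := by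
    intro b c d
    apply Eu_one
    have : ∑ a, X a * Rp h a b c d = 0 := by simp [hR0]
    simp only [Rp, mul_sub, mul_add, Finset.sum_sub_distrib, Finset.sum_add_distrib] at this
    have e1 : ∀ p q r : Fin m, ∑ a, X a * pderiv p (pderiv q (h a r))
        = - pderiv p (h r q) - pderiv q (h r p) := by
      intro p q r
      rw [← hx'']
      exact Finset.sum_congr rfl fun a _ => by rw [hsym]
    have e2 : ∀ q p r : Fin m, ∑ a, X a * pderiv a (pderiv q (h p r)) = Eu (pderiv q (h p r)) :=
      fun q p r => rfl
    rw [e1, e1, e2, e2, hsym d b, hsym c d] at this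
    rw [Eu_sub]
    linear_combination this + congrArg (pderiv d) (hsym c b)
  intro a b
  apply Eu_one
  have : Eu (h a b) = ∑ c, X c * pderiv b (h a c) :=
    Finset.sum_congr rfl fun c _ => by rw [sub_eq_zero.1 (hcod a c b)]
  rw [this, hx']; ring

end B5

namespace B5
open MvPolynomial

noncomputable def rest (m : ℕ) : MvPolynomial (Fin (m+1)) ℝ →ₐ[ℝ] MvPolynomial (Fin m) ℝ :=
  aeval (Fin.snoc (α := fun _ => MvPolynomial (Fin m) ℝ) X 0)

lemma rest_X (m : ℕ) (i : Fin m) : rest m (X i.castSucc) = X i := by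
  simp [rest]
lemma rest_Xl (m : ℕ) : rest m (X (Fin.last m)) = 0 := by
  simp [rest]

lemma rest_pderiv {m : ℕ} (i : Fin m) (p : MvPolynomial (Fin (m+1)) ℝ) :
    rest m (pderiv i.castSucc p) = pderiv i (rest m p) := by
  induction p using MvPolynomial.induction_on with
  | C a => simp [rest]
  | add p q hp hq => simp [hp, hq]
  | mul_X p j hp =>
    rw [pderiv_mul, map_add, map_mul, map_mul, map_mul, pderiv_mul, hp]
    congr 2
    induction j using Fin.lastCases with
    | last => rw [pderiv_X_of_ne (Fin.castSucc_lt_last i).ne', rest_Xl]; simp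
    | cast j =>
      rw [rest_X]
      by_cases h : j = i
      · subst h; simp
      · rw [pderiv_X_of_ne h, pderiv_X_of_ne (by simpa using h)]; simp

lemma rest_eval {m : ℕ} (x : Fin m → ℝ) (p : MvPolynomial (Fin (m+1)) ℝ) :
    eval x (rest m p) = eval (Fin.snoc (α := fun _ => ℝ) x 0) p := by
  induction p using MvPolynomial.induction_on with
  | C a => simp [rest]
  | add p q hp hq => simp [hp, hq]
  | mul_X p j hp =>
    rw [map_mul, map_mul, map_mul, hp]
    congr 1
    induction j using Fin.lastCases with
    | last => rw [rest_Xl]; simp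
    | cast j => rw [rest_X]; simp

def Zk {m : ℕ} (k : ℕ) (p : MvPolynomial (Fin (m+1)) ℝ) : Prop :=
  ∀ d : Fin (m+1) →₀ ℕ, d (Fin.last m) = k → coeff d p = 0

lemma rest_decomp {m : ℕ} (p : MvPolynomial (Fin (m+1)) ℝ) :
    ∃ q, p = rename Fin.castSucc (rest m p) + X (Fin.last m) * q := by
  induction p using MvPolynomial.induction_on with
  | C a => exact ⟨0, by simp [rest]⟩
  | add p q hp hq =>
    obtain ⟨p', hp⟩ := hp
    obtain ⟨q', hq⟩ := hq
    refine ⟨p' + q', ?_⟩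
    simp only [map_add]
    linear_combination hp + hq
  | mul_X p j hp =>
    obtain ⟨p', hp⟩ := hp
    induction j using Fin.lastCases with
    | last => exact ⟨p, by rw [map_mul, rest_Xl]; simp; ring⟩
    | cast j =>
      refine ⟨p' * X j.castSucc, ?_⟩
      rw [map_mul, rest_X, map_mul, rename_X]
      linear_combination X j.castSucc * hp

lemma Zk_zero_of_rest {m : ℕ} {p : MvPolynomial (Fin (m+1)) ℝ} (h : rest m p = 0) : Zk 0 p := by
  classical
  obtain ⟨q, hq⟩ := rest_decomp p
  rw [h, map_zero, zero_add] at hq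
  intro d hd
  rw [hq, coeff_X_mul', if_neg (by simpa using hd)]

lemma Zk_succ {m k : ℕ} {p : MvPolynomial (Fin (m+1)) ℝ} (h : Zk k (pderiv (Fin.last m) p)) :
    Zk (k+1) p := by
  intro d hd
  have h2 : d - Finsupp.single (Fin.last m) 1 + Finsupp.single (Fin.last m) 1 = d :=
      tsub_add_cancel_of_le (by simp [Finsupp.single_le_iff, hd])
  have := h (d - Finsupp.single (Fin.last m) 1) (by simp [hd])
  rw [coeff_pderiv, h2] at this
  rcases mul_eq_zero.1 this with h' | h'
  · exact h'
  · exact absurd h' (by positivity)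

lemma Zk_add {m k : ℕ} {p q : MvPolynomial (Fin (m+1)) ℝ} (hp : Zk k p) (hq : Zk k q) :
    Zk k (p + q) := fun d hd => by rw [coeff_add, hp d hd, hq d hd, add_zero]
lemma Zk_sub {m k : ℕ} {p q : MvPolynomial (Fin (m+1)) ℝ} (hp : Zk k p) (hq : Zk k q) :
    Zk k (p - q) := fun d hd => by rw [coeff_sub, hp d hd, hq d hd, sub_zero]
lemma Zk_z {m k : ℕ} : Zk k (0 : MvPolynomial (Fin (m+1)) ℝ) := fun d hd => by simp
lemma Zk_sum {m k : ℕ} {ι : Type*} (s : Finset ι) {f : ι → MvPolynomial (Fin (m+1)) ℝ}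
    (h : ∀ i ∈ s, Zk k (f i)) : Zk k (∑ i ∈ s, f i) := fun d hd => by
  rw [coeff_sum]; exact Finset.sum_eq_zero fun i hi => h i hi d hd
lemma Zk_C {m k : ℕ} (a : ℝ) {p : MvPolynomial (Fin (m+1)) ℝ} (hp : Zk k p) :
    Zk k (C a * p) := fun d hd => by rw [coeff_C_mul, hp d hd, mul_zero]
lemma Zk_pd {m k : ℕ} (i : Fin m) {p : MvPolynomial (Fin (m+1)) ℝ} (hp : Zk k p) :
    Zk k (pderiv i.castSucc p) := fun d hd => by
  rw [coeff_pderiv, hp, zero_mul]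
  simp [hd, Finsupp.single_apply, (Fin.castSucc_lt_last i).ne]

lemma bianchi {n : ℕ} (H : Fin n → Fin n → MvPolynomial (Fin n) ℝ)
    (hsym : ∀ a b, H a b = H b a) (e a b c d : Fin n) :
    pderiv e (Rp H a b c d) + pderiv a (Rp H b e c d) + pderiv b (Rp H e a c d) = 0 := by
  simp only [Rp, map_add, map_sub]
  rw [pderiv_comm' b a, pderiv_comm' b a, pderiv_comm' e a, pderiv_comm' e a, pderiv_comm' e b,
    pderiv_comm' e b, hsym d b, hsym d e, hsym d a]
  ring

set_option maxHeartbeats 1000000 in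
lemma cotton {n : ℕ} (hn : 4 ≤ n) (H M : Fin n → Fin n → MvPolynomial (Fin n) ℝ)
    (hsym : ∀ a b, H a b = H b a) (hM : ∀ a b, M a b = M b a)
    (hR : ∀ a b c d, Rp H a b c d = KN M a b c d) (e a c : Fin n) :
    pderiv e (M a c) = pderiv a (M e c) := by
  have hn' : (4:ℝ) ≤ n := by exact_mod_cast hn
  have hd : ∀ (e : Fin n) (p : MvPolynomial (Fin n) ℝ) (P : Prop) [Decidable P],
      pderiv e (p * (if P then 1 else 0)) = pderiv e p * (if P then 1 else 0) := by
    intro e p P _; split_ifs <;> simp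
  obtain ⟨D, hD⟩ : ∃ D : Fin n → MvPolynomial (Fin n) ℝ,
    D = fun e => pderiv e (∑ b, M b b) - ∑ b, pderiv b (M e b) := ⟨_, rfl⟩
  have key : ∀ e a c, ((n : MvPolynomial (Fin n) ℝ) - 3) * (pderiv e (M a c) - pderiv a (M e c))
      + D e * (if a = c then 1 else 0) - D a * (if e = c then 1 else 0) = 0 := by
    intro e a c
    have h : ∑ b, (pderiv e (Rp H a b c b) + pderiv a (Rp H b e c b) + pderiv b (Rp H e a c b)) = 0 :=
      Finset.sum_eq_zero fun b _ => bianchi H hsym e a b c b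
    simp only [hR, KN, map_add, map_sub, hd] at h
    simp only [Finset.sum_add_distrib, Finset.sum_sub_distrib, ← Finset.sum_mul] at h
    simp only [mul_ite, mul_one, mul_zero, Finset.sum_ite_eq, Finset.sum_ite_eq', Finset.mem_univ,
      if_true, Finset.sum_const, Finset.card_univ, Fintype.card_fin, nsmul_eq_mul] at h
    simp only [hD, map_sum, mul_ite, mul_one, mul_zero]
    by_cases h1 : a = c <;> by_cases h2 : e = c
    · simp only [h1, h2, if_true] at h ⊢; linear_combination h
    · simp only [h1, h2, if_true, if_false] at h ⊢; linear_combination h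
    · simp only [h1, h2, if_true, if_false] at h ⊢; linear_combination h
    · simp only [h1, h2, if_true, if_false] at h ⊢; linear_combination h
  have hD0 : ∀ e, D e = 0 := by
    intro e
    have h : ∑ a, (((n : MvPolynomial (Fin n) ℝ) - 3) * (pderiv e (M a a) - pderiv a (M e a))
      + D e * (if a = a then 1 else 0) - D a * (if e = a then 1 else 0)) = 0 :=
      Finset.sum_eq_zero fun a _ => key e a a
    simp only [Finset.sum_add_distrib, Finset.sum_sub_distrib, ← Finset.mul_sum] at h
    simp only [mul_ite, mul_one, mul_zero, Finset.sum_ite_eq, Finset.sum_ite_eq', Finset.mem_univ,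
      if_true, Finset.sum_const, Finset.card_univ, Fintype.card_fin, nsmul_eq_mul] at h
    have h2 : D e = ∑ x, pderiv e (M x x) - ∑ b, pderiv b (M e b) := by rw [hD]; simp
    rw [← h2] at h
    have h3 : C (2 * (n:ℝ) - 4) * D e = 0 := by
      rw [map_sub, map_mul, map_natCast, map_ofNat, map_ofNat]
      linear_combination h
    rcases mul_eq_zero.1 h3 with h' | h'
    · rw [C_eq_zero] at h'; linarith
    · exact h'
  have h := key e a c
  rw [hD0, hD0] at h
  have h3 : C ((n:ℝ) - 3) * (pderiv e (M a c) - pderiv a (M e c)) = 0 := by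
    rw [map_sub, map_natCast, map_ofNat]
    linear_combination h
  rcases mul_eq_zero.1 h3 with h' | h'
  · rw [C_eq_zero] at h'; linarith
  · exact sub_eq_zero.1 h'

set_option maxHeartbeats 1000000 in
lemma ambient_zero {m : ℕ} (hm : 3 ≤ m) (H M : Fin (m+1) → Fin (m+1) → MvPolynomial (Fin (m+1)) ℝ)
    (hsym : ∀ a b, H a b = H b a) (htr : ∑ a, H a a = 0)
    (hl : ∀ a, H a (Fin.last m) = 0)
    (hx : ∀ i : Fin m, ∑ j : Fin m, X j * rest m (H i.castSucc j.castSucc) = 0)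
    (hM : ∀ a b, M a b = M b a)
    (hR : ∀ a b c d, Rp H a b c d = KN M a b c d)
    (hn : ∀ i j, rest m (pderiv (Fin.last m) (H i j)) = 0) :
    ∀ a b, H a b = 0 := by
  have hl' : ∀ a, H (Fin.last m) a = 0 := fun a => by rw [hsym, hl]
  have hcot := cotton (by omega) H M hsym hM hR
  have hb0 : ∀ i j : Fin m, rest m (H i.castSucc j.castSucc) = 0 := by
    refine bdry_zero hm (fun i j => rest m (H i.castSucc j.castSucc))
      (fun i j => rest m (M i.castSucc j.castSucc)) (fun a b => by rw [hsym]) ?_ hx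
      (fun a b => by rw [hM]) ?_ ?_
    · have := congrArg (rest m) htr
      rw [map_sum, Fin.sum_univ_castSucc, hl] at this
      simpa using this
    · intro a b c d
      have := congrArg (rest m) (hR a.castSucc b.castSucc c.castSucc d.castSucc)
      simp only [Rp, KN, map_add, map_sub, map_mul, rest_pderiv, Fin.castSucc_inj] at this ⊢
      have e : ∀ (P : Prop) [Decidable P], rest m (if P then 1 else 0) = if P then 1 else 0 := by
        intro P _; split_ifs <;> simp
      simp only [e] at this
      exact this
    · intro a b c
      rw [← rest_pderiv, hcot, rest_pderiv]
  have hm' : (3:ℝ) ≤ m := by exact_mod_cast hm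
  -- contraction
  have hcon : ∀ a c, (((m + 1 : ℕ) : MvPolynomial (Fin (m+1)) ℝ) - 2) * M a c
      + (∑ b, M b b) * (if a = c then 1 else 0) = ∑ b, Rp H a b c b := by
    intro a c
    rw [← KN_contr]; simp only [hR]
  have hZ : ∀ k : ℕ, (∀ i j, Zk k (H i j)) ∧ (∀ i j, Zk (k+1) (H i j)) := by
    intro k
    induction k with
    | zero =>
      refine ⟨fun i j => ?_, fun i j => Zk_succ (Zk_zero_of_rest (hn i j))⟩
      induction i using Fin.lastCases with
      | last => rw [hl']; exact Zk_z
      | cast i =>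
        induction j using Fin.lastCases with
        | last => rw [hl]; exact Zk_z
        | cast j => exact Zk_zero_of_rest (hb0 i j)
    | succ k ih =>
      refine ⟨ih.2, fun i j => ?_⟩
      induction i using Fin.lastCases with
      | last => rw [hl']; exact Zk_z
      | cast i =>
      induction j using Fin.lastCases with
      | last => rw [hl]; exact Zk_z
      | cast j =>
      apply Zk_succ
      apply Zk_succ
      -- tangential pieces
      have hpp : ∀ p q : Fin m, ∀ a b, Zk k (pderiv p.castSucc (pderiv q.castSucc (H a b))) :=
        fun p q a b => Zk_pd p (Zk_pd q (ih.1 a b))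
      have hRt : ∀ b c d e : Fin m, Zk k (Rp H b.castSucc c.castSucc d.castSucc e.castSucc) :=
        fun b c d e => Zk_sub (Zk_add (Zk_sub (hpp _ _ _ _) (hpp _ _ _ _)) (hpp _ _ _ _)) (hpp _ _ _ _)
      obtain ⟨t, ht⟩ : ∃ t, t = ∑ b, M b b := ⟨_, rfl⟩
      have hRn : ∀ a c : Fin m, Rp H a.castSucc (Fin.last m) c.castSucc (Fin.last m)
        = pderiv (Fin.last m) (pderiv (Fin.last m) (H a.castSucc c.castSucc)) := by
        intro a c; simp [Rp, hl, hl']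
      have hRn2 : ∀ b : Fin m, Rp H (Fin.last m) b.castSucc (Fin.last m) b.castSucc
        = pderiv (Fin.last m) (pderiv (Fin.last m) (H b.castSucc b.castSucc)) := by
        intro a; simp [Rp, hl, hl']
      have htr' : ∑ b : Fin m, H b.castSucc b.castSucc = 0 := by
        rw [Fin.sum_univ_castSucc, hl] at htr; simpa using htr
      -- M nn
      have hMn := hcon (Fin.last m) (Fin.last m)
      rw [← ht, Fin.sum_univ_castSucc] at hMn
      simp only [hRn2] at hMn
      rw [← map_sum, ← map_sum, htr'] at hMn
      have hRll : Rp H (Fin.last m) (Fin.last m) (Fin.last m) (Fin.last m) = 0 := by simp [Rp]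
      rw [hRll] at hMn
      simp only [if_true, map_zero, add_zero, mul_one] at hMn
      -- t is tangential
      have htt : (2 * ((m + 1 : ℕ) : MvPolynomial (Fin (m+1)) ℝ) - 2) * t
          = ∑ a : Fin m, ∑ b : Fin m, Rp H a.castSucc b.castSucc a.castSucc b.castSucc := by
        have h1 : ∑ a, ((((m + 1 : ℕ) : MvPolynomial (Fin (m+1)) ℝ) - 2) * M a a
          + (∑ b, M b b) * (if a = a then 1 else 0)) = ∑ a, ∑ b, Rp H a b a b :=
          Finset.sum_congr rfl fun a _ => hcon a a
        rw [Finset.sum_add_distrib, ← Finset.mul_sum, ← ht] at h1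
        simp only [if_true, mul_one, Finset.sum_const, Finset.card_univ, Fintype.card_fin,
          nsmul_eq_mul] at h1
        rw [Fin.sum_univ_castSucc] at h1
        simp only [Fin.sum_univ_castSucc (n := m), hRn, hRn2, Finset.sum_add_distrib] at h1
        rw [← map_sum, ← map_sum, htr', hRll] at h1
        simp only [map_zero, add_zero] at h1
        linear_combination h1
      have hij := hcon i.castSucc j.castSucc
      rw [← ht, Fin.sum_univ_castSucc, hRn] at hij
      have hev := hR i.castSucc (Fin.last m) j.castSucc (Fin.last m)
      rw [hRn] at hev
      have ne1 : Fin.last m ≠ j.castSucc := (Fin.castSucc_lt_last j).ne'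
      have ne2 : i.castSucc ≠ Fin.last m := (Fin.castSucc_lt_last i).ne
      simp only [KN, if_true, if_neg ne1, if_neg ne2, mul_one, mul_zero, sub_zero] at hev
      have hZt : Zk k t := by
        have : t = C ((2 * (m:ℝ))⁻¹) * ((2 * ((m + 1 : ℕ) : MvPolynomial (Fin (m+1)) ℝ) - 2) * t) := by
          have : (2 * ((m + 1 : ℕ) : MvPolynomial (Fin (m+1)) ℝ) - 2) = C (2 * (m:ℝ)) := by
            rw [map_mul, map_natCast, map_ofNat]; push_cast; ring
          rw [this, ← mul_assoc, ← map_mul, inv_mul_cancel₀ (by positivity)]; simp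
        rw [this, htt]
        exact Zk_C _ (Zk_sum _ fun a _ => Zk_sum _ fun b _ => hRt _ _ _ _)
      have hfin : pderiv (Fin.last m) (pderiv (Fin.last m) (H i.castSucc j.castSucc))
          = C (((m:ℝ) - 2)⁻¹) * ((∑ b : Fin m, Rp H i.castSucc b.castSucc j.castSucc b.castSucc)
            - C (if i.castSucc = j.castSucc then 2 else 0) * t) := by
        have h2 : C ((m:ℝ) - 2) * pderiv (Fin.last m) (pderiv (Fin.last m) (H i.castSucc j.castSucc))
          = ((∑ b : Fin m, Rp H i.castSucc b.castSucc j.castSucc b.castSucc)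
            - C (if i.castSucc = j.castSucc then 2 else 0) * t) := by
          rw [map_sub, map_natCast, map_ofNat]
          push_cast at hij hMn
          by_cases h : i.castSucc = j.castSucc
          · simp only [if_pos h, map_ofNat, mul_one] at hij hev ⊢
            linear_combination hij + ((m:MvPolynomial (Fin (m+1)) ℝ) - 1) * hev + hMn
          · simp only [if_neg h, map_zero, mul_zero] at hij hev ⊢
            linear_combination hij + ((m:MvPolynomial (Fin (m+1)) ℝ) - 1) * hev
        rw [← h2, ← mul_assoc, ← map_mul, inv_mul_cancel₀ (by linarith)]; simp
      rw [hfin]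
      exact Zk_C _ (Zk_sub (Zk_sum _ fun b _ => hRt _ _ _ _) (Zk_C _ hZt))
  intro a b
  ext d
  exact (hZ (d (Fin.last m))).1 a b d rfl

end B5

namespace B5
open MvPolynomial

noncomputable def pd {n : ℕ} (c : Fin n) (f : (Fin n → ℝ) → ℝ) (x : Fin n → ℝ) : ℝ :=
  fderiv ℝ f x (Pi.single c 1)

abbrev Sm {n : ℕ} (f : (Fin n → ℝ) → ℝ) : Prop := ContDiff ℝ (⊤ : ℕ∞) f

section
variable {n : ℕ}

lemma Sm.da {f : (Fin n → ℝ) → ℝ} (h : Sm f) (x) : DifferentiableAt ℝ f x :=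
  (h.differentiable (by simp)).differentiableAt

lemma _root_.ContDiff.da {f : (Fin n → ℝ) → ℝ} (h : ContDiff ℝ (⊤ : ℕ∞) f) (x) : DifferentiableAt ℝ f x :=
  (h.differentiable (by simp)).differentiableAt

lemma Sm.pd {f : (Fin n → ℝ) → ℝ} (h : Sm f) (c : Fin n) : Sm (pd c f) :=
  (h.fderiv_right (m := (⊤ : ℕ∞)) (by simp)).clm_apply contDiff_const

lemma Sm_coord (a : Fin n) : Sm (fun x : Fin n → ℝ => x a) := contDiff_apply ℝ ℝ a

lemma pd_coord (a c : Fin n) (x : Fin n → ℝ) :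
    pd c (fun x => x a) x = if a = c then 1 else 0 := by
  have : fderiv ℝ (fun x : Fin n → ℝ => x a) x = ContinuousLinearMap.proj a :=
    (ContinuousLinearMap.proj (R := ℝ) (φ := fun _ : Fin n => ℝ) a).hasFDerivAt.fderiv
  simp [pd, this, Pi.single_apply]

lemma pd_const (c : Fin n) (k : ℝ) (x) : pd c (fun _ => k) x = 0 := by simp [pd]

lemma pd_add {f g : (Fin n → ℝ) → ℝ} {x} (c : Fin n) (hf : DifferentiableAt ℝ f x)
    (hg : DifferentiableAt ℝ g x) : pd c (fun y => f y + g y) x = pd c f x + pd c g x := by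
  simp [pd, fderiv_fun_add hf hg]

lemma pd_sub {f g : (Fin n → ℝ) → ℝ} {x} (c : Fin n) (hf : DifferentiableAt ℝ f x)
    (hg : DifferentiableAt ℝ g x) : pd c (fun y => f y - g y) x = pd c f x - pd c g x := by
  simp [pd, fderiv_fun_sub hf hg]

lemma pd_mul {f g : (Fin n → ℝ) → ℝ} {x} (c : Fin n) (hf : DifferentiableAt ℝ f x)
    (hg : DifferentiableAt ℝ g x) :
    pd c (fun y => f y * g y) x = pd c f x * g x + f x * pd c g x := by
  simp [pd, fderiv_fun_mul hf hg]; ring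

lemma pd_cmul {f : (Fin n → ℝ) → ℝ} {x} (c : Fin n) (k : ℝ) (hf : DifferentiableAt ℝ f x) :
    pd c (fun y => k * f y) x = k * pd c f x := by
  rw [pd_mul c (by fun_prop) hf, pd_const]; ring

lemma pd_mulc {f : (Fin n → ℝ) → ℝ} {x} (c : Fin n) (k : ℝ) (hf : DifferentiableAt ℝ f x) :
    pd c (fun y => f y * k) x = pd c f x * k := by
  rw [pd_mul c hf (by fun_prop), pd_const]; ring

lemma pd_sum {ι : Type*} (s : Finset ι) {f : ι → (Fin n → ℝ) → ℝ} {x} (c : Fin n)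
    (hf : ∀ i, DifferentiableAt ℝ (f i) x) :
    pd c (fun y => ∑ i ∈ s, f i y) x = ∑ i ∈ s, pd c (f i) x := by
  simp [pd, fderiv_fun_sum (fun i _ => hf i)]

lemma pd_comm {f : (Fin n → ℝ) → ℝ} (h : Sm f) (a b : Fin n) (x) :
    pd a (pd b f) x = pd b (pd a f) x := by
  have hs : IsSymmSndFDerivAt ℝ f x := by
    apply (h.contDiffAt).isSymmSndFDerivAt
    rw [minSmoothness_of_isRCLikeNormedField]
    exact WithTop.coe_le_coe.2 (le_top)
  have hd : DifferentiableAt ℝ (fderiv ℝ f) x :=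
    ((h.fderiv_right (m := (⊤ : ℕ∞)) (by simp)).differentiable (by simp)).differentiableAt
  have e : ∀ a b : Fin n, pd a (pd b f) x
      = fderiv ℝ (fderiv ℝ f) x (Pi.single a 1) (Pi.single b 1) := by
    intro a b
    show fderiv ℝ (fun y => fderiv ℝ f y (Pi.single b 1)) x (Pi.single a 1) = _
    rw [fderiv_clm_apply hd (by fun_prop)]
    simp
  rw [e, e, hs.eq]

lemma Sm_eval (p : MvPolynomial (Fin n) ℝ) : Sm (fun x : Fin n → ℝ => eval x p) := by
  induction p using MvPolynomial.induction_on with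
  | C a => simp only [eval_C]; exact contDiff_const
  | add p q hp hq => simp only [map_add]; exact hp.add hq
  | mul_X p j hp => simp only [map_mul, eval_X]; exact hp.mul (Sm_coord j)

lemma pd_eval (c : Fin n) (p : MvPolynomial (Fin n) ℝ) (x : Fin n → ℝ) :
    pd c (fun x => eval x p) x = eval x (pderiv c p) := by
  induction p using MvPolynomial.induction_on with
  | C a => simp [pd_const]
  | add p q hp hq =>
    simp only [map_add]
    rw [pd_add c ((Sm_eval p).da x) ((Sm_eval q).da x), hp, hq]
  | mul_X p j hp =>
    simp only [map_mul, eval_X, pderiv_mul, map_add]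
    rw [pd_mul c ((Sm_eval p).da x) ((Sm_coord j).da x), hp, pd_coord, pderiv_X]
    by_cases h : j = c <;> simp [h, Pi.single_apply, eq_comm]

lemma pd_eval' (c : Fin n) (p : MvPolynomial (Fin n) ℝ) :
    pd c (fun x => eval x p) = fun x => eval x (pderiv c p) := funext (pd_eval c p)

/-- norm of the derivative from partial derivatives -/
lemma fderiv_norm_le (f : (Fin n → ℝ) → ℝ) (x : Fin n → ℝ) :
    ‖fderiv ℝ f x‖ ≤ ∑ c, |pd c f x| := by
  apply ContinuousLinearMap.opNorm_le_bound _ (Finset.sum_nonneg fun _ _ => abs_nonneg _)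
  intro v
  have : v = ∑ c, v c • (Pi.single c 1 : Fin n → ℝ) := by
    ext i; simp [Finset.sum_apply, Pi.single_apply]
  conv_lhs => rw [this]
  rw [map_sum, Finset.sum_mul]
  refine (norm_sum_le _ _).trans (Finset.sum_le_sum fun c _ => ?_)
  rw [map_smul, norm_smul, mul_comm]
  exact mul_le_mul_of_nonneg_left (norm_le_pi_norm v c) (abs_nonneg _)

/-- tangential derivative of a function vanishing on the boundary -/
lemma pd_tan {f : (Fin n → ℝ) → ℝ} {l i : Fin n} (hil : i ≠ l)
    (h0 : ∀ x : Fin n → ℝ, x l = 0 → f x = 0) {p : Fin n → ℝ} (hp : p l = 0)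
    (hf : DifferentiableAt ℝ f p) : pd i f p = 0 := by
  have h1 : HasLineDerivAt ℝ f (fderiv ℝ f p (Pi.single i 1)) p (Pi.single i 1) :=
    hf.hasFDerivAt.hasLineDerivAt _
  have h2 : HasLineDerivAt ℝ f 0 p (Pi.single i 1) := by
    unfold HasLineDerivAt
    have : (fun t : ℝ => f (p + t • Pi.single i 1)) = fun _ => 0 := by
      funext t; apply h0; simp [hp, Pi.single_apply, hil.symm]
    rw [this]; exact hasDerivAt_const _ _
  exact h1.unique h2

lemma integral_pd_zero {g : (Fin n → ℝ) → ℝ} (hg : Sm g) (hc : HasCompactSupport g) (b : Fin n) :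
    ∫ x, pd b g x = 0 := by
  have hc' : HasCompactSupport (pd b g) := by
    have := hc.fderiv_apply (𝕜 := ℝ) (Pi.single b 1 : Fin n → ℝ)
    exact this
  have := integral_mul_fderiv_eq_neg_fderiv_mul_of_integrable (μ := (volume : Measure (Fin n → ℝ)))
    (f := fun _ => (1:ℝ)) (g := g) (v := Pi.single b 1) (by simp)
    (by simp only [one_mul]; exact (hg.pd b).continuous.integrable_of_hasCompactSupport hc')
    (by simpa using hg.continuous.integrable_of_hasCompactSupport hc) (by simp)
    (fun x _ => hg.da x)
  simpa [pd] using this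
end
end B5

namespace B5
open MvPolynomial

abbrev dl {n : ℕ} (a b : Fin n) : ℝ := if a = b then 1 else 0

lemma dl_comm {n : ℕ} (a b : Fin n) : dl a b = dl b a := by simp [dl, eq_comm]

def Alt2 {n : ℕ} (X : Fin n → Fin n → Fin n → Fin n → ℝ) (a b c d : Fin n) : ℝ :=
  X a b c d - X b a c d - X a b d c + X b a d c

set_option maxHeartbeats 1000000 in
lemma alg_id {n : ℕ} (Y : Fin n → ℝ) (T : Fin n → Fin n → ℝ) (D : Fin n → Fin n → Fin n → ℝ)
    (S P3 : Fin n → Fin n → Fin n → Fin n → ℝ) (P : Fin n → Fin n → Fin n → ℝ)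
    (u : Fin n → ℝ) (w : Fin n → Fin n → ℝ) (N τ : ℝ)
    (hT : ∀ a b, T a b = T b a) (hD : ∀ a b c, D a b c = D b a c)
    (hS : ∀ a b c d, S a b c d = S b a c d) (hS' : ∀ a b c d, S a b c d = S a b d c)
    (hN : N = ∑ a, Y a * Y a) (hu : ∀ a, u a = ∑ d, Y d * T a d)
    (hw : ∀ a e, w a e = ∑ f, Y f * D a f e) (hτ : τ = ∑ e, Y e * u e)
    (hP : ∀ a b c, P a b c = N * D a b c + 2 * (Y a * T b c + Y b * T a c - u a * dl b c - u b * dl a c))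
    (hP3 : ∀ a b c e, P3 a b c e = 2 * Y e * D a b c + N * S a b c e + 2 * (dl a e * T b c + Y a * D b c e
      + dl b e * T a c + Y b * D a c e - (T a e + w a e) * dl b c - (T b e + w b e) * dl a c))
    (a b c d : Fin n) :
    N ^ 2 * (S a c d b - S a d c b + S b d c a - S b c d a)
      = Alt2 (fun a b c d => N * P3 a c d b - 2 * Y b * P a c d - 2 * Y c * P a d b
          + 2 * (∑ e, Y e * P c e b) * dl a d) a b c d
        + KN (fun a c => 4 * N * T a c - 4 * τ * dl a c) a b c d := by
  have hYP : ∀ c b, ∑ e, Y e * P c e b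
      = N * w c b + 2 * (Y c * u b + N * T c b - u c * Y b - τ * dl c b) := by
    intro c b
    have e1 : ∑ e, Y e * P c e b = N * (∑ e, Y e * D c e b) + 2 * (Y c * (∑ e, Y e * T b e)
        + (∑ e, Y e * Y e) * T c b - u c * (∑ e, Y e * dl e b) - (∑ e, Y e * u e) * dl c b) := by
      simp only [Finset.mul_sum, Finset.sum_mul, ← Finset.sum_sub_distrib, ← Finset.sum_add_distrib]
      refine Finset.sum_congr rfl fun e _ => ?_
      rw [hP, hT b e]; ring
    rw [e1, ← hw, ← hu, ← hN, ← hτ]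
    simp [dl]
  simp only [Alt2, hYP]
  simp only [KN, hP3, hP]
  rw [show (if b = d then (1:ℝ) else 0) = dl b d from rfl, show (if b = c then (1:ℝ) else 0) = dl b c from rfl,
    show (if a = d then (1:ℝ) else 0) = dl a d from rfl, show (if a = c then (1:ℝ) else 0) = dl a c from rfl]
  rw [dl_comm c b, dl_comm d b, dl_comm c a, dl_comm d a, dl_comm d c, dl_comm b a]
  rw [hT c b, hT d b, hT c a, hT d a, hT d c, hT b a, hD d c b, hD d c a]
  ring
end B5

namespace B5
open MvPolynomial

section
variable {n : ℕ} (l : Fin n) (ε : ℝ)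

def Yf (a : Fin n) (x : Fin n → ℝ) : ℝ := x a + if a = l then ε else 0
def Nf (x : Fin n → ℝ) : ℝ := ∑ a, Yf l ε a x * Yf l ε a x
def uf (T : Fin n → Fin n → (Fin n → ℝ) → ℝ) (a : Fin n) (x : Fin n → ℝ) : ℝ :=
  ∑ d, Yf l ε d x * T a d x
noncomputable def Ph (T : Fin n → Fin n → (Fin n → ℝ) → ℝ) (a b c : Fin n) (x : Fin n → ℝ) : ℝ :=
  Nf l ε x * pd c (T a b) x + 2 * (Yf l ε a x * T b c x + Yf l ε b x * T a c x
    - uf l ε T a x * dl b c - uf l ε T b x * dl a c)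

lemma Sm_Y (a : Fin n) : Sm (Yf l ε a) := (Sm_coord a).add contDiff_const
lemma Sm_N : Sm (Nf l ε) := ContDiff.sum fun a _ => (Sm_Y l ε a).mul (Sm_Y l ε a)
lemma Sm_u {T : Fin n → Fin n → (Fin n → ℝ) → ℝ} (hT : ∀ a b, Sm (T a b)) (a) : Sm (uf l ε T a) :=
  ContDiff.sum fun d _ => (Sm_Y l ε d).mul (hT a d)
lemma Sm_Ph {T : Fin n → Fin n → (Fin n → ℝ) → ℝ} (hT : ∀ a b, Sm (T a b)) (a b c) :
    Sm (Ph l ε T a b c) := by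
  refine ((Sm_N l ε).mul ((hT a b).pd c)).add (contDiff_const.mul ?_)
  exact ((((Sm_Y l ε a).mul (hT b c)).add ((Sm_Y l ε b).mul (hT a c))).sub
    ((Sm_u l ε hT a).mul contDiff_const)).sub ((Sm_u l ε hT b).mul contDiff_const)

lemma pd_Y (a e : Fin n) (x) : pd e (Yf l ε a) x = dl a e := by
  show pd e (fun x => x a + if a = l then ε else 0) x = _
  rw [pd_add e ((Sm_coord a).da x) (by fun_prop), pd_coord, pd_const]; simp [dl]

lemma pd_N (e : Fin n) (x) : pd e (Nf l ε) x = 2 * Yf l ε e x := by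
  show pd e (fun x => ∑ a, Yf l ε a x * Yf l ε a x) x = _
  rw [pd_sum _ e (fun a => ((Sm_Y l ε a).mul (Sm_Y l ε a)).da x)]
  simp only [pd_mul e ((Sm_Y l ε _).da x) ((Sm_Y l ε _).da x), pd_Y]
  simp [Finset.sum_add_distrib, dl]; ring

variable {T : Fin n → Fin n → (Fin n → ℝ) → ℝ}

lemma pd_u (hT : ∀ a b, Sm (T a b)) (a e : Fin n) (x) :
    pd e (uf l ε T a) x = T a e x + ∑ f, Yf l ε f x * pd e (T a f) x := by
  show pd e (fun x => ∑ d, Yf l ε d x * T a d x) x = _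
  rw [pd_sum _ e (fun d => ((Sm_Y l ε d).mul (hT a d)).da x)]
  simp only [pd_mul e ((Sm_Y l ε _).da x) ((hT _ _).da x), pd_Y]
  simp [Finset.sum_add_distrib, dl]

lemma pd_Ph (hT : ∀ a b, Sm (T a b)) (a b c e : Fin n) (x) :
    pd e (Ph l ε T a b c) x = 2 * Yf l ε e x * pd c (T a b) x + Nf l ε x * pd e (pd c (T a b)) x
      + 2 * (dl a e * T b c x + Yf l ε a x * pd e (T b c) x
      + dl b e * T a c x + Yf l ε b x * pd e (T a c) x
      - (T a e x + ∑ f, Yf l ε f x * pd e (T a f) x) * dl b c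
      - (T b e x + ∑ f, Yf l ε f x * pd e (T b f) x) * dl a c) := by
  have hY := Sm_Y l ε
  have hN := Sm_N l ε
  have hu := Sm_u l ε hT
  have e1 : Ph l ε T a b c = fun x => Nf l ε x * pd c (T a b) x + 2 * (Yf l ε a x * T b c x + Yf l ε b x * T a c x
    - uf l ε T a x * dl b c - uf l ε T b x * dl a c) := rfl
  have s1 : Sm fun y => Yf l ε a y * T b c y := (hY a).mul (hT b c)
  have s2 : Sm fun y => Yf l ε b y * T a c y := (hY b).mul (hT a c)
  have s3 : Sm fun y => uf l ε T a y * dl b c := (hu a).mul contDiff_const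
  have s4 : Sm fun y => uf l ε T b y * dl a c := (hu b).mul contDiff_const
  rw [e1, pd_add e ((hN.mul ((hT a b).pd c)).da x) ((contDiff_const.mul (((s1.add s2).sub s3).sub s4) : Sm _).da x),
    pd_cmul e 2 ((((s1.add s2).sub s3).sub s4 : Sm _).da x), pd_sub e (((s1.add s2).sub s3 : Sm _).da x) (s4.da x),
    pd_sub e ((s1.add s2 : Sm _).da x) (s3.da x), pd_add e (s1.da x) (s2.da x),
    pd_mul e (hN.da x) (((hT a b).pd c).da x), pd_mul e ((hY a).da x) ((hT b c).da x),
    pd_mul e ((hY b).da x) ((hT a c).da x), pd_mulc e _ ((hu a).da x), pd_mulc e _ ((hu b).da x),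
    pd_u l ε hT, pd_u l ε hT, pd_N, pd_Y, pd_Y]
  ring

/-- second order curvature of `T` -/
noncomputable def RT (T : Fin n → Fin n → (Fin n → ℝ) → ℝ) (a b c d : Fin n) (x : Fin n → ℝ) : ℝ :=
  pd b (pd d (T a c)) x - pd b (pd c (T a d)) x + pd a (pd c (T b d)) x - pd a (pd d (T b c)) x

lemma RT_id (hT : ∀ a b, Sm (T a b)) (hsym : ∀ a b, T a b = T b a) (a b c d : Fin n) (x) :
    Nf l ε x ^ 2 * RT T a b c d x
      = Alt2 (fun a b c d => Nf l ε x * pd b (Ph l ε T a c d) x - 2 * Yf l ε b x * Ph l ε T a c d x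
          - 2 * Yf l ε c x * Ph l ε T a d b x
          + 2 * (∑ e, Yf l ε e x * Ph l ε T c e b x) * dl a d) a b c d
        + KN (fun a c => 4 * Nf l ε x * T a c x
            - 4 * (∑ e, Yf l ε e x * uf l ε T e x) * dl a c) a b c d :=
  alg_id (fun a => Yf l ε a x) (fun a b => T a b x) (fun a b c => pd c (T a b) x)
    (fun a b c d => pd d (pd c (T a b)) x) (fun a b c e => pd e (Ph l ε T a b c) x)
    (fun a b c => Ph l ε T a b c x) (fun a => uf l ε T a x)
    (fun a e => ∑ f, Yf l ε f x * pd e (T a f) x) (Nf l ε x) _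
    (fun a b => by rw [hsym]) (fun a b c => by rw [hsym]) (fun a b c d => by rw [hsym])
    (fun a b c d => pd_comm (hT a b) _ _ x) rfl (fun a => rfl) (fun a e => rfl) rfl
    (fun a b c => rfl) (fun a b c e => pd_Ph l ε hT a b c e x) a b c d
end

section
variable {n : ℕ}
noncomputable def sg (V : Fin n → (Fin n → ℝ) → ℝ) (x : Fin n → ℝ) : ℝ :=
  2 / (n:ℝ) * ∑ c, pd c (V c) x

noncomputable def Tf (H : Fin n → Fin n → MvPolynomial (Fin n) ℝ) (V : Fin n → (Fin n → ℝ) → ℝ)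
    (a b : Fin n) (x : Fin n → ℝ) : ℝ :=
  eval x (H a b) - (pd a (V b) x + pd b (V a) x - sg V x * dl a b)

variable {H : Fin n → Fin n → MvPolynomial (Fin n) ℝ} {V : Fin n → (Fin n → ℝ) → ℝ}

lemma Sm_sg (hV : ∀ a, Sm (V a)) : Sm (sg V) :=
  contDiff_const.mul (ContDiff.sum fun c _ => (hV c).pd c)

lemma Sm_T (hV : ∀ a, Sm (V a)) (a b) : Sm (Tf H V a b) :=
  (Sm_eval (H a b)).sub ((((hV b).pd a).add ((hV a).pd b)).sub ((Sm_sg hV).mul contDiff_const))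

lemma Tf_symm (hH : ∀ a b, H a b = H b a) (a b) : Tf H V a b = Tf H V b a := by
  funext x; simp only [Tf]; rw [hH a b, dl_comm a b]; ring

lemma pd_sg (hV : ∀ a, Sm (V a)) (d : Fin n) (x) :
    pd d (sg V) x = 2 / (n:ℝ) * ∑ c, pd d (pd c (V c)) x := by
  show pd d (fun x => 2 / (n:ℝ) * ∑ c, pd c (V c) x) x = _
  rw [pd_cmul d _ ((ContDiff.sum fun c _ => (hV c).pd c : Sm _).da x), pd_sum _ d (fun c => ((hV c).pd c).da x)]

lemma pd2_sg (hV : ∀ a, Sm (V a)) (d e : Fin n) (x) :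
    pd e (pd d (sg V)) x = 2 / (n:ℝ) * ∑ c, pd e (pd d (pd c (V c))) x := by
  rw [funext (pd_sg hV d)]
  rw [pd_cmul e _ ((ContDiff.sum fun c _ => ((hV c).pd c).pd d : Sm _).da x), pd_sum _ e (fun c => (((hV c).pd c).pd d).da x)]

lemma pd_T (hV : ∀ a, Sm (V a)) (a b d : Fin n) (x) :
    pd d (Tf H V a b) x = eval x (pderiv d (H a b))
      - (pd d (pd a (V b)) x + pd d (pd b (V a)) x - pd d (sg V) x * dl a b) := by
  show pd d (fun x => eval x (H a b) - (pd a (V b) x + pd b (V a) x - sg V x * dl a b)) x = _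
  have s1 := (hV b).pd a
  have s2 := (hV a).pd b
  have s3 : Sm fun y => sg V y * dl a b := (Sm_sg hV).mul contDiff_const
  rw [pd_sub d ((Sm_eval _).da x) (((s1.add s2).sub s3 : Sm _).da x),
    pd_sub d ((s1.add s2 : Sm _).da x) (s3.da x), pd_add d (s1.da x) (s2.da x),
    pd_mulc d _ ((Sm_sg hV).da x), pd_eval]

lemma pd2_T (hV : ∀ a, Sm (V a)) (a b d e : Fin n) (x) :
    pd e (pd d (Tf H V a b)) x = eval x (pderiv e (pderiv d (H a b)))
      - (pd e (pd d (pd a (V b))) x + pd e (pd d (pd b (V a))) x - pd e (pd d (sg V)) x * dl a b) := by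
  rw [funext (pd_T hV a b d)]
  have s1 := ((hV b).pd a).pd d
  have s2 := ((hV a).pd b).pd d
  have s3 : Sm fun y => pd d (sg V) y * dl a b := ((Sm_sg hV).pd d).mul contDiff_const
  rw [pd_sub e ((Sm_eval _).da x) (((s1.add s2).sub s3 : Sm _).da x),
    pd_sub e ((s1.add s2 : Sm _).da x) (s3.da x), pd_add e (s1.da x) (s2.da x),
    pd_mulc e _ (((Sm_sg hV).pd d).da x), pd_eval]

lemma pd3_comm12 {f : (Fin n → ℝ) → ℝ} (h : Sm f) (a b c : Fin n) (x) :
    pd a (pd b (pd c f)) x = pd b (pd a (pd c f)) x := pd_comm (h.pd c) a b x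
lemma pd3_comm23 {f : (Fin n → ℝ) → ℝ} (h : Sm f) (a b c : Fin n) (x) :
    pd a (pd b (pd c f)) x = pd a (pd c (pd b f)) x := by rw [funext (pd_comm h b c)]

lemma pd3_comm13 {f : (Fin n → ℝ) → ℝ} (h : Sm f) (a b c : Fin n) (x) :
    pd a (pd b (pd c f)) x = pd c (pd b (pd a f)) x := by
  rw [pd3_comm23 h, pd3_comm12 h, pd3_comm23 h]

lemma RT_T (hV : ∀ a, Sm (V a)) (hH : ∀ a b, H a b = H b a) (a b c d : Fin n) (x) :
    RT (Tf H V) a b c d x = eval x (Rp H a b c d) + KN (fun p q => pd p (pd q (sg V)) x) a b c d := by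
  simp only [RT, pd2_T hV, Rp, KN, map_add, map_sub]
  rw [hH d b]
  have h1 := pd3_comm13 (hV c) b d a x
  have h2 := pd3_comm23 (hV a) b d c x
  have h3 := pd3_comm13 (hV d) b c a x
  have h4 := pd3_comm23 (hV b) a c d x
  linear_combination h3 - h1 - h2 - h4
end
end B5

namespace B5
open MvPolynomial

section
variable {n : ℕ} (l : Fin n) (S : Finset (Fin n →₀ ℕ))

abbrev KK (n : ℕ) (S : Finset (Fin n →₀ ℕ)) := Fin n → Fin n → S → ℝ

noncomputable def poly {S : Finset (Fin n →₀ ℕ)} (k : KK n S) (a b : Fin n) : MvPolynomial (Fin n) ℝ :=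
  ∑ s : S, monomial s.1 (k a b s)

def Nn {S : Finset (Fin n →₀ ℕ)} (k : KK n S) : ℝ := ∑ a, ∑ b, ∑ s, |k a b s|

def HA : Set (Fin n → ℝ) := {x | 0 ≤ x l ∧ 1 ≤ ∑ a, x a ^ 2 ∧ ∑ a, x a ^ 2 < 4}

variable {S}

lemma poly_add (k k' : KK n S) (a b) : poly (k + k') a b = poly k a b + poly k' a b := by
  simp [poly, Finset.sum_add_distrib]
lemma poly_smul (t : ℝ) (k : KK n S) (a b) : poly (t • k) a b = t • poly k a b := by
  simp [poly, Finset.smul_sum, smul_monomial]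

lemma Nn_nonneg (k : KK n S) : 0 ≤ Nn k :=
  Finset.sum_nonneg fun _ _ => Finset.sum_nonneg fun _ _ => Finset.sum_nonneg fun _ _ => abs_nonneg _

lemma abs_le_Nn (k : KK n S) (a b s) : |k a b s| ≤ Nn k := by
  have h1 : |k a b s| ≤ ∑ s, |k a b s| :=
    Finset.single_le_sum (f := fun s => |k a b s|) (fun _ _ => abs_nonneg _) (Finset.mem_univ s)
  have h2 : ∑ s, |k a b s| ≤ ∑ b, ∑ s, |k a b s| :=
    Finset.single_le_sum (f := fun b => ∑ s, |k a b s|) (fun _ _ => Finset.sum_nonneg fun _ _ => abs_nonneg _) (Finset.mem_univ b)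
  have h3 : ∑ b, ∑ s, |k a b s| ≤ Nn k :=
    Finset.single_le_sum (f := fun a => ∑ b, ∑ s, |k a b s|)
      (fun _ _ => Finset.sum_nonneg fun _ _ => Finset.sum_nonneg fun _ _ => abs_nonneg _) (Finset.mem_univ a)
  linarith

lemma poly_bound (D : MvPolynomial (Fin n) ℝ →ₗ[ℝ] MvPolynomial (Fin n) ℝ) :
    ∃ K : ℝ, 0 ≤ K ∧ ∀ (k : KK n S) (x : Fin n → ℝ) (a b : Fin n), (∀ i, |x i| ≤ 2) →
      |eval x (D (poly k a b))| ≤ K * Nn k := by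
  have h1 : ∀ s : S, ∃ K : ℝ, 0 ≤ K ∧ ∀ x : Fin n → ℝ, (∀ i, |x i| ≤ 2) →
      |eval x (D (monomial s.1 1))| ≤ K := by
    intro s
    obtain ⟨K, hK⟩ := (isCompact_closedBall (0 : Fin n → ℝ) 2).exists_bound_of_continuousOn
      (f := fun x => eval x (D (monomial s.1 1))) (Sm_eval _).continuous.continuousOn
    refine ⟨|K|, abs_nonneg _, fun x hx => (hK x ?_).trans (le_abs_self _)⟩
    rw [mem_closedBall_zero_iff, pi_norm_le_iff_of_nonneg (by norm_num)]
    exact hx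
  choose K hK0 hK using h1
  refine ⟨∑ s, K s, Finset.sum_nonneg fun s _ => hK0 s, fun k x a b hx => ?_⟩
  have e : eval x (D (poly k a b)) = ∑ s : S, k a b s * eval x (D (monomial s.1 1)) := by
    simp only [poly, map_sum]
    refine Finset.sum_congr rfl fun s _ => ?_
    have : monomial s.1 (k a b s) = k a b s • monomial s.1 (1:ℝ) := by rw [smul_monomial]; simp
    rw [this, map_smul, smul_eval]
  rw [e, Finset.sum_mul]
  refine (Finset.abs_sum_le_sum_abs _ _).trans (Finset.sum_le_sum fun s _ => ?_)
  rw [abs_mul, mul_comm]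
  exact mul_le_mul (hK s x hx) (abs_le_Nn k a b s) (abs_nonneg _) (hK0 s)

lemma poly_bounds : ∃ K : ℝ, 0 ≤ K ∧ ∀ (k : KK n S) (x : Fin n → ℝ), (∀ i, |x i| ≤ 2) → ∀ a b,
      |eval x (poly k a b)| ≤ K * Nn k ∧ (∀ c, |eval x (pderiv c (poly k a b))| ≤ K * Nn k) ∧
      (∀ c d, |eval x (pderiv c (pderiv d (poly k a b)))| ≤ K * Nn k) := by
  obtain ⟨K0, h0, H0⟩ := poly_bound (S := S) (n := n) LinearMap.id
  choose K1 h1 H1 using fun c : Fin n => poly_bound (S := S) (pderiv (R := ℝ) c).toLinearMap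
  choose K2 h2 H2 using fun c d : Fin n => poly_bound (S := S)
    ((pderiv (R := ℝ) c).toLinearMap ∘ₗ (pderiv (R := ℝ) d).toLinearMap)
  have s1 : 0 ≤ ∑ c, K1 c := Finset.sum_nonneg fun c _ => h1 c
  have s2 : ∀ c, 0 ≤ ∑ d, K2 c d := fun c => Finset.sum_nonneg fun d _ => h2 c d
  have s3 : 0 ≤ ∑ c, ∑ d, K2 c d := Finset.sum_nonneg fun c _ => s2 c
  refine ⟨K0 + ∑ c, K1 c + ∑ c, ∑ d, K2 c d, by positivity, fun k x hx a b => ⟨?_, fun c => ?_, fun c d => ?_⟩⟩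
  · exact (H0 k x a b hx).trans (mul_le_mul_of_nonneg_right (by linarith) (Nn_nonneg k))
  · have : K1 c ≤ ∑ c, K1 c := Finset.single_le_sum (f := K1) (fun c _ => h1 c) (Finset.mem_univ c)
    exact (H1 c k x a b hx).trans (mul_le_mul_of_nonneg_right (by linarith) (Nn_nonneg k))
  · have t1 : K2 c d ≤ ∑ d, K2 c d := Finset.single_le_sum (f := K2 c) (fun d _ => h2 c d) (Finset.mem_univ d)
    have t2 : ∑ d, K2 c d ≤ ∑ c, ∑ d, K2 c d :=
      Finset.single_le_sum (f := fun c => ∑ d, K2 c d) (fun c _ => s2 c) (Finset.mem_univ c)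
    exact (H2 c d k x a b hx).trans (mul_le_mul_of_nonneg_right (by linarith) (Nn_nonneg k))

structure Wp (k : KK n S) : Prop where
  sym : ∀ a b, poly k a b = poly k b a
  tr : ∑ a, poly k a a = 0
  last : ∀ a, poly k a l = 0
  rad : ∀ i, ∀ x : Fin n → ℝ, x l = 0 → ∑ j, x j * eval x (poly k i j) = 0

def WW (S : Finset (Fin n →₀ ℕ)) : Submodule ℝ (KK n S) where
  carrier := {k | Wp l k}
  add_mem' := by
    intro k k' h h'
    refine ⟨fun a b => ?_, ?_, fun a => ?_, fun i x hx => ?_⟩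
    · rw [poly_add, poly_add, h.sym, h'.sym]
    · simp only [poly_add, Finset.sum_add_distrib, h.tr, h'.tr, add_zero]
    · rw [poly_add, h.last, h'.last, add_zero]
    · simp only [poly_add, map_add, mul_add, Finset.sum_add_distrib, h.rad i x hx, h'.rad i x hx, add_zero]
  zero_mem' := by
    have h0 : ∀ a b, poly (0 : KK n S) a b = 0 := fun a b => by simp [poly]
    refine ⟨fun a b => ?_, ?_, fun a => ?_, fun i x hx => ?_⟩ <;> simp [h0]
  smul_mem' := by
    intro t k h
    refine ⟨fun a b => ?_, ?_, fun a => ?_, fun i x hx => ?_⟩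
    · rw [poly_smul, poly_smul, h.sym]
    · simp only [poly_smul, ← Finset.smul_sum, h.tr, smul_zero]
    · rw [poly_smul, h.last, smul_zero]
    · simp only [poly_smul, smul_eval]
      have : ∀ j, x j * (t * eval x (poly k i j)) = t * (x j * eval x (poly k i j)) := fun j => by ring
      simp only [this, ← Finset.mul_sum, h.rad i x hx, mul_zero]

structure Adm (C1 ε : ℝ) (k : KK n S) (V : Fin n → (Fin n → ℝ) → ℝ) : Prop where
  e0 : 0 < ε
  e1 : ε ≤ 1
  hW : Wp l k
  sm : ∀ a, Sm (V a)
  bc1 : ∀ x, x l = 0 → V l x = 0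
  bc2 : ∀ i, i ≠ l → ∀ x, x l = 0 → pd l (V i) x = 0
  b1 : ∀ x ∈ HA l, ∀ a b, |pd a (V b) x| ≤ C1 * Nn k
  b2 : ∀ x ∈ HA l, ∀ a b c, |pd a (pd b (V c)) x| ≤ C1 * Nn k
  b3 : ∀ x ∈ HA l, ∀ a b c d, |pd a (pd b (pd c (V d))) x| ≤ C1 * Nn k

noncomputable def JJ (ε : ℝ) (k : KK n S) (V : Fin n → (Fin n → ℝ) → ℝ) : ℝ :=
  ∫ x in HA l, ∑ a, ∑ b, ∑ c, Ph l ε (Tf (poly k) V) a b c x ^ 2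

variable {l}
lemma HA_abs {x : Fin n → ℝ} (hx : x ∈ HA l) (i) : |x i| ≤ 2 := by
  have h : x i ^ 2 ≤ ∑ a, x a ^ 2 :=
    Finset.single_le_sum (f := fun a => x a ^ 2) (fun _ _ => sq_nonneg _) (Finset.mem_univ i)
  have := hx.2.2
  apply abs_le_of_sq_le_sq _ (by norm_num); linarith

lemma HA_Y {x : Fin n → ℝ} {ε : ℝ} (h0 : 0 < ε) (h1 : ε ≤ 1) (hx : x ∈ HA l) (i) : |Yf l ε i x| ≤ 3 := by
  have := HA_abs hx i
  unfold Yf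
  rw [abs_le] at this ⊢
  split_ifs <;> constructor <;> linarith

lemma Nf_eq (ε : ℝ) (x : Fin n → ℝ) : Nf l ε x = ∑ a, x a ^ 2 + 2 * ε * x l + ε ^ 2 := by
  have : ∀ a, Yf l ε a x * Yf l ε a x = x a ^ 2 + (if a = l then 2 * ε * x a + ε ^ 2 else 0) := by
    intro a; unfold Yf; split_ifs <;> ring
  simp only [Nf, this, Finset.sum_add_distrib]
  simp; ring

lemma HA_N {x : Fin n → ℝ} {ε : ℝ} (h0 : 0 < ε) (h1 : ε ≤ 1) (hx : x ∈ HA l) :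
    1 ≤ Nf l ε x ∧ Nf l ε x ≤ 9 := by
  have h2 := abs_le.1 (HA_abs hx l)
  have h3 := hx.1
  have h4 := hx.2
  rw [Nf_eq]
  constructor
  · nlinarith [mul_nonneg h0.le h3]
  · nlinarith

lemma sg_b {B : ℝ} {f : Fin n → ℝ} (h : ∀ c, |f c| ≤ B) (hB : 0 ≤ B) : |2 / (n:ℝ) * ∑ c, f c| ≤ 2 * B := by
  rw [abs_mul]
  have h1 : |∑ c, f c| ≤ n * B := by
    refine (Finset.abs_sum_le_sum_abs _ _).trans ((Finset.sum_le_sum fun c _ => h c).trans ?_)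
    simp
  rcases Nat.eq_zero_or_pos n with hn | hn
  · subst hn; simpa using hB
  · have hn' : (0:ℝ) < n := by exact_mod_cast hn
    rw [abs_of_pos (by positivity)]
    calc 2 / (n:ℝ) * |∑ c, f c| ≤ 2 / (n:ℝ) * (n * B) := by gcongr
      _ = 2 * B := by field_simp

lemma comb_b {B h p q s t : ℝ} (hh : |h| ≤ B) (hp : |p| ≤ B) (hq : |q| ≤ B) (hs : |s| ≤ 2 * B)
    (ht : t = 0 ∨ t = 1) : |h - (p + q - s * t)| ≤ 5 * B := by
  rw [abs_le] at *
  rcases ht with rfl | rfl <;> constructor <;> linarith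

lemma dl01 (a b : Fin n) : dl a b = 0 ∨ dl a b = 1 := by unfold dl; split_ifs <;> simp

lemma T_bounds (C1 : ℝ) (hC1 : 0 ≤ C1) : ∃ B : ℝ, 0 ≤ B ∧ ∀ ε (k : KK n S) V, Adm l C1 ε k V → ∀ x ∈ HA l,
    (∀ a b, |Tf (poly k) V a b x| ≤ B * Nn k) ∧ (∀ a b c, |pd c (Tf (poly k) V a b) x| ≤ B * Nn k) ∧
    (∀ a b c d, |pd d (pd c (Tf (poly k) V a b)) x| ≤ B * Nn k) := by
  obtain ⟨K, hK0, hK⟩ := poly_bounds (S := S) (n := n)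
  refine ⟨5 * (K + C1), by positivity, fun ε k V h x hx => ?_⟩
  have hN := Nn_nonneg k
  have hB : 0 ≤ (K + C1) * Nn k := by positivity
  have l1 : K * Nn k ≤ (K + C1) * Nn k := by nlinarith
  have l2 : C1 * Nn k ≤ (K + C1) * Nn k := by nlinarith
  refine ⟨fun a b => ?_, fun a b c => ?_, fun a b c d => ?_⟩
  · rw [mul_assoc]
    exact comb_b (((hK k x (HA_abs hx) a b).1).trans l1) ((h.b1 x hx _ _).trans l2) ((h.b1 x hx _ _).trans l2)
      (sg_b (fun c => (h.b1 x hx _ _).trans l2) hB) (dl01 _ _)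
  · rw [mul_assoc, pd_T h.sm, pd_sg h.sm]
    exact comb_b (((hK k x (HA_abs hx) a b).2.1 c).trans l1) ((h.b2 x hx _ _ _).trans l2) ((h.b2 x hx _ _ _).trans l2)
      (sg_b (fun c => (h.b2 x hx _ _ _).trans l2) hB) (dl01 _ _)
  · rw [mul_assoc, pd2_T h.sm, pd2_sg h.sm]
    exact comb_b (((hK k x (HA_abs hx) a b).2.2 d c).trans l1) ((h.b3 x hx _ _ _ _).trans l2) ((h.b3 x hx _ _ _ _).trans l2)
      (sg_b (fun c => (h.b3 x hx _ _ _ _).trans l2) hB) (dl01 _ _)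

lemma mul_b {a b A B : ℝ} (ha : |a| ≤ A) (hb : |b| ≤ B) : |a * b| ≤ A * B := by
  rw [abs_mul]; exact mul_le_mul ha hb (abs_nonneg _) ((abs_nonneg _).trans ha)
lemma dl_b (a b : Fin n) : |dl a b| ≤ 1 := by rcases dl01 a b with h | h <;> simp [h]

lemma Ph_bounds (C1 : ℝ) (hC1 : 0 ≤ C1) : ∃ B : ℝ, 0 ≤ B ∧ ∀ ε (k : KK n S) V, Adm l C1 ε k V → ∀ x ∈ HA l,
    ∀ a b c e, |pd e (Ph l ε (Tf (poly k) V) a b c) x| ≤ B * Nn k := by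
  obtain ⟨B, hB0, hB⟩ := T_bounds (S := S) (l := l) C1 hC1
  refine ⟨(100 + 12 * n) * B, by positivity, fun ε k V h x hx a b c e => ?_⟩
  obtain ⟨t0, t1, t2⟩ := hB ε k V h x hx
  rw [pd_Ph l ε (Sm_T h.sm)]
  obtain ⟨T, hT⟩ : ∃ T, T = Tf (poly k) V := ⟨_, rfl⟩
  rw [← hT] at t0 t1 t2 ⊢
  have hY := HA_Y h.e0 h.e1 hx
  have hN : |Nf l ε x| ≤ 9 := by
    have := HA_N h.e0 h.e1 hx; rw [abs_le]; constructor <;> linarith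
  have hs : ∀ a e, |(T a e x + ∑ f, Yf l ε f x * pd e (T a f) x)| ≤ (1 + 3 * n) * (B * Nn k) := by
    intro a e
    have : |∑ f, Yf l ε f x * pd e (T a f) x| ≤ n * (3 * (B * Nn k)) := by
      refine (Finset.abs_sum_le_sum_abs _ _).trans ((Finset.sum_le_sum fun f _ => mul_b (hY f) (t1 a f e)).trans ?_)
      simp
    have := abs_add_le (T a e x) (∑ f, Yf l ε f x * pd e (T a f) x)
    have := t0 a e
    linarith
  have q1 := abs_le.1 (mul_b (mul_b (by norm_num : |(2:ℝ)| ≤ 2) (hY e)) (t1 a b c))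
  have q2 := abs_le.1 (mul_b hN (t2 a b c e))
  have q3 := abs_le.1 (mul_b (dl_b a e) (t0 b c))
  have q4 := abs_le.1 (mul_b (hY a) (t1 b c e))
  have q5 := abs_le.1 (mul_b (dl_b b e) (t0 a c))
  have q6 := abs_le.1 (mul_b (hY b) (t1 a c e))
  have q7 := abs_le.1 (mul_b (hs a e) (dl_b b c))
  have q8 := abs_le.1 (mul_b (hs b e) (dl_b a c))
  have hBN : 0 ≤ B * Nn k := mul_nonneg hB0 (Nn_nonneg k)
  rw [abs_le]
  constructor <;> nlinarith
end
end B5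

namespace B5
open MvPolynomial

section
variable {n : ℕ} {l : Fin n} {S : Finset (Fin n →₀ ℕ)}

def Oo (l : Fin n) : Set (Fin n → ℝ) := {x | 0 < x l ∧ 1 < ∑ a, x a ^ 2 ∧ ∑ a, x a ^ 2 < 4}

lemma cont_sq : Continuous fun x : Fin n → ℝ => ∑ a, x a ^ 2 := by fun_prop

lemma Oo_open : IsOpen (Oo l) := by
  have h1 : IsOpen {x : Fin n → ℝ | 0 < x l} := isOpen_lt continuous_const (continuous_apply l)
  have h2 : IsOpen {x : Fin n → ℝ | 1 < ∑ a, x a ^ 2} := isOpen_lt continuous_const cont_sq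
  have h3 : IsOpen {x : Fin n → ℝ | ∑ a, x a ^ 2 < 4} := isOpen_lt cont_sq continuous_const
  exact h1.inter (h2.inter h3)

lemma Oo_sub : Oo l ⊆ HA l := fun x hx => ⟨hx.1.le, hx.2.1.le, hx.2.2⟩

lemma HA_meas : MeasurableSet (HA l) := by
  have h1 : MeasurableSet {x : Fin n → ℝ | 0 ≤ x l} := (isClosed_le continuous_const (continuous_apply l)).measurableSet
  have h2 : MeasurableSet {x : Fin n → ℝ | 1 ≤ ∑ a, x a ^ 2} := (isClosed_le continuous_const cont_sq).measurableSet
  have h3 : MeasurableSet {x : Fin n → ℝ | ∑ a, x a ^ 2 < 4} := (isOpen_lt cont_sq continuous_const).measurableSet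
  exact h1.inter (h2.inter h3)

lemma HA_ball : HA l ⊆ Metric.closedBall 0 2 := by
  intro x hx
  rw [mem_closedBall_zero_iff, pi_norm_le_iff_of_nonneg (by norm_num)]
  exact HA_abs hx

lemma HA_intg {f : (Fin n → ℝ) → ℝ} (hf : Continuous f) : IntegrableOn f (HA l) :=
  (hf.continuousOn.integrableOn_compact (isCompact_closedBall 0 2)).mono_set HA_ball

lemma HA_fin : volume (HA l) ≠ ⊤ :=
  ((measure_mono HA_ball).trans_lt (isCompact_closedBall (0 : Fin n → ℝ) 2).measure_lt_top).ne

lemma Sm_PhT {V : Fin n → (Fin n → ℝ) → ℝ} (hV : ∀ a, Sm (V a)) (ε : ℝ) (k : KK n S) (a b c) :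
    Sm (Ph l ε (Tf (poly k) V) a b c) := Sm_Ph l ε (fun a b => Sm_T hV a b) a b c

lemma cont_sumP {V : Fin n → (Fin n → ℝ) → ℝ} (hV : ∀ a, Sm (V a)) (ε : ℝ) (k : KK n S) :
    Continuous fun x => ∑ a, ∑ b, ∑ c, Ph l ε (Tf (poly k) V) a b c x ^ 2 :=
  continuous_finset_sum _ fun a _ => continuous_finset_sum _ fun b _ => continuous_finset_sum _ fun c _ =>
    ((Sm_PhT hV ε k a b c).continuous.pow 2)

lemma JJ_nonneg (ε : ℝ) (k : KK n S) (V) : 0 ≤ JJ l ε k V :=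
  integral_nonneg fun x => Finset.sum_nonneg fun _ _ => Finset.sum_nonneg fun _ _ => Finset.sum_nonneg fun _ _ => sq_nonneg _

def Good (l : Fin n) (S : Finset (Fin n →₀ ℕ)) (C1 : ℝ) (f : KK n S → ℝ) : Prop :=
  ∀ δ : ℝ, 0 < δ → ∃ C : ℝ, 0 ≤ C ∧ ∀ ε (k : KK n S) V, Adm l C1 ε k V →
    Nn k * |f k| ≤ δ * Nn k ^ 2 + C * JJ l ε k V

lemma Good.add {C1 : ℝ} {f g : KK n S → ℝ} (hf : Good l S C1 f) (hg : Good l S C1 g) :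
    Good l S C1 (fun k => f k + g k) := by
  intro δ hδ
  obtain ⟨A, hA0, hA⟩ := hf (δ/2) (by positivity)
  obtain ⟨B, hB0, hB⟩ := hg (δ/2) (by positivity)
  refine ⟨A + B, by positivity, fun ε k V h => ?_⟩
  have := hA ε k V h
  have := hB ε k V h
  have := mul_le_mul_of_nonneg_left (abs_add_le (f k) (g k)) (Nn_nonneg k)
  linarith

lemma Good.smul {C1 : ℝ} {f : KK n S → ℝ} (hf : Good l S C1 f) (t : ℝ) :
    Good l S C1 (fun k => t * f k) := by
  intro δ hδ
  obtain ⟨A, hA0, hA⟩ := hf (δ/(|t|+1)) (by positivity)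
  refine ⟨|t| * A, by positivity, fun ε k V h => ?_⟩
  have := mul_le_mul_of_nonneg_left (hA ε k V h) (abs_nonneg t)
  rw [abs_mul]
  have h2 : |t| * (δ / (|t|+1) * Nn k ^ 2) ≤ δ * Nn k ^ 2 := by
    rw [← mul_assoc]
    refine mul_le_mul_of_nonneg_right ?_ (sq_nonneg _)
    rw [← mul_div_assoc, div_le_iff₀ (by positivity)]
    nlinarith [abs_nonneg t]
  linarith

lemma Good_zero {C1 : ℝ} {f : KK n S → ℝ} (hf : ∀ k, Wp l k → f k = 0) : Good l S C1 f := by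
  intro δ hδ
  refine ⟨0, le_rfl, fun ε k V h => ?_⟩
  rw [hf k h.hW]; simp; positivity

/-- reduction: a pointwise bound by `P` on the half annulus suffices -/
lemma Good_of_int {C1 : ℝ} {f : KK n S → ℝ} (K : ℝ) (hK : 0 ≤ K)
    (h : ∀ ε (k : KK n S) V, Adm l C1 ε k V → |f k| ≤ ∫ x in HA l,
      K * ∑ a, ∑ b, ∑ c, |Ph l ε (Tf (poly k) V) a b c x|) : Good l S C1 f := by
  intro δ hδ
  obtain ⟨v, hv⟩ : ∃ v, v = volume.real (HA l) := ⟨_, rfl⟩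
  have hv0 : 0 ≤ v := hv ▸ measureReal_nonneg
  obtain ⟨δ', hδ'⟩ : ∃ δ', δ' = δ / (n * (n * (n * v)) + 1) := ⟨_, rfl⟩
  have hδ0 : 0 < δ' := by rw [hδ']; positivity
  refine ⟨K ^ 2 / (4 * δ'), by positivity, fun ε k V hk => ?_⟩
  have h1 := mul_le_mul_of_nonneg_left (h ε k V hk) (Nn_nonneg k)
  refine h1.trans ?_
  rw [← integral_const_mul]
  have hc := cont_sumP (l := l) hk.sm ε k
  have hca : Continuous fun x => ∑ a, ∑ b, ∑ c, |Ph l ε (Tf (poly k) V) a b c x| :=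
    continuous_finset_sum _ fun a _ => continuous_finset_sum _ fun b _ => continuous_finset_sum _ fun c _ =>
    ((Sm_PhT hk.sm ε k a b c).continuous.abs)
  have h2 : ∫ x in HA l, Nn k * (K * ∑ a, ∑ b, ∑ c, |Ph l ε (Tf (poly k) V) a b c x|)
      ≤ ∫ x in HA l, (n * (n * (n * (δ' * Nn k ^ 2))) + K ^ 2 / (4 * δ') * ∑ a, ∑ b, ∑ c, Ph l ε (Tf (poly k) V) a b c x ^ 2) := by
    refine integral_mono (HA_intg (continuous_const.mul (continuous_const.mul hca)))
      (HA_intg (continuous_const.add (continuous_const.mul hc))) fun x => ?_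
    simp only [Finset.mul_sum]
    have e : (n:ℝ) * (n * (n * (δ' * Nn k ^ 2))) = ∑ a : Fin n, ∑ b : Fin n, ∑ c : Fin n, δ' * Nn k ^ 2 := by
      simp
    rw [e]
    simp only [← Finset.sum_add_distrib]
    refine Finset.sum_le_sum fun a _ => Finset.sum_le_sum fun b _ => Finset.sum_le_sum fun c _ => ?_
    obtain ⟨p, hp⟩ : ∃ p, p = |Ph l ε (Tf (poly k) V) a b c x| := ⟨_, rfl⟩
    rw [← sq_abs (Ph l ε (Tf (poly k) V) a b c x), ← hp]
    rw [div_mul_eq_mul_div, ← sub_nonneg]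
    have : δ' * Nn k ^ 2 + K ^ 2 * p ^ 2 / (4 * δ') - Nn k * (K * p) = (2 * δ' * Nn k - K * p) ^ 2 / (4 * δ') := by
      field_simp; ring
    rw [this]; positivity
  refine h2.trans ?_
  rw [integral_add (HA_intg continuous_const) (Integrable.const_mul (HA_intg hc) _),
    setIntegral_const, smul_eq_mul, ← hv, integral_const_mul]
  have h3 : v * (n * (n * (n * (δ' * Nn k ^ 2)))) ≤ δ * Nn k ^ 2 := by
    have : v * (n * (n * (n * (δ' * Nn k ^ 2)))) = (n * (n * (n * v)) * δ') * Nn k ^ 2 := by ring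
    rw [this]
    refine mul_le_mul_of_nonneg_right ?_ (sq_nonneg _)
    rw [hδ', ← mul_div_assoc, div_le_iff₀ (by positivity)]
    nlinarith
  exact add_le_add_left h3 _
end
end B5

namespace B5
open MvPolynomial

section
variable {n : ℕ} {l : Fin n} {S : Finset (Fin n →₀ ℕ)}

def Z0 (f : (Fin n → ℝ) → ℝ) : Prop := Integrable f ∧ ∫ x, f x = 0

lemma Z0.add {f g : (Fin n → ℝ) → ℝ} (hf : Z0 f) (hg : Z0 g) : Z0 (fun x => f x + g x) :=
  ⟨hf.1.add hg.1, by rw [integral_add hf.1 hg.1, hf.2, hg.2, add_zero]⟩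
lemma Z0.sub {f g : (Fin n → ℝ) → ℝ} (hf : Z0 f) (hg : Z0 g) : Z0 (fun x => f x - g x) :=
  ⟨hf.1.sub hg.1, by rw [integral_sub hf.1 hg.1, hf.2, hg.2, sub_zero]⟩
lemma Z0.cmul {f : (Fin n → ℝ) → ℝ} (hf : Z0 f) (t : ℝ) : Z0 (fun x => t * f x) :=
  ⟨hf.1.const_mul t, by rw [integral_const_mul, hf.2, mul_zero]⟩
lemma Z0.sum {ι : Type*} (s : Finset ι) {f : ι → (Fin n → ℝ) → ℝ} (hf : ∀ i, Z0 (f i)) :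
    Z0 (fun x => ∑ i ∈ s, f i x) :=
  ⟨integrable_finset_sum _ fun i _ => (hf i).1, by
    rw [integral_finset_sum _ fun i _ => (hf i).1]; exact Finset.sum_eq_zero fun i _ => (hf i).2⟩

def om (ω : Fin n → Fin n → Fin n → Fin n → ℝ) (R : Fin n → Fin n → Fin n → Fin n → ℝ) : ℝ :=
  ∑ a, ∑ b, ∑ c, ∑ d, ω a b c d * R a b c d

lemma om_add (ω R R' : Fin n → Fin n → Fin n → Fin n → ℝ) :
    om ω (fun a b c d => R a b c d + R' a b c d) = om ω R + om ω R' := by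
  simp only [om, mul_add, Finset.sum_add_distrib]
lemma om_smul (ω R : Fin n → Fin n → Fin n → Fin n → ℝ) (t : ℝ) :
    om ω (fun a b c d => t * R a b c d) = t * om ω R := by
  simp only [om, Finset.mul_sum]
  exact Finset.sum_congr rfl fun a _ => Finset.sum_congr rfl fun b _ => Finset.sum_congr rfl fun c _ =>
    Finset.sum_congr rfl fun d _ => by ring

lemma om_bound (ω R : Fin n → Fin n → Fin n → Fin n → ℝ) {B : ℝ} (h : ∀ a b c d, |R a b c d| ≤ B) :
    |om ω R| ≤ (∑ a, ∑ b, ∑ c, ∑ d, |ω a b c d|) * B := by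
  simp only [om, Finset.sum_mul]
  refine (Finset.abs_sum_le_sum_abs _ _).trans (Finset.sum_le_sum fun a _ => ?_)
  refine (Finset.abs_sum_le_sum_abs _ _).trans (Finset.sum_le_sum fun b _ => ?_)
  refine (Finset.abs_sum_le_sum_abs _ _).trans (Finset.sum_le_sum fun c _ => ?_)
  refine (Finset.abs_sum_le_sum_abs _ _).trans (Finset.sum_le_sum fun d _ => ?_)
  exact mul_b le_rfl (h a b c d)

/-- smooth cut-off times function divided by N -/
noncomputable def Gf (l : Fin n) (ε : ℝ) (φ P : (Fin n → ℝ) → ℝ) (x : Fin n → ℝ) : ℝ :=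
  φ x * P x * (Nf l ε x)⁻¹

lemma Nf_pos {ε : ℝ} {φ : (Fin n → ℝ) → ℝ} (hs : tsupport φ ⊆ Oo l) (h0 : 0 < ε) (h1 : ε ≤ 1)
    {x} (hx : x ∈ tsupport φ) : Nf l ε x ≠ 0 := by
  have := (HA_N h0 h1 (Oo_sub (hs hx))).1; linarith

lemma Gf_zero {ε : ℝ} {φ P : (Fin n → ℝ) → ℝ} {x} (hx : x ∉ tsupport φ) :
    Gf l ε φ P =ᶠ[nhds x] fun _ => 0 := by
  filter_upwards [notMem_tsupport_iff_eventuallyEq.1 hx] with y hy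
  simp [Gf, hy]

lemma Sm_G {ε : ℝ} {φ P : (Fin n → ℝ) → ℝ} (hφ : Sm φ) (hP : Sm P) (hs : tsupport φ ⊆ Oo l)
    (h0 : 0 < ε) (h1 : ε ≤ 1) : Sm (Gf l ε φ P) := by
  rw [Sm, contDiff_iff_contDiffAt]
  intro x
  by_cases hx : x ∈ tsupport φ
  · exact ((hφ.mul hP).contDiffAt).mul ((Sm_N l ε).contDiffAt.inv (Nf_pos hs h0 h1 hx))
  · exact contDiffAt_const.congr_of_eventuallyEq (Gf_zero hx)

lemma cs_G {ε : ℝ} {φ P : (Fin n → ℝ) → ℝ} (hc : HasCompactSupport φ) : HasCompactSupport (Gf l ε φ P) := by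
  have h1 : HasCompactSupport (fun x => φ x * P x) := hc.mul_right
  exact h1.mul_right

lemma pd_G {ε : ℝ} {φ P : (Fin n → ℝ) → ℝ} (hφ : Sm φ) (hP : Sm P) (hs : tsupport φ ⊆ Oo l)
    (h0 : 0 < ε) (h1 : ε ≤ 1) {x} (hx : x ∈ tsupport φ) (b : Fin n) :
    pd b (Gf l ε φ P) x * Nf l ε x ^ 2 = (pd b φ x * P x + φ x * pd b P x) * Nf l ε x
      - φ x * P x * (2 * Yf l ε b x) := by
  have hN := Nf_pos hs h0 h1 hx
  have hmul : Sm fun y => φ y * P y := hφ.mul hP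
  have e : pd b (fun y => φ y * P y) x = pd b (fun y => Gf l ε φ P y * Nf l ε y) x := by
    unfold pd
    congr 1
    apply Filter.EventuallyEq.fderiv_eq
    have : ∀ᶠ y in nhds x, Nf l ε y ≠ 0 := (Sm_N l ε).continuous.continuousAt.eventually_ne hN
    filter_upwards [this] with y hy
    simp [Gf, hy]
  rw [pd_mul b (hφ.da x) (hP.da x), pd_mul b ((Sm_G hφ hP hs h0 h1).da x) ((Sm_N l ε).da x), pd_N] at e
  rw [e]
  have : Gf l ε φ P x * Nf l ε x = φ x * P x := by simp [Gf, hN]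
  linear_combination (-2 * Yf l ε b x) * this

noncomputable def Ef (l : Fin n) (ε : ℝ) (φ : (Fin n → ℝ) → ℝ) (P : Fin n → Fin n → Fin n → (Fin n → ℝ) → ℝ)
    (x : Fin n → ℝ) (a b c d : Fin n) : ℝ :=
  - pd b φ x * P a c d x * (Nf l ε x)⁻¹ - 2 * Yf l ε c x * φ x * P a d b x * ((Nf l ε x)⁻¹) ^ 2
    + 2 * φ x * (∑ e, Yf l ε e x * P c e b x) * dl a d * ((Nf l ε x)⁻¹) ^ 2

lemma pd_zero_of {f : (Fin n → ℝ) → ℝ} {x} (h : f =ᶠ[nhds x] fun _ => 0) (b : Fin n) : pd b f x = 0 := by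
  unfold pd; rw [h.fderiv_eq]; simp

lemma Alt2_add (X X' : Fin n → Fin n → Fin n → Fin n → ℝ) (a b c d) :
    Alt2 (fun a b c d => X a b c d + X' a b c d) a b c d = Alt2 X a b c d + Alt2 X' a b c d := by
  simp only [Alt2]; ring

/-- the key pointwise decomposition -/
lemma decomp {ε : ℝ} {φ : (Fin n → ℝ) → ℝ} {T : Fin n → Fin n → (Fin n → ℝ) → ℝ}
    (hφ : Sm φ) (hT : ∀ a b, Sm (T a b)) (hsym : ∀ a b, T a b = T b a) (hs : tsupport φ ⊆ Oo l)
    (h0 : 0 < ε) (h1 : ε ≤ 1) (ω : Fin n → Fin n → Fin n → Fin n → ℝ)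
    (hω : ∀ M : Fin n → Fin n → ℝ, (∀ a b, M a b = M b a) → om ω (KN M) = 0) (x) :
    φ x * om ω (fun a b c d => RT T a b c d x)
      = om ω (fun a b c d => Alt2 (fun a b c d => pd b (Gf l ε φ (Ph l ε T a c d)) x) a b c d)
        + om ω (fun a b c d => Alt2 (Ef l ε φ (Ph l ε T) x) a b c d) := by
  by_cases hx : x ∈ tsupport φ
  · have hN := Nf_pos hs h0 h1 hx
    obtain ⟨M, hM⟩ : ∃ M : Fin n → Fin n → ℝ, M = fun a c => 4 * Nf l ε x * T a c x
            - 4 * (∑ e, Yf l ε e x * uf l ε T e x) * dl a c := ⟨_, rfl⟩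
    have key : ∀ a b c d, φ x * RT T a b c d x = Alt2 (fun a b c d => pd b (Gf l ε φ (Ph l ε T a c d)) x) a b c d
        + Alt2 (Ef l ε φ (Ph l ε T) x) a b c d + (φ x * ((Nf l ε x)⁻¹) ^ 2) * KN M a b c d := by
      intro a b c d
      have h2 := RT_id l ε hT hsym a b c d x
      rw [← hM] at h2
      have hE : ∀ a b c d, Ef l ε φ (Ph l ε T) x a b c d * Nf l ε x ^ 2 =
        - pd b φ x * Ph l ε T a c d x * Nf l ε x - 2 * Yf l ε c x * φ x * Ph l ε T a d b x
        + 2 * φ x * (∑ e, Yf l ε e x * Ph l ε T c e b x) * dl a d := by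
        intro a b c d; unfold Ef; field_simp
      have hG := fun a b c d => pd_G hφ (Sm_Ph l ε hT a c d) hs h0 h1 hx b
      have hK : (φ x * ((Nf l ε x)⁻¹) ^ 2) * KN M a b c d * Nf l ε x ^ 2 = φ x * KN M a b c d := by
        field_simp
      apply mul_right_cancel₀ (pow_ne_zero 2 hN)
      simp only [Alt2] at h2 ⊢
      linear_combination φ x * h2 - hK - hE a b c d + hE b a c d + hE a b d c - hE b a d c
        - hG a b c d + hG b a c d + hG a b d c - hG b a d c
    rw [← om_smul]
    simp only [key]
    rw [om_add, om_smul, om_add, hω M]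
    · ring
    · intro a b; rw [hM]; simp only [hsym a b, dl_comm a b]
  · have hz : φ =ᶠ[nhds x] fun _ => 0 := notMem_tsupport_iff_eventuallyEq.1 hx
    have hp : ∀ b, pd b φ x = 0 := pd_zero_of hz
    have hG : ∀ a c d b, pd b (Gf l ε φ (Ph l ε T a c d)) x = 0 := fun a c d b => pd_zero_of (Gf_zero hx) b
    have h0 : φ x = 0 := hz.self_of_nhds
    simp [om, Alt2, Ef, hp, hG, h0]
end
end B5

namespace B5
open MvPolynomial

section
variable {n : ℕ} {l : Fin n} {S : Finset (Fin n →₀ ℕ)}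

def SP (P : Fin n → Fin n → Fin n → ℝ) : ℝ := ∑ a, ∑ b, ∑ c, |P a b c|

lemma le_SP (P : Fin n → Fin n → Fin n → ℝ) (a b c) : |P a b c| ≤ SP P := by
  have h1 : |P a b c| ≤ ∑ c, |P a b c| :=
    Finset.single_le_sum (f := fun c => |P a b c|) (fun _ _ => abs_nonneg _) (Finset.mem_univ c)
  have h2 : ∑ c, |P a b c| ≤ ∑ b, ∑ c, |P a b c| :=
    Finset.single_le_sum (f := fun b => ∑ c, |P a b c|) (fun _ _ => Finset.sum_nonneg fun _ _ => abs_nonneg _) (Finset.mem_univ b)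
  have h3 : ∑ b, ∑ c, |P a b c| ≤ SP P :=
    Finset.single_le_sum (f := fun a => ∑ b, ∑ c, |P a b c|)
      (fun _ _ => Finset.sum_nonneg fun _ _ => Finset.sum_nonneg fun _ _ => abs_nonneg _) (Finset.mem_univ a)
  linarith

lemma le_SP2 (P : Fin n → Fin n → Fin n → ℝ) (a c) : ∑ b, |P a b c| ≤ SP P := by
  have h1 : ∑ b, |P a b c| ≤ ∑ b, ∑ c, |P a b c| := Finset.sum_le_sum fun b _ =>
    Finset.single_le_sum (f := fun c => |P a b c|) (fun _ _ => abs_nonneg _) (Finset.mem_univ c)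
  have h3 : ∑ b, ∑ c, |P a b c| ≤ SP P :=
    Finset.single_le_sum (f := fun a => ∑ b, ∑ c, |P a b c|)
      (fun _ _ => Finset.sum_nonneg fun _ _ => Finset.sum_nonneg fun _ _ => abs_nonneg _) (Finset.mem_univ a)
  linarith

lemma Ef_bound {ε M : ℝ} {φ : (Fin n → ℝ) → ℝ} (P : Fin n → Fin n → Fin n → (Fin n → ℝ) → ℝ)
    (h0 : 0 < ε) (h1 : ε ≤ 1) {x} (hx : x ∈ HA l) (hM : |φ x| ≤ M) (hM' : ∀ b, |pd b φ x| ≤ M) (a b c d) :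
    |Ef l ε φ P x a b c d| ≤ 13 * M * SP (fun a b c => P a b c x) := by
  obtain ⟨s, hs⟩ : ∃ s, s = SP (fun a b c => P a b c x) := ⟨_, rfl⟩
  rw [← hs]
  have hM0 : 0 ≤ M := (abs_nonneg _).trans hM
  have hP : ∀ a b c, |P a b c x| ≤ s := fun a b c => hs ▸ le_SP (fun a b c => P a b c x) a b c
  have hs0 : 0 ≤ s := (abs_nonneg _).trans (hP a a a)
  have hY := HA_Y h0 h1 hx
  have hN1 := (HA_N h0 h1 hx).1
  have hi : |(Nf l ε x)⁻¹| ≤ 1 := by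
    rw [abs_of_nonneg (by positivity)]; exact inv_le_one_of_one_le₀ hN1
  have hi2 : |(Nf l ε x)⁻¹ ^ 2| ≤ 1 := by
    rw [abs_pow]; exact pow_le_one₀ (abs_nonneg _) hi
  have hsum : |∑ e, Yf l ε e x * P c e b x| ≤ 3 * s := by
    refine (Finset.abs_sum_le_sum_abs _ _).trans ?_
    calc ∑ e, |Yf l ε e x * P c e b x| ≤ ∑ e, 3 * |P c e b x| :=
          Finset.sum_le_sum fun e _ => mul_b (hY e) le_rfl
      _ = 3 * ∑ e, |P c e b x| := by rw [Finset.mul_sum]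
      _ ≤ 3 * s := by
        have := le_SP2 (fun a b c => P a b c x) c b
        rw [← hs] at this; linarith
  have q1 := abs_le.1 (mul_b (mul_b (by simpa using hM' b : |-pd b φ x| ≤ M) (hP a c d)) hi)
  have q2 := abs_le.1 (mul_b (mul_b (mul_b (mul_b (by norm_num : |(2:ℝ)| ≤ 2) (hY c)) hM) (hP a d b)) hi2)
  have q3 := abs_le.1 (mul_b (mul_b (mul_b (mul_b (by norm_num : |(2:ℝ)| ≤ 2) hM) hsum) (dl_b a d)) hi2)
  unfold Ef
  rw [abs_le]
  constructor <;> linarith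

lemma Z0_om {ω : Fin n → Fin n → Fin n → Fin n → ℝ} {X : Fin n → Fin n → Fin n → Fin n → (Fin n → ℝ) → ℝ}
    (h : ∀ a b c d, Z0 (X a b c d)) : Z0 (fun x => om ω (fun a b c d => Alt2 (fun a b c d => X a b c d x) a b c d)) := by
  unfold om
  refine Z0.sum _ fun a => Z0.sum _ fun b => Z0.sum _ fun c => Z0.sum _ fun d => Z0.cmul ?_ _
  exact (((h a b c d).sub (h b a c d)).sub (h a b d c)).add (h b a d c)

lemma cont_om {ω : Fin n → Fin n → Fin n → Fin n → ℝ} {X : Fin n → Fin n → Fin n → Fin n → (Fin n → ℝ) → ℝ}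
    (h : ∀ a b c d, Continuous (X a b c d)) : Continuous (fun x => om ω (fun a b c d => X a b c d x)) := by
  unfold om
  exact continuous_finset_sum _ fun a _ => continuous_finset_sum _ fun b _ => continuous_finset_sum _ fun c _ =>
    continuous_finset_sum _ fun d _ => continuous_const.mul (h a b c d)

lemma intg_Rp {φ : (Fin n → ℝ) → ℝ} (hφ : Sm φ) (hc : HasCompactSupport φ) (ω : Fin n → Fin n → Fin n → Fin n → ℝ)
    (k : KK n S) : Integrable fun x => φ x * om ω (fun a b c d => eval x (Rp (poly k) a b c d)) := by
  refine Continuous.integrable_of_hasCompactSupport (hφ.continuous.mul (cont_om fun a b c d => (Sm_eval _).continuous)) ?_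
  exact hc.mul_right

lemma Good_interior {C1 : ℝ} {φ : (Fin n → ℝ) → ℝ} (hφ : Sm φ) (hc : HasCompactSupport φ)
    (hs : tsupport φ ⊆ Oo l) (ω : Fin n → Fin n → Fin n → Fin n → ℝ)
    (hω : ∀ M : Fin n → Fin n → ℝ, (∀ a b, M a b = M b a) → om ω (KN M) = 0) :
    Good l S C1 (fun k => ∫ x, φ x * om ω (fun a b c d => eval x (Rp (poly k) a b c d))) := by
  obtain ⟨M0, hM0⟩ := hc.exists_bound_of_continuous hφ.continuous
  have hcd : ∀ b, HasCompactSupport (pd b φ) := fun b => hc.fderiv_apply (𝕜 := ℝ) (Pi.single b 1 : Fin n → ℝ)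
  choose M1 hM1 using fun b => (hcd b).exists_bound_of_continuous (hφ.pd b).continuous
  have hM0' : 0 ≤ M0 := (norm_nonneg _).trans (hM0 0)
  have hM1' : ∀ b, 0 ≤ M1 b := fun b => (norm_nonneg _).trans (hM1 b 0)
  obtain ⟨M, hM⟩ : ∃ M, M = M0 + ∑ b, M1 b := ⟨_, rfl⟩
  have hMn : 0 ≤ M := by rw [hM]; exact add_nonneg hM0' (Finset.sum_nonneg fun b _ => hM1' b)
  have hMa : ∀ x, |φ x| ≤ M := fun x => (hM0 x).trans (by
    rw [hM]; linarith [Finset.sum_nonneg fun b (_ : b ∈ Finset.univ) => hM1' b])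
  have hMb : ∀ x b, |pd b φ x| ≤ M := fun x b => (hM1 b x).trans (by
    have := Finset.single_le_sum (f := M1) (fun b _ => hM1' b) (Finset.mem_univ b)
    rw [hM]; linarith)
  have hw0 : 0 ≤ ∑ a, ∑ b, ∑ c, ∑ d, |ω a b c d| := Finset.sum_nonneg fun _ _ => Finset.sum_nonneg fun _ _ =>
    Finset.sum_nonneg fun _ _ => Finset.sum_nonneg fun _ _ => abs_nonneg _
  have hK0 : 0 ≤ (∑ a, ∑ b, ∑ c, ∑ d, |ω a b c d|) * (4 * (13 * M)) := mul_nonneg hw0 (by linarith)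
  refine Good_of_int ((∑ a, ∑ b, ∑ c, ∑ d, |ω a b c d|) * (4 * (13 * M))) hK0 fun ε k V hk => ?_
  have hT : ∀ a b, Sm (Tf (poly k) V a b) := fun a b => Sm_T hk.sm a b
  have hTs : ∀ a b, Tf (poly k) V a b = Tf (poly k) V b a := fun a b => Tf_symm hk.hW.sym a b
  obtain ⟨g, hg⟩ : ∃ g : (Fin n → ℝ) → ℝ, g = fun x =>
    om ω (fun a b c d => Alt2 (Ef l ε φ (Ph l ε (Tf (poly k) V)) x) a b c d) := ⟨_, rfl⟩
  have hz : Z0 (fun x => om ω (fun a b c d =>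
      Alt2 (fun a b c d => pd b (Gf l ε φ (Ph l ε (Tf (poly k) V) a c d)) x) a b c d)) := by
    apply Z0_om (X := fun a b c d x => pd b (Gf l ε φ (Ph l ε (Tf (poly k) V) a c d)) x)
    intro a b c d
    have hG := Sm_G hφ (Sm_PhT (l := l) hk.sm ε k a c d) hs hk.e0 hk.e1
    have hcG := cs_G (l := l) (ε := ε) (P := Ph l ε (Tf (poly k) V) a c d) hc
    exact ⟨(hG.pd b).continuous.integrable_of_hasCompactSupport
      (hcG.fderiv_apply (𝕜 := ℝ) (Pi.single b 1 : Fin n → ℝ)), integral_pd_zero hG hcG b⟩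
  have e : ∀ x, φ x * om ω (fun a b c d => eval x (Rp (poly k) a b c d)) = om ω (fun a b c d =>
      Alt2 (fun a b c d => pd b (Gf l ε φ (Ph l ε (Tf (poly k) V) a c d)) x) a b c d) + g x := by
    intro x
    rw [hg, ← decomp hφ hT hTs hs hk.e0 hk.e1 ω hω x]
    simp only [RT_T hk.sm hk.hW.sym]
    rw [om_add]
    have : om ω (fun a b c d => KN (fun p q => pd p (pd q (sg V)) x) a b c d) = 0 :=
      hω _ fun a b => pd_comm (Sm_sg hk.sm) a b x
    rw [this, add_zero]
  have hi := intg_Rp hφ hc ω k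
  have hgi : Integrable g := by
    have := hi.sub hz.1
    refine this.congr (Filter.Eventually.of_forall fun x => ?_)
    simp only [Pi.sub_apply, e x, add_sub_cancel_left]
  simp only [e]
  rw [integral_add hz.1 hgi, hz.2, zero_add, ← integral_indicator HA_meas, ← Real.norm_eq_abs]
  have hca : Continuous fun x => ∑ a, ∑ b, ∑ c, |Ph l ε (Tf (poly k) V) a b c x| :=
    continuous_finset_sum _ fun a _ => continuous_finset_sum _ fun b _ => continuous_finset_sum _ fun c _ =>
    ((Sm_PhT hk.sm ε k a b c).continuous.abs)
  refine norm_integral_le_of_norm_le ((integrable_indicator_iff HA_meas).2 (HA_intg (continuous_const.mul hca)))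
    (Filter.Eventually.of_forall fun x => ?_)
  by_cases hx : x ∈ tsupport φ
  · have hxH := Oo_sub (hs hx)
    rw [Set.indicator_of_mem hxH, hg, Real.norm_eq_abs, mul_assoc]
    refine om_bound ω _ fun a b c d => ?_
    have hE := fun a b c d => abs_le.1 (Ef_bound (Ph l ε (Tf (poly k) V)) hk.e0 hk.e1 hxH (hMa x) (hMb x) a b c d)
    have e1 := hE a b c d
    have e2 := hE b a c d
    have e3 := hE a b d c
    have e4 := hE b a d c
    unfold Alt2
    unfold SP at e1 e2 e3 e4
    rw [abs_le]
    constructor <;> linarith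
  · have hz : φ =ᶠ[nhds x] fun _ => 0 := notMem_tsupport_iff_eventuallyEq.1 hx
    have hp : ∀ b, pd b φ x = 0 := pd_zero_of hz
    have h0 : φ x = 0 := hz.self_of_nhds
    have : g x = 0 := by rw [hg]; simp [om, Alt2, Ef, hp, h0]
    rw [this, norm_zero]
    exact Set.indicator_nonneg (fun x _ => mul_nonneg hK0 (Finset.sum_nonneg fun _ _ =>
      Finset.sum_nonneg fun _ _ => Finset.sum_nonneg fun _ _ => abs_nonneg _)) x

noncomputable def IntF (φ : (Fin n → ℝ) → ℝ) (hφ : Sm φ) (hc : HasCompactSupport φ)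
    (ω : Fin n → Fin n → Fin n → Fin n → ℝ) : Module.Dual ℝ (KK n S) where
  toFun k := ∫ x, φ x * om ω (fun a b c d => eval x (Rp (poly k) a b c d))
  map_add' := by
    intro k k'
    rw [← integral_add (intg_Rp hφ hc ω k) (intg_Rp hφ hc ω k')]
    congr 1; ext x
    rw [← mul_add, ← om_add]
    simp only [Rp, poly_add, map_add, map_sub]
    congr 2
    ext a b c d; ring
  map_smul' := by
    intro t k
    simp only [smul_eq_mul, RingHom.id_apply]
    rw [← integral_const_mul]
    congr 1; ext x
    rw [mul_left_comm, ← om_smul ω _ t]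
    simp only [Rp, poly_smul, map_add, map_sub, Derivation.map_smul, smul_eval]
    refine congrArg (fun z => φ x * om ω z) ?_
    ext a b c d; ring
end
end B5

namespace B5
open MvPolynomial

section
variable {n : ℕ} {l : Fin n} {S : Finset (Fin n →₀ ℕ)}

lemma Ph_bd {C1 ε : ℝ} {k : KK n S} {V} (h : Adm l C1 ε k V) {p : Fin n → ℝ} (hp : p l = 0) {a b : Fin n}
    (ha : a ≠ l) (hb : b ≠ l) :
    Ph l ε (Tf (poly k) V) a b l p = Nf l ε p * (eval p (pderiv l (poly k a b)) + pd l (sg V) p * dl a b) := by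
  have hT : ∀ a, a ≠ l → Tf (poly k) V a l p = 0 := by
    intro a ha
    have e1 : pd a (V l) p = 0 := pd_tan ha h.bc1 hp ((h.sm l).da p)
    have e2 := h.bc2 a ha p hp
    simp [Tf, h.hW.last, e1, e2, dl, ha]
  have hD : ∀ a b, a ≠ l → b ≠ l → pd l (pd a (V b)) p = 0 := by
    intro a b ha hb
    rw [pd_comm (h.sm b) l a p]
    exact pd_tan ha (h.bc2 b hb) hp (((h.sm b).pd l).da p)
  unfold Ph
  rw [pd_T h.sm, hT a ha, hT b hb, hD a b ha hb, hD b a hb ha]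
  simp only [dl, if_neg ha, if_neg hb]
  ring

noncomputable def Dd (l : Fin n) (p : Fin n → ℝ) (s : ℝ) : Set (Fin n → ℝ) := {x | 0 ≤ x l} ∩ Metric.closedBall p s

lemma Dd_convex (p : Fin n → ℝ) (s : ℝ) : Convex ℝ (Dd l p s) := by
  refine Convex.inter ?_ (convex_closedBall p s)
  have : IsLinearMap ℝ fun x : Fin n → ℝ => x l := ⟨fun _ _ => rfl, fun _ _ => rfl⟩
  exact convex_halfSpace_ge this 0

lemma Dd_meas (p : Fin n → ℝ) (s : ℝ) : MeasurableSet (Dd l p s) :=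
  (isClosed_le continuous_const (continuous_apply l)).measurableSet.inter Metric.isClosed_closedBall.measurableSet

lemma Dd_pos {p : Fin n → ℝ} (hp : p l = 0) {s : ℝ} (hs : 0 < s) : 0 < volume (Dd l p s) := by
  have hsub : Metric.ball (p + Pi.single l (s/2)) (s/2) ⊆ Dd l p s := by
    intro x hx
    rw [mem_ball_iff_norm] at hx
    constructor
    · have := (norm_le_pi_norm (x - (p + Pi.single l (s/2))) l).trans_lt hx
      simp only [Pi.sub_apply, Pi.add_apply, hp, Pi.single_eq_same, Real.norm_eq_abs, abs_lt] at this
      show 0 ≤ x l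
      linarith [this.1]
    · rw [mem_closedBall_iff_norm]
      have e : x - p = (x - (p + Pi.single l (s/2))) + Pi.single l (s/2) := by abel
      rw [e]
      refine (norm_add_le _ _).trans ?_
      have : ‖(Pi.single l (s/2) : Fin n → ℝ)‖ ≤ s/2 := by
        rw [pi_norm_le_iff_of_nonneg (by positivity)]
        intro i
        by_cases hi : i = l
        · subst hi; simp [abs_of_pos hs]
        · simp [Pi.single_apply, hi]; positivity
      linarith
  exact (Metric.isOpen_ball.measure_pos volume ⟨_, Metric.mem_ball_self (by positivity)⟩).trans_le (measure_mono hsub)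

lemma Good_bdry {C1 : ℝ} (hC1 : 0 ≤ C1) {p : Fin n → ℝ} (hp : p l = 0) (hp1 : 1 < ∑ a, p a ^ 2) (hp2 : ∑ a, p a ^ 2 < 4)
    (σ : Fin n → Fin n → ℝ) (h1 : ∀ a, σ a l = 0) (h2 : ∀ a, σ l a = 0) (h3 : ∑ a, σ a a = 0) :
    Good l S C1 (fun k => ∑ a, ∑ b, σ a b * eval p (pderiv l (poly k a b))) := by
  intro δ hδ
  obtain ⟨B, hB0, hB⟩ := Ph_bounds (S := S) (l := l) C1 hC1
  obtain ⟨W, hW⟩ : ∃ W, W = ∑ a, ∑ b, |σ a b| := ⟨_, rfl⟩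
  have hW0 : 0 ≤ W := by rw [hW]; exact Finset.sum_nonneg fun _ _ => Finset.sum_nonneg fun _ _ => abs_nonneg _
  have hop : IsOpen {x : Fin n → ℝ | 1 < ∑ a, x a ^ 2 ∧ ∑ a, x a ^ 2 < 4} :=
    (isOpen_lt continuous_const cont_sq).inter (isOpen_lt cont_sq continuous_const)
  obtain ⟨s0, hs0, hsb⟩ := Metric.isOpen_iff.1 hop p ⟨hp1, hp2⟩
  obtain ⟨L, hL⟩ : ∃ L, L = W * (n * B) := ⟨_, rfl⟩
  have hL0 : 0 ≤ L := by rw [hL]; positivity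
  obtain ⟨s, hsp, hs1, hs2⟩ : ∃ s : ℝ, 0 < s ∧ s < s0 ∧ L * s ≤ δ / 2 := by
    refine ⟨min (s0/2) (δ / 2 / (L + 1)), by positivity, ?_, ?_⟩
    · exact (min_le_left _ _).trans_lt (by linarith)
    · refine (mul_le_mul_of_nonneg_left (min_le_right _ _) hL0).trans ?_
      rw [← mul_div_assoc, div_le_iff₀ (by positivity)]
      nlinarith
  have hDH : Dd l p s ⊆ HA l := by
    intro x hx
    have := hsb (Metric.closedBall_subset_ball hs1 hx.2)
    exact ⟨hx.1, this.1.le, this.2⟩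
  have hpD : p ∈ Dd l p s := ⟨hp.ge, Metric.mem_closedBall_self hsp.le⟩
  have hDf : volume (Dd l p s) ≠ ⊤ := ((measure_mono hDH).trans_lt HA_fin.lt_top).ne
  obtain ⟨v, hv⟩ : ∃ v, v = volume.real (Dd l p s) := ⟨_, rfl⟩
  have hv0 : 0 < v := by rw [hv, Measure.real]; exact ENNReal.toReal_pos (Dd_pos hp hsp).ne' hDf
  refine ⟨W ^ 2 / (2 * δ) / v, by positivity, fun ε k V hk => ?_⟩
  obtain ⟨g, hg⟩ : ∃ g : (Fin n → ℝ) → ℝ, g = fun x => ∑ a, ∑ b, σ a b * Ph l ε (Tf (poly k) V) a b l x := ⟨_, rfl⟩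
  obtain ⟨f, hf⟩ : ∃ f : ℝ, f = ∑ a, ∑ b, σ a b * eval p (pderiv l (poly k a b)) := ⟨_, rfl⟩
  obtain ⟨q, hq⟩ : ∃ q : (Fin n → ℝ) → ℝ, q = fun x => ∑ a, ∑ b, ∑ c, Ph l ε (Tf (poly k) V) a b c x ^ 2 := ⟨_, rfl⟩
  have hqc : Continuous q := hq ▸ cont_sumP hk.sm ε k
  beta_reduce
  rw [← hf]
  have hN := Nn_nonneg k
  have hgp : g p = Nf l ε p * f := by
    have e : ∀ a b, σ a b * Ph l ε (Tf (poly k) V) a b l p =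
        Nf l ε p * (σ a b * eval p (pderiv l (poly k a b))) + (Nf l ε p * pd l (sg V) p) * (σ a b * dl a b) := by
      intro a b
      by_cases ha : a = l
      · subst ha; simp [h2]
      · by_cases hb : b = l
        · subst hb; simp [h1]
        · rw [Ph_bd hk hp ha hb]; ring
    rw [hg, hf]
    simp only [e, Finset.sum_add_distrib, ← Finset.mul_sum]
    simp [dl, h3]
  have hfg : |f| ≤ |g p| := by
    rw [hgp, abs_mul]
    have h1 := (HA_N hk.e0 hk.e1 (hDH hpD)).1
    have := le_abs_self (Nf l ε p)
    nlinarith [abs_nonneg f]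
  have hSm : ∀ a b, Sm (Ph l ε (Tf (poly k) V) a b l) := fun a b => Sm_PhT hk.sm ε k a b l
  have hlip : ∀ x ∈ Dd l p s, |g p - g x| ≤ L * s * Nn k := by
    intro x hx
    have e1 : ∀ a b, |Ph l ε (Tf (poly k) V) a b l p - Ph l ε (Tf (poly k) V) a b l x| ≤ n * (B * Nn k) * s := by
      intro a b
      have := (Dd_convex (l := l) p s).norm_image_sub_le_of_norm_fderiv_le (𝕜 := ℝ)
        (f := Ph l ε (Tf (poly k) V) a b l) (C := n * (B * Nn k))
        (fun y _ => (hSm a b).da y) (fun y hy => ?_) hx hpD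
      · refine this.trans (mul_le_mul_of_nonneg_left ?_ (by positivity))
        have := hx.2
        rwa [mem_closedBall_iff_norm, norm_sub_rev] at this
      · refine (fderiv_norm_le _ _).trans ((Finset.sum_le_sum fun e _ => hB ε k V hk y (hDH hy) a b l e).trans ?_)
        simp
    have e2 : g p - g x = ∑ a, ∑ b, σ a b * (Ph l ε (Tf (poly k) V) a b l p - Ph l ε (Tf (poly k) V) a b l x) := by
      rw [hg]; simp only [mul_sub, Finset.sum_sub_distrib]
    rw [e2]
    have e3 : L * s * Nn k = ∑ a, ∑ b, |σ a b| * (n * (B * Nn k) * s) := by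
      simp only [← Finset.sum_mul, ← hW]; rw [hL]; ring
    rw [e3]
    exact (Finset.abs_sum_le_sum_abs _ _).trans (Finset.sum_le_sum fun a _ =>
      (Finset.abs_sum_le_sum_abs _ _).trans (Finset.sum_le_sum fun b _ => mul_b le_rfl (e1 a b)))
  have hgq : ∀ x, g x ^ 2 ≤ W ^ 2 * q x := by
    intro x
    have hle : ∀ a b, |Ph l ε (Tf (poly k) V) a b l x| ≤ Real.sqrt (q x) := by
      intro a b
      apply Real.abs_le_sqrt
      rw [hq]
      have t1 : Ph l ε (Tf (poly k) V) a b l x ^ 2 ≤ ∑ c, Ph l ε (Tf (poly k) V) a b c x ^ 2 :=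
        Finset.single_le_sum (f := fun c => Ph l ε (Tf (poly k) V) a b c x ^ 2) (fun _ _ => sq_nonneg _) (Finset.mem_univ l)
      have t2 : ∑ c, Ph l ε (Tf (poly k) V) a b c x ^ 2 ≤ ∑ b, ∑ c, Ph l ε (Tf (poly k) V) a b c x ^ 2 :=
        Finset.single_le_sum (f := fun b => ∑ c, Ph l ε (Tf (poly k) V) a b c x ^ 2)
          (fun _ _ => Finset.sum_nonneg fun _ _ => sq_nonneg _) (Finset.mem_univ b)
      have t3 : ∑ b, ∑ c, Ph l ε (Tf (poly k) V) a b c x ^ 2 ≤ ∑ a, ∑ b, ∑ c, Ph l ε (Tf (poly k) V) a b c x ^ 2 :=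
        Finset.single_le_sum (f := fun a => ∑ b, ∑ c, Ph l ε (Tf (poly k) V) a b c x ^ 2)
          (fun _ _ => Finset.sum_nonneg fun _ _ => Finset.sum_nonneg fun _ _ => sq_nonneg _) (Finset.mem_univ a)
      exact t1.trans (t2.trans t3)
    have hq0 : 0 ≤ q x := by
      rw [hq]; exact Finset.sum_nonneg fun _ _ => Finset.sum_nonneg fun _ _ => Finset.sum_nonneg fun _ _ => sq_nonneg _
    have : |g x| ≤ W * Real.sqrt (q x) := by
      rw [hg, hW]
      simp only [Finset.sum_mul]
      exact (Finset.abs_sum_le_sum_abs _ _).trans (Finset.sum_le_sum fun a _ =>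
        (Finset.abs_sum_le_sum_abs _ _).trans (Finset.sum_le_sum fun b _ => mul_b le_rfl (hle a b)))
    rw [← sq_abs]
    calc |g x| ^ 2 ≤ (W * Real.sqrt (q x)) ^ 2 := by gcongr
      _ = W ^ 2 * q x := by rw [mul_pow, Real.sq_sqrt hq0]
  have hpt : ∀ x ∈ Dd l p s, Nn k * |f| - δ * Nn k ^ 2 ≤ W ^ 2 / (2 * δ) * q x := by
    intro x hx
    have a1 : |f| ≤ |g x| + L * s * Nn k := by
      have := hlip x hx
      have h4 : |g p| ≤ |g p - g x| + |g x| := by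
        have := abs_add_le (g p - g x) (g x); simpa using this
      linarith
    have a2 : Nn k * |f| ≤ Nn k * |g x| + δ / 2 * Nn k ^ 2 := by
      have := mul_le_mul_of_nonneg_left a1 hN
      have := mul_le_mul_of_nonneg_right hs2 (sq_nonneg (Nn k))
      nlinarith
    have a3 : Nn k * |g x| ≤ δ / 2 * Nn k ^ 2 + |g x| ^ 2 / (2 * δ) := by
      rw [← sub_nonneg]
      have : δ / 2 * Nn k ^ 2 + |g x| ^ 2 / (2 * δ) - Nn k * |g x| = (δ * Nn k - |g x|) ^ 2 / (2 * δ) := by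
        field_simp; ring
      rw [this]; positivity
    have a4 : |g x| ^ 2 / (2 * δ) ≤ W ^ 2 / (2 * δ) * q x := by
      rw [sq_abs, div_mul_eq_mul_div]
      exact div_le_div_of_nonneg_right (hgq x) (by positivity)
    linarith
  have hqi : IntegrableOn q (HA l) := HA_intg hqc
  have hint := setIntegral_mono_on (μ := volume) (s := Dd l p s) (f := fun _ => Nn k * |f| - δ * Nn k ^ 2)
    (g := fun x => W ^ 2 / (2 * δ) * q x) (integrableOn_const hDf) ((hqi.mono_set hDH).const_mul _) (Dd_meas p s) hpt
  rw [setIntegral_const, smul_eq_mul, ← hv, integral_const_mul] at hint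
  have hmono : ∫ x in Dd l p s, q x ≤ JJ l ε k V := by
    have : JJ l ε k V = ∫ x in HA l, q x := by rw [hq]; rfl
    rw [this]
    refine setIntegral_mono_set hqi (Filter.Eventually.of_forall fun x => ?_) hDH.eventuallyLE
    rw [hq]; exact Finset.sum_nonneg fun _ _ => Finset.sum_nonneg fun _ _ => Finset.sum_nonneg fun _ _ => sq_nonneg _
  have hfin : v * (Nn k * |f| - δ * Nn k ^ 2) ≤ W ^ 2 / (2 * δ) * JJ l ε k V :=
    hint.trans (mul_le_mul_of_nonneg_left hmono (by positivity))
  rw [div_mul_eq_mul_div, ← sub_le_iff_le_add', le_div_iff₀ hv0]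
  linarith

noncomputable def BdF (l : Fin n) (p : Fin n → ℝ) (σ : Fin n → Fin n → ℝ) : Module.Dual ℝ (KK n S) where
  toFun k := ∑ a, ∑ b, σ a b * eval p (pderiv l (poly k a b))
  map_add' := by
    intro k k'
    simp only [poly_add, map_add, mul_add, Finset.sum_add_distrib]
  map_smul' := by
    intro t k
    simp only [poly_smul, Derivation.map_smul, smul_eval, RingHom.id_apply, smul_eq_mul, Finset.mul_sum]
    exact Finset.sum_congr rfl fun a _ => Finset.sum_congr rfl fun b _ => by ring
end
end B5

namespace B5
open MvPolynomial

def Sch {n : ℕ} {R : Type*} [CommRing R] (c1 c2 : R) (X : Fin n → Fin n → Fin n → Fin n → R) (a c : Fin n) : R :=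
  c1 * (∑ b, X a b c b - c2 * (∑ e, ∑ b, X e b e b) * (if a = c then 1 else 0))

lemma Sch_KN {n : ℕ} (c1 c2 : ℝ) (h1 : c1 * ((n:ℝ) - 2) = 1) (h2 : c2 * (2 * n - 2) = 1)
    (M : Fin n → Fin n → ℝ) (a c : Fin n) : Sch c1 c2 (KN M) a c = M a c := by
  unfold Sch
  rw [KN_contr]
  have : ∑ e, ∑ b, KN M e b e b = (2 * n - 2) * ∑ b, M b b := by
    simp only [KN_contr, if_true, mul_one, Finset.sum_add_distrib, ← Finset.mul_sum]
    simp; ring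
  rw [this]
  split_ifs
  · linear_combination M a c * h1 - c1 * (∑ b, M b b) * h2
  · linear_combination M a c * h1

noncomputable def WyL {n : ℕ} (c1 c2 : ℝ) (i j k l : Fin n) : (Fin n → Fin n → Fin n → Fin n → ℝ) →ₗ[ℝ] ℝ where
  toFun X := X i j k l - KN (Sch c1 c2 X) i j k l
  map_add' X X' := by
    simp only [KN, Sch, Pi.add_apply, Finset.sum_add_distrib]; ring
  map_smul' t X := by
    simp only [KN, Sch, Pi.smul_apply, smul_eq_mul, ← Finset.mul_sum, RingHom.id_apply]; ring

lemma lin_om {n : ℕ} (L : (Fin n → Fin n → Fin n → Fin n → ℝ) →ₗ[ℝ] ℝ) : ∃ ω, ∀ X, L X = om ω X := by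
  refine ⟨fun a b c d => L (Pi.single a (Pi.single b (Pi.single c (Pi.single d 1)))), fun X => ?_⟩
  have e : X = ∑ a, ∑ b, ∑ c, ∑ d, X a b c d • (Pi.single a (Pi.single b (Pi.single c (Pi.single d (1:ℝ)))) :
      Fin n → Fin n → Fin n → Fin n → ℝ) := by
    ext p q r s
    simp only [Finset.sum_apply, Pi.smul_apply, smul_eq_mul]
    rw [Finset.sum_eq_single p, Finset.sum_eq_single q, Finset.sum_eq_single r, Finset.sum_eq_single s]
    · simp
    all_goals simp +contextual [Pi.single_apply, eq_comm]
    all_goals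
      intros
      first
      | (rw [if_neg (by tauto)]; simp)
      | tauto
  conv_lhs => rw [e]
  simp only [map_sum, map_smul, smul_eq_mul, om]
  exact Finset.sum_congr rfl fun a _ => Finset.sum_congr rfl fun b _ => Finset.sum_congr rfl fun c _ =>
    Finset.sum_congr rfl fun d _ => mul_comm _ _

lemma poly_zero {N : ℕ} (p : MvPolynomial (Fin N) ℝ) {U : Set (Fin N → ℝ)} (hU : IsOpen U) (hne : U.Nonempty)
    (h : ∀ x ∈ U, eval x p = 0) : p = 0 := by
  obtain ⟨y, hy⟩ := hne
  obtain ⟨s, hs, hb⟩ := Metric.isOpen_iff.1 hU y hy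
  refine funext_set (fun i => Set.Ioo (y i - s) (y i + s)) (fun i => Set.Ioo_infinite (by linarith)) fun x hx => ?_
  rw [map_zero]
  apply h x (hb _)
  rw [mem_ball_iff_norm, pi_norm_lt_iff hs]
  intro i
  have := hx i (Set.mem_univ i)
  rw [Pi.sub_apply, Real.norm_eq_abs, abs_lt]
  constructor <;> linarith [this.1, this.2]

section
variable {n : ℕ} {l : Fin n} {S : Finset (Fin n →₀ ℕ)}

lemma Oo_ne : (Oo l).Nonempty := by
  refine ⟨Pi.single l (3/2), ?_, ?_, ?_⟩
  · simp
  all_goals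
    have : ∑ a, (Pi.single l (3/2) : Fin n → ℝ) a ^ 2 = 9/4 := by
      rw [Finset.sum_eq_single l]
      · simp; norm_num
      · intro b _ hb; simp [hb]
      · simp
    rw [this]; norm_num

lemma coeff_poly (k : KK n S) (a b : Fin n) (s : S) : coeff s.1 (poly k a b) = k a b s := by
  simp only [poly, coeff_sum, coeff_monomial]
  rw [Finset.sum_eq_single s]
  · simp
  · intro t _ ht; rw [if_neg]; exact fun h => ht (Subtype.ext h)
  · simp

lemma poly_inj {k : KK n S} (h : ∀ a b, poly k a b = 0) : k = 0 := by
  ext a b s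
  rw [← coeff_poly k a b s, h]; simp

def GG (l : Fin n) (S : Finset (Fin n →₀ ℕ)) (C1 : ℝ) : Submodule ℝ (Module.Dual ℝ (KK n S)) where
  carrier := {f | Good l S C1 f}
  add_mem' := fun hf hg => hf.add hg
  zero_mem' := Good_zero fun _ _ => rfl
  smul_mem' := fun t f hf => hf.smul t

lemma Good.sum {ι : Type*} (s : Finset ι) {C1 : ℝ} {f : ι → KK n S → ℝ} (hf : ∀ i, Good l S C1 (f i)) :
    Good l S C1 (fun k => ∑ i ∈ s, f i k) := by
  classical
  induction s using Finset.induction_on with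
  | empty => simp only [Finset.sum_empty]; exact Good_zero fun _ _ => rfl
  | insert i s hi ih => simp only [Finset.sum_insert hi]; exact (hf i).add ih

lemma Good.abs {C1 : ℝ} {f : KK n S → ℝ} (hf : Good l S C1 f) : Good l S C1 (fun k => |f k|) := by
  intro δ hδ
  simpa only [abs_abs] using hf δ hδ
end

section
variable {m : ℕ} {S : Finset (Fin (m+1) →₀ ℕ)}

lemma kernel_trivial (hm : 3 ≤ m) {C1 : ℝ} (hC1 : 0 ≤ C1) (k : KK (m+1) S)
    (hk : ∀ f ∈ GG (Fin.last m) S C1, f k = 0) : k = 0 := by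
  have hW : k ∈ WW (Fin.last m) S := by
    rw [← Subspace.dualAnnihilator_dualCoannihilator_eq (W := WW (Fin.last m) S), Submodule.mem_dualCoannihilator]
    intro f hf
    refine hk f (Good_zero fun k' hk' => ?_)
    rw [Submodule.mem_dualAnnihilator] at hf
    exact hf k' hk'
  have hW : Wp (Fin.last m) k := hW
  obtain ⟨H, hH⟩ : ∃ H, H = poly k := ⟨_, rfl⟩
  obtain ⟨c1, hc1⟩ : ∃ c1 : ℝ, c1 * (((m+1 : ℕ) : ℝ) - 2) = 1 := by
    refine ⟨(((m+1 : ℕ) : ℝ) - 2)⁻¹, inv_mul_cancel₀ ?_⟩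
    have : (3:ℝ) ≤ m := by exact_mod_cast hm
    push_cast; linarith
  obtain ⟨c2, hc2⟩ : ∃ c2 : ℝ, c2 * (2 * ((m+1 : ℕ) : ℝ) - 2) = 1 := by
    refine ⟨(2 * ((m+1 : ℕ) : ℝ) - 2)⁻¹, inv_mul_cancel₀ ?_⟩
    have : (3:ℝ) ≤ m := by exact_mod_cast hm
    push_cast; linarith
  -- interior
  have hint : ∀ a b c d, Rp H a b c d = KN (Sch (C c1) (C c2) (Rp H)) a b c d := by
    intro a b c d
    rw [← sub_eq_zero]
    apply poly_zero _ (Oo_open (l := Fin.last m)) Oo_ne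
    obtain ⟨ω, hω⟩ := lin_om (WyL c1 c2 a b c d)
    have hkill : ∀ M : Fin (m+1) → Fin (m+1) → ℝ, (∀ a b, M a b = M b a) → om ω (KN M) = 0 := by
      intro M _
      rw [← hω]
      show KN M a b c d - KN (Sch c1 c2 (KN M)) a b c d = 0
      have : Sch c1 c2 (KN M) = M := by ext p q; exact Sch_KN c1 c2 hc1 hc2 M p q
      rw [this, sub_self]
    have hev : ∀ x, eval x (Rp H a b c d - KN (Sch (C c1) (C c2) (Rp H)) a b c d)
        = om ω (fun a b c d => eval x (Rp H a b c d)) := by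
      intro x
      rw [← hω]
      show _ = eval x (Rp H a b c d) - KN (Sch c1 c2 (fun a b c d => eval x (Rp H a b c d))) a b c d
      simp only [KN, Sch, map_sub, map_add, map_mul, map_sum, eval_C, apply_ite (eval x), map_one, map_zero]
    have hcont : Continuous fun x => om ω (fun a b c d => eval x (Rp H a b c d)) :=
      cont_om fun a b c d => (Sm_eval _).continuous
    have hae := Oo_open (l := Fin.last m) |>.ae_eq_zero_of_integral_contDiff_smul_eq_zero (μ := volume)
      (f := fun x => om ω (fun a b c d => eval x (Rp H a b c d)))
      (hcont.locallyIntegrable.locallyIntegrableOn _) (fun φ hφ hc hs => by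
        have := hk (IntF φ hφ hc ω) (Good_interior hφ hc hs ω hkill)
        rw [hH]
        exact this)
    have heq := Measure.eqOn_open_of_ae_eq (μ := (volume : Measure (Fin (m+1) → ℝ))) (U := Oo (Fin.last m))
      (f := fun x => om ω (fun a b c d => eval x (Rp H a b c d))) (g := fun _ => 0)
      ((ae_restrict_iff' Oo_open.measurableSet).2 hae) Oo_open hcont.continuousOn continuousOn_const
    intro x hx
    rw [hev]
    exact heq hx
  -- boundary
  have hopn : IsOpen {x : Fin m → ℝ | 1 < ∑ a, x a ^ 2 ∧ ∑ a, x a ^ 2 < 4} :=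
    (isOpen_lt continuous_const cont_sq).inter (isOpen_lt cont_sq continuous_const)
  have hne : {x : Fin m → ℝ | 1 < ∑ a, x a ^ 2 ∧ ∑ a, x a ^ 2 < 4}.Nonempty := by
    obtain ⟨x, hx⟩ := Oo_ne (l := (⟨0, by omega⟩ : Fin m))
    exact ⟨x, hx.2⟩
  have hbd : ∀ σ : Fin (m+1) → Fin (m+1) → ℝ, (∀ a, σ a (Fin.last m) = 0) → (∀ a, σ (Fin.last m) a = 0) →
      (∑ a, σ a a = 0) → ∑ a, ∑ b, C (σ a b) * rest m (pderiv (Fin.last m) (H a b)) = 0 := by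
    intro σ h1 h2 h3
    apply poly_zero _ hopn hne
    intro x hx
    have e : ∑ a : Fin (m+1), (Fin.snoc (α := fun _ => ℝ) x 0 : Fin (m+1) → ℝ) a ^ 2 = ∑ a, x a ^ 2 := by
      rw [Fin.sum_univ_castSucc]; simp
    have := hk (BdF (Fin.last m) (Fin.snoc (α := fun _ => ℝ) x 0) σ)
      (Good_bdry hC1 (by simp) (by rw [e]; exact hx.1) (by rw [e]; exact hx.2) σ h1 h2 h3)
    simp only [map_sum, map_mul, eval_C, rest_eval]
    rw [hH]
    exact this
  have hl0 : ∀ a, H a (Fin.last m) = 0 := fun a => by rw [hH]; exact hW.last a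
  have hsym : ∀ a b, H a b = H b a := fun a b => by rw [hH]; exact hW.sym a b
  have htr : ∑ a, H a a = 0 := by rw [hH]; exact hW.tr
  have hoff : ∀ i j, i ≠ Fin.last m → j ≠ Fin.last m → i ≠ j → rest m (pderiv (Fin.last m) (H i j)) = 0 := by
    intro i j hi hj hij
    have := hbd (fun a b => dl i a * dl j b) (fun a => by simp [dl, hj]) (fun a => by simp [dl, hi])
      (by simp [dl, hij])
    simpa [dl, map_mul, apply_ite C, ite_mul, mul_ite] using this
  have hdiag : ∀ i j, i ≠ Fin.last m → j ≠ Fin.last m → rest m (pderiv (Fin.last m) (H i i))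
      = rest m (pderiv (Fin.last m) (H j j)) := by
    intro i j hi hj
    have := hbd (fun a b => dl i a * dl i b - dl j a * dl j b) (fun a => by simp [dl, hi, hj])
      (fun a => by simp [dl, hi, hj]) (by simp [dl])
    rw [← sub_eq_zero]
    simpa [dl, map_mul, map_sub, sub_mul, apply_ite C, ite_mul, mul_ite, Finset.sum_sub_distrib] using this
  have hd0 : ∀ i, i ≠ Fin.last m → rest m (pderiv (Fin.last m) (H i i)) = 0 := by
    intro i hi
    have h1 : ∑ a, rest m (pderiv (Fin.last m) (H a a)) = 0 := by
      rw [← map_sum, ← map_sum, htr]; simp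
    rw [Fin.sum_univ_castSucc, hl0, map_zero, map_zero, add_zero,
      Finset.sum_congr rfl fun j _ => hdiag j.castSucc i (Fin.castSucc_lt_last j).ne hi] at h1
    simp only [Finset.sum_const, Finset.card_univ, Fintype.card_fin, nsmul_eq_mul, mul_eq_zero] at h1
    rcases h1 with h1 | h1
    · exfalso
      have : (m : MvPolynomial (Fin m) ℝ) ≠ 0 := by exact_mod_cast (by omega : m ≠ 0)
      exact this h1
    · exact h1
  have hn : ∀ i j, rest m (pderiv (Fin.last m) (H i j)) = 0 := by
    intro i j
    by_cases hj : j = Fin.last m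
    · rw [hj, hl0]; simp
    by_cases hi : i = Fin.last m
    · rw [hi, hsym, hl0]; simp
    by_cases hij : i = j
    · subst hij; exact hd0 i hi
    · exact hoff i j hi hj hij
  have hx : ∀ i : Fin m, ∑ j : Fin m, X j * rest m (H i.castSucc j.castSucc) = 0 := by
    intro i
    apply MvPolynomial.funext
    intro x
    have := hW.rad i.castSucc (Fin.snoc (α := fun _ => ℝ) x 0) (by simp)
    rw [← hH, Fin.sum_univ_castSucc] at this
    simpa [rest_eval] using this
  have hM : ∀ a b, Sch (C c1) (C c2) (Rp H) a b = Sch (C c1) (C c2) (Rp H) b a := by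
    intro a c
    have e : ∑ b, Rp H a b c b = ∑ b, Rp H c b a b := by
      refine Finset.sum_congr rfl fun b _ => ?_
      unfold Rp
      rw [hsym c a, hsym c b, hsym a b, pderiv_comm' b c, pderiv_comm' b a, pderiv_comm' a c]
      ring
    unfold Sch
    rw [e]
    simp only [eq_comm]
  exact poly_inj (hH ▸ ambient_zero hm H _ hsym htr hl0 hx hM hint hn)

theorem core (hm : 3 ≤ m) {C1 : ℝ} (hC1 : 0 ≤ C1) : ∃ K : ℝ, 0 ≤ K ∧ ∀ ε (k : KK (m+1) S) V,
    Adm (Fin.last m) C1 ε k V → Nn k ^ 2 ≤ K * JJ (Fin.last m) ε k V := by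
  have h1 : (GG (Fin.last m) S C1).dualCoannihilator = ⊥ := by
    rw [eq_bot_iff]
    intro k hk
    rw [Submodule.mem_dualCoannihilator] at hk
    exact kernel_trivial hm hC1 k hk
  have h2 : GG (Fin.last m) S C1 = ⊤ := by
    rw [← Subspace.dualCoannihilator_dualAnnihilator_eq (W := GG (Fin.last m) S C1), h1]
    exact Submodule.dualAnnihilator_bot
  have h3 : ∀ a b (s : S), Good (Fin.last m) S C1 (fun k => |k a b s|) := by
    intro a b s
    have : (⟨⟨fun k => k a b s, fun _ _ => rfl⟩, fun _ _ => rfl⟩ : Module.Dual ℝ (KK (m+1) S)) ∈ GG (Fin.last m) S C1 := by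
      rw [h2]; trivial
    exact Good.abs this
  have h4 : Good (Fin.last m) S C1 Nn :=
    Good.sum _ fun a => Good.sum _ fun b => Good.sum _ fun s => h3 a b s
  obtain ⟨K, hK0, hK⟩ := h4 (1/2) (by norm_num)
  refine ⟨2 * K, by positivity, fun ε k V h => ?_⟩
  have := hK ε k V h
  rw [abs_of_nonneg (Nn_nonneg k)] at this
  nlinarith
end
end B5

namespace B5
open MvPolynomial

section
variable {n : ℕ} {l : Fin n}

noncomputable def sc (r : ℝ) : MvPolynomial (Fin n) ℝ →ₐ[ℝ] MvPolynomial (Fin n) ℝ := aeval fun i => C r * X i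

lemma sc_eval (r : ℝ) (x : Fin n → ℝ) (p : MvPolynomial (Fin n) ℝ) : eval x (sc r p) = eval (r • x) p := by
  induction p using MvPolynomial.induction_on with
  | C a => simp [sc]
  | add p q hp hq => simp [hp, hq]
  | mul_X p j hp => rw [map_mul, map_mul, map_mul, hp]; simp [sc]

lemma sc_pderiv (r : ℝ) (c : Fin n) (p : MvPolynomial (Fin n) ℝ) : pderiv c (sc r p) = C r * sc r (pderiv c p) := by
  induction p using MvPolynomial.induction_on with
  | C a => simp [sc]
  | add p q hp hq => simp only [map_add, hp, hq, mul_add]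
  | mul_X p j hp =>
    have hX : sc r (X j : MvPolynomial (Fin n) ℝ) = C r * X j := by simp [sc]
    rw [map_mul, Derivation.leibniz, Derivation.leibniz, hp, hX, Derivation.leibniz, pderiv_C, pderiv_X]
    simp only [smul_eq_mul, map_add, map_mul, hX, Pi.single_apply]
    split_ifs <;> simp <;> ring

def dg (s : Fin n →₀ ℕ) : ℕ := s.sum fun _ e => e

lemma sc_monomial (r : ℝ) (s : Fin n →₀ ℕ) (a : ℝ) : sc r (monomial s a) = monomial s (r ^ dg s * a) := by
  rw [sc, aeval_monomial, monomial_eq (s := s) (a := r ^ dg s * a)]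
  simp only [mul_pow, dg, Finsupp.prod_mul, map_mul, algebraMap_eq]
  have : (s.prod fun i k => (C r : MvPolynomial (Fin n) ℝ) ^ k) = C (r ^ s.sum fun _ e => e) := by
    rw [Finsupp.prod, Finset.prod_pow_eq_pow_sum, map_pow]; rfl
  rw [this]; ring

noncomputable def SS (n D : ℕ) : Finset (Fin n →₀ ℕ) := Finset.Icc 0 (Finsupp.equivFunOnFinite.symm fun _ => D)

lemma mem_SS {D : ℕ} {s : Fin n →₀ ℕ} (h : dg s ≤ D) : s ∈ SS n D := by
  rw [SS, Finset.mem_Icc]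
  refine ⟨bot_le, fun i => ?_⟩
  simp only [Finsupp.equivFunOnFinite_symm_apply_apply]
  by_cases hi : i ∈ s.support
  · exact (Finset.single_le_sum (f := s) (fun _ _ => Nat.zero_le _) hi).trans h
  · simp [Finsupp.notMem_support_iff.1 hi]

noncomputable def kr (D : ℕ) (r : ℝ) (H : Fin n → Fin n → MvPolynomial (Fin n) ℝ) : KK n (SS n D) :=
  fun a b s => r ^ dg s.1 * coeff s.1 (H a b)

lemma poly_kr {D : ℕ} {r : ℝ} {H : Fin n → Fin n → MvPolynomial (Fin n) ℝ}
    (hd : ∀ a b, ∀ s ∈ (H a b).support, dg s ≤ D) (a b : Fin n) : poly (kr D r H) a b = sc r (H a b) := by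
  have e : H a b = ∑ s ∈ SS n D, monomial s (coeff s (H a b)) := by
    conv_lhs => rw [(H a b).as_sum]
    refine Finset.sum_subset (fun s hs => mem_SS (hd a b s hs)) fun s _ hs => ?_
    rw [notMem_support_iff.1 hs, monomial_zero]
  conv_rhs => rw [e]
  simp only [map_sum, sc_monomial, poly, kr]
  exact Finset.sum_coe_sort (SS n D) (fun s => monomial s (r ^ dg s * coeff s (H a b)))

lemma sum_le_Nn {D : ℕ} {r : ℝ} {H : Fin n → Fin n → MvPolynomial (Fin n) ℝ}
    (hr : 0 < r) (hd : ∀ a b, ∀ s ∈ (H a b).support, dg s ≤ D) :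
    ∑ a, ∑ b, ∑ s ∈ (H a b).support, r ^ dg s * |coeff s (H a b)| ≤ Nn (kr D r H) := by
  refine Finset.sum_le_sum fun a _ => Finset.sum_le_sum fun b _ => ?_
  have e : ∑ s : SS n D, |kr D r H a b s| = ∑ s ∈ SS n D, r ^ dg s * |coeff s (H a b)| := by
    rw [← Finset.sum_coe_sort (SS n D) (fun s => r ^ dg s * |coeff s (H a b)|)]
    refine Finset.sum_congr rfl fun s _ => ?_
    rw [kr, abs_mul, abs_of_pos (pow_pos hr _)]
  rw [e]
  exact Finset.sum_le_sum_of_subset_of_nonneg (fun s hs => mem_SS (hd a b s hs)) fun s _ _ => by positivity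

lemma pd_scale {f : (Fin n → ℝ) → ℝ} (hf : Sm f) (r : ℝ) (c : Fin n) (x) :
    pd c (fun y => f (r • y)) x = r * pd c f (r • x) := by
  unfold pd
  have h1 : HasFDerivAt (fun y : Fin n → ℝ => r • y) (r • ContinuousLinearMap.id ℝ (Fin n → ℝ)) x :=
    (hasFDerivAt_id x).const_smul r
  have h2 := ((hf.da (r • x)).hasFDerivAt).comp x h1
  have h3 : fderiv ℝ (fun y => f (r • y)) x = _ := h2.fderiv
  rw [h3]; simp

lemma Sm_scale {f : (Fin n → ℝ) → ℝ} (hf : Sm f) (r : ℝ) : Sm (fun y => f (r • y)) :=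
  hf.comp (contDiff_const_smul r)

noncomputable def Vr (r : ℝ) (V : Fin n → (Fin n → ℝ) → ℝ) (a : Fin n) (x : Fin n → ℝ) : ℝ := r⁻¹ * V a (r • x)

variable {V : Fin n → (Fin n → ℝ) → ℝ} {r : ℝ}

lemma Sm_Vr (hV : ∀ a, Sm (V a)) (a) : Sm (Vr r V a) := contDiff_const.mul (Sm_scale (hV a) r)

lemma pd_Vr (hV : ∀ a, Sm (V a)) (hr : r ≠ 0) (a b : Fin n) : pd a (Vr r V b) = fun x => pd a (V b) (r • x) := by
  ext x
  show pd a (fun x => r⁻¹ * V b (r • x)) x = _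
  rw [pd_cmul a _ ((Sm_scale (hV b) r).da x), pd_scale (hV b)]
  field_simp

lemma pd2_Vr (hV : ∀ a, Sm (V a)) (hr : r ≠ 0) (a b c : Fin n) :
    pd c (pd a (Vr r V b)) = fun x => r * pd c (pd a (V b)) (r • x) := by
  rw [pd_Vr hV hr]; ext x
  rw [pd_scale ((hV b).pd a)]

lemma pd3_Vr (hV : ∀ a, Sm (V a)) (hr : r ≠ 0) (a b c d : Fin n) :
    pd d (pd c (pd a (Vr r V b))) = fun x => r ^ 2 * pd d (pd c (pd a (V b))) (r • x) := by
  rw [pd2_Vr hV hr]; ext x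
  have h := ((hV b).pd a).pd c
  rw [pd_cmul d _ ((Sm_scale h r).da x), pd_scale h]; ring

lemma Tf_scale {H H' : Fin n → Fin n → MvPolynomial (Fin n) ℝ} (hV : ∀ a, Sm (V a)) (hr : r ≠ 0)
    (hH : ∀ a b, H' a b = sc r (H a b)) (a b) : Tf H' (Vr r V) a b = fun x => Tf H V a b (r • x) := by
  ext x
  simp only [Tf, hH, sc_eval, sg, pd_Vr hV hr]

lemma Yf_scale (ε : ℝ) (hr : r ≠ 0) (a : Fin n) (x) : Yf l (ε / r) a x = r⁻¹ * Yf l ε a (r • x) := by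
  unfold Yf
  simp only [Pi.smul_apply, smul_eq_mul]
  split_ifs <;> field_simp <;> ring

lemma Nf_scale (ε : ℝ) (hr : r ≠ 0) (x : Fin n → ℝ) : Nf l (ε / r) x = (r⁻¹) ^ 2 * Nf l ε (r • x) := by
  simp only [Nf, Yf_scale ε hr, Finset.mul_sum]
  exact Finset.sum_congr rfl fun _ _ => by ring

lemma Ph_scale {H H' : Fin n → Fin n → MvPolynomial (Fin n) ℝ} (hV : ∀ a, Sm (V a)) (hr : r ≠ 0)
    (hH : ∀ a b, H' a b = sc r (H a b)) (ε : ℝ) (a b c) (x) :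
    Ph l (ε / r) (Tf H' (Vr r V)) a b c x = r⁻¹ * Ph l ε (Tf H V) a b c (r • x) := by
  have hT : Tf H' (Vr r V) = fun a b x => Tf H V a b (r • x) := by
    ext a b x; rw [Tf_scale hV hr hH]
  have hu : ∀ a, uf l (ε / r) (fun a b x => Tf H V a b (r • x)) a x = r⁻¹ * uf l ε (Tf H V) a (r • x) := by
    intro a
    simp only [uf, Yf_scale ε hr, Finset.mul_sum, mul_assoc]
  rw [hT]
  unfold Ph
  rw [hu, hu, Nf_scale ε hr, Yf_scale ε hr, Yf_scale ε hr, pd_scale (Sm_T hV a b)]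
  have : r⁻¹ * r = 1 := inv_mul_cancel₀ hr
  linear_combination (r⁻¹ * Nf l ε (r • x) * pd c (Tf H V a b) (r • x)) * this

/-- scaled annulus -/
def Ar (l : Fin n) (r : ℝ) : Set (Fin n → ℝ) :=
  {x | 0 ≤ x l ∧ r ≤ Real.sqrt (∑ a, x a ^ 2) ∧ Real.sqrt (∑ a, x a ^ 2) < 2 * r}

lemma sum_sq_smul (r : ℝ) (x : Fin n → ℝ) : ∑ a, (r • x) a ^ 2 = r ^ 2 * ∑ a, x a ^ 2 := by
  simp only [Pi.smul_apply, smul_eq_mul, mul_pow, Finset.mul_sum]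

lemma smul_mem_Ar (hr : 0 < r) (x : Fin n → ℝ) : r • x ∈ Ar l r ↔ x ∈ HA l := by
  have h0 : 0 ≤ ∑ a, x a ^ 2 := Finset.sum_nonneg fun _ _ => sq_nonneg _
  have e : Real.sqrt (∑ a, (r • x) a ^ 2) = r * Real.sqrt (∑ a, x a ^ 2) := by
    rw [sum_sq_smul, Real.sqrt_mul (sq_nonneg r), Real.sqrt_sq hr.le]
  simp only [Ar, HA, Set.mem_setOf_eq]
  rw [e]
  refine and_congr ?_ (and_congr ?_ ?_)
  · simp [hr]
  · rw [le_mul_iff_one_le_right hr, Real.one_le_sqrt]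
  · rw [mul_comm 2 r, mul_lt_mul_iff_right₀ hr, Real.sqrt_lt' (by norm_num)]; norm_num

open Pointwise in
lemma smul_HA (hr : 0 < r) : r • HA l = Ar l r := by
  ext x
  rw [Set.mem_smul_set_iff_inv_smul_mem₀ hr.ne', ← smul_mem_Ar hr, smul_inv_smul₀ hr.ne']

lemma JJ_scale {D : ℕ} {H : Fin n → Fin n → MvPolynomial (Fin n) ℝ} (hV : ∀ a, Sm (V a)) (hr : 0 < r)
    (hd : ∀ a b, ∀ s ∈ (H a b).support, dg s ≤ D) (ε : ℝ) :
    r ^ (n + 2) * JJ l (ε / r) (kr D r H) (Vr r V) = ∫ x in Ar l r, ∑ a, ∑ b, ∑ c, Ph l ε (Tf H V) a b c x ^ 2 := by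
  unfold JJ
  simp only [Ph_scale hV hr.ne' (poly_kr hd), mul_pow, ← Finset.mul_sum]
  rw [integral_const_mul]
  have := Measure.setIntegral_comp_smul_of_pos (volume : Measure (Fin n → ℝ))
    (fun x => ∑ a, ∑ b, ∑ c, Ph l ε (Tf H V) a b c x ^ 2) (HA l) hr
  rw [this, smul_HA hr]
  simp only [Module.finrank_fintype_fun_eq_card, Fintype.card_fin, smul_eq_mul]
  field_simp
  ring
end
end B5

namespace B5
open MvPolynomial

section
variable {n : ℕ}

lemma itd_succ {V : (Fin n → ℝ) → Fin n → ℝ} (hV : ContDiff ℝ (⊤ : ℕ∞) V) (k : ℕ) (dirs : Fin (k + 1) → Fin n) (b : Fin n) (x) :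
    (iteratedFDeriv ℝ (k + 1) V x (fun m => Pi.single (dirs m) 1)) b =
      pd (dirs 0) (fun y => (iteratedFDeriv ℝ k V y (fun m => Pi.single (dirs m.succ) 1)) b) x := by
  rw [iteratedFDeriv_succ_apply_left]
  have hd : DifferentiableAt ℝ (iteratedFDeriv ℝ k V) x :=
    (hV.differentiable_iteratedFDeriv (m := k) (by exact_mod_cast WithTop.coe_lt_top k)) x
  let L : (ContinuousMultilinearMap ℝ (fun _ : Fin k => (Fin n → ℝ)) (Fin n → ℝ)) →L[ℝ] ℝ :=
    (ContinuousLinearMap.proj (R := ℝ) (φ := fun _ : Fin n => ℝ) b).comp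
      (ContinuousMultilinearMap.apply ℝ (fun _ : Fin k => (Fin n → ℝ)) (Fin n → ℝ) (fun m => Pi.single (dirs m.succ) 1))
  have h := (L.hasFDerivAt.comp x hd.hasFDerivAt).fderiv
  have h' : fderiv ℝ (fun y => (iteratedFDeriv ℝ k V y (fun m => Pi.single (dirs m.succ) 1)) b) x =
    L.comp (fderiv ℝ (iteratedFDeriv ℝ k V) x) := h
  unfold pd
  rw [h']
  rfl

lemma itd1 {V : (Fin n → ℝ) → Fin n → ℝ} (hV : ContDiff ℝ (⊤ : ℕ∞) V) (dirs : Fin 1 → Fin n) (b x) :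
    (iteratedFDeriv ℝ 1 V x (fun m => Pi.single (dirs m) 1)) b = pd (dirs 0) (fun y => V y b) x := by
  rw [itd_succ hV]; simp only [iteratedFDeriv_zero_apply]

lemma itd2 {V : (Fin n → ℝ) → Fin n → ℝ} (hV : ContDiff ℝ (⊤ : ℕ∞) V) (dirs : Fin 2 → Fin n) (b x) :
    (iteratedFDeriv ℝ 2 V x (fun m => Pi.single (dirs m) 1)) b = pd (dirs 0) (pd (dirs 1) (fun y => V y b)) x := by
  rw [itd_succ hV]
  congr 1; ext y
  exact itd1 hV (fun m => dirs m.succ) b y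

lemma itd3 {V : (Fin n → ℝ) → Fin n → ℝ} (hV : ContDiff ℝ (⊤ : ℕ∞) V) (dirs : Fin 3 → Fin n) (b x) :
    (iteratedFDeriv ℝ 3 V x (fun m => Pi.single (dirs m) 1)) b = pd (dirs 0) (pd (dirs 1) (pd (dirs 2) (fun y => V y b))) x := by
  rw [itd_succ hV]
  congr 1; ext y
  exact itd2 hV (fun m => dirs m.succ) b y

/-- bound on t^e -/
lemma zp_bound {t r : ℝ} {D g k : ℕ} (hr : 0 < r) (h1 : r ≤ t) (h2 : t ≤ 3 * r) (hg : g ≤ D) :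
    t ^ ((g : ℤ) + 1 - (k : ℤ)) ≤ 3 ^ (D + 1) * r ^ g * (r * (r ^ k)⁻¹) := by
  have ht : 0 < t := hr.trans_le h1
  have e : t ^ ((g : ℤ) + 1 - (k : ℤ)) = t ^ (g + 1) * (t ^ k)⁻¹ := by
    rw [zpow_sub₀ ht.ne', div_eq_mul_inv]; norm_cast
  rw [e]
  have h3 : t ^ (g + 1) ≤ 3 ^ (D + 1) * (r ^ g * r) := by
    calc t ^ (g + 1) ≤ (3 * r) ^ (g + 1) := by gcongr
      _ = 3 ^ (g + 1) * (r ^ g * r) := by rw [mul_pow]; ring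
      _ ≤ _ := by gcongr; norm_num
  have h4 : (t ^ k)⁻¹ ≤ (r ^ k)⁻¹ := by gcongr
  calc _ ≤ (3 ^ (D + 1) * (r ^ g * r)) * (r ^ k)⁻¹ := by gcongr
    _ = _ := by ring

lemma rhs_bound {H : Fin n → Fin n → MvPolynomial (Fin n) ℝ} {D : ℕ} {r t : ℝ} (P : Fin n → Fin n → Prop) [∀ i j, Decidable (P i j)]
    (hr : 0 < r) (h1 : r ≤ t) (h2 : t ≤ 3 * r)
    (hd : ∀ a b, ∀ s ∈ (H a b).support, dg s ≤ D) (k : ℕ) :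
    (∑ i, ∑ j, if P i j then ∑ m ∈ (H i j).support, |coeff m (H i j)| * t ^ ((m.sum (fun _ e => e) : ℤ) + 1 - (k : ℤ)) else 0)
      ≤ 3 ^ (D + 1) * (r * (r ^ k)⁻¹) * Nn (kr D r H) := by
  have hh := sum_le_Nn hr hd
  have hc : 0 ≤ (3:ℝ) ^ (D + 1) * (r * (r ^ k)⁻¹) := by positivity
  refine le_trans ?_ (mul_le_mul_of_nonneg_left hh hc)
  simp only [Finset.mul_sum]
  refine Finset.sum_le_sum fun i _ => Finset.sum_le_sum fun j _ => ?_
  split_ifs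
  · refine Finset.sum_le_sum fun s hs => ?_
    have h3 := zp_bound (k := k) hr h1 h2 (hd i j s hs)
    have h4 : (((s.sum (fun _ e => e) : ℕ)) : ℤ) = (dg s : ℤ) := rfl
    have h5 : (s.sum (fun _ e => (e:ℤ)) : ℤ) = (dg s : ℤ) := by simp [dg, Finsupp.sum]
    first | rw [h4] | rw [h5] | skip
    refine (mul_le_mul_of_nonneg_left h3 (abs_nonneg (coeff s (H i j)))).trans (le_of_eq ?_)
    ring
  · exact Finset.sum_nonneg fun s _ => by positivity
end

section
variable {m : ℕ}
lemma adm_of {H : Fin (m+1) → Fin (m+1) → MvPolynomial (Fin (m+1)) ℝ} {D : ℕ} {r ε C₀ : ℝ} {V : (Fin (m+1) → ℝ) → Fin (m+1) → ℝ}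
    (hε : 0 < ε) (her : ε ≤ r) (hC : 0 ≤ C₀)
    (hd : ∀ a b, ∀ s ∈ (H a b).support, dg s ≤ D)
    (hsym : ∀ a b, H a b = H b a) (htr : (∑ a, H a a) = 0) (hl : ∀ a, H a (Fin.last m) = 0)
    (hrad : ∀ i : Fin (m+1), i ≠ Fin.last m → ∀ x : Fin (m+1) → ℝ, x (Fin.last m) = 0 → ∑ j, x j * eval x (H i j) = 0)
    (hV : ContDiff ℝ (⊤ : ℕ∞) V)
    (hb1 : ∀ x : Fin (m+1) → ℝ, x (Fin.last m) = 0 → V x (Fin.last m) = 0)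
    (hb2 : ∀ i, i ≠ Fin.last m → ∀ x : Fin (m+1) → ℝ, x (Fin.last m) = 0 → pd (Fin.last m) (fun w => V w i) x = 0)
    (h3 : ∀ k : ℕ, k ≤ 3 → ∀ dirs : Fin k → Fin (m+1), ∀ x : Fin (m+1) → ℝ, x ∈ Ar (Fin.last m) r →
       ‖iteratedFDeriv ℝ k V x (fun m => Pi.single (dirs m) 1)‖ ≤ C₀ * (3 ^ (D + 1) * (r * (r ^ k)⁻¹) * Nn (kr D r H))) :
    Adm (Fin.last m) (C₀ * 3 ^ (D + 1)) (ε / r) (kr D r H) (Vr r (fun a x => V x a)) := by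
  have hr : 0 < r := hε.trans_le her
  have sV : ∀ a, Sm (fun x => V x a) := fun a => contDiff_pi.1 hV a
  have key : ∀ k : ℕ, k ≤ 3 → ∀ dirs : Fin k → Fin (m+1), ∀ x ∈ HA (Fin.last m), ∀ b,
      |(iteratedFDeriv ℝ k V (r • x) (fun m => Pi.single (dirs m) 1)) b| ≤ C₀ * (3 ^ (D + 1) * (r * (r ^ k)⁻¹) * Nn (kr D r H)) :=
    fun k hk dirs x hx b => (norm_le_pi_norm _ b).trans (h3 k hk dirs _ ((smul_mem_Ar hr x).2 hx))
  refine ⟨div_pos hε hr, (div_le_one hr).2 her, ⟨?_, ?_, ?_, ?_⟩, Sm_Vr sV, ?_, ?_, ?_, ?_, ?_⟩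
  · intro a b; rw [poly_kr hd, poly_kr hd, hsym]
  · simp only [poly_kr hd, ← map_sum, htr, map_zero]
  · intro a; rw [poly_kr hd, hl, map_zero]
  · intro i x hx
    simp only [poly_kr hd, sc_eval]
    by_cases hi : i = Fin.last m
    · subst hi
      refine Finset.sum_eq_zero fun j _ => ?_
      rw [hsym, hl]; simp
    · have := hrad i hi (r • x) (by simp [hx])
      simp only [Pi.smul_apply, smul_eq_mul, mul_assoc, ← Finset.mul_sum] at this
      exact (mul_eq_zero.1 this).resolve_left hr.ne'
  · intro x hx
    have : (r • x) (Fin.last m) = 0 := by simp [hx]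
    simp only [Vr, hb1 _ this, mul_zero]
  · intro i hi x hx
    rw [pd_Vr sV hr.ne']
    exact hb2 i hi _ (by simp [hx])
  · intro x hx a b
    rw [pd_Vr sV hr.ne']
    have := key 1 (by norm_num) ![a] x hx b
    rw [itd1 hV] at this
    refine this.trans (le_of_eq ?_)
    field_simp
  · intro x hx a b c
    rw [pd2_Vr sV hr.ne']
    have := key 2 (by norm_num) ![a, b] x hx c
    rw [itd2 hV] at this
    simp only [abs_mul, abs_of_pos hr]
    refine (mul_le_mul_of_nonneg_left this hr.le).trans (le_of_eq ?_)
    field_simp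
  · intro x hx a b c d
    rw [pd3_Vr sV hr.ne']
    have := key 3 (by norm_num) ![a, b, c] x hx d
    rw [itd3 hV] at this
    simp only [abs_mul, abs_of_pos (pow_pos hr 2)]
    refine (mul_le_mul_of_nonneg_left this (pow_pos hr 2).le).trans (le_of_eq ?_)
    field_simp
end
end B5

namespace B5
open MvPolynomial

section
variable {n : ℕ} {l : Fin n} {r ε : ℝ}

lemma Ar_N (hε : 0 < ε) (her : ε ≤ r) {x : Fin n → ℝ} (hx : x ∈ Ar l r) :
    r ^ 2 ≤ Nf l ε x ∧ Nf l ε x ≤ 9 * r ^ 2 := by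
  have hr : 0 < r := hε.trans_le her
  have e : x = r • (r⁻¹ • x) := (smul_inv_smul₀ hr.ne' x).symm
  have hy : r⁻¹ • x ∈ HA l := by rw [← smul_mem_Ar hr, ← e]; exact hx
  have h := HA_N (div_pos hε hr) ((div_le_one hr).2 her) hy
  rw [Nf_scale ε hr.ne', ← e, inv_pow] at h
  have h2 : 0 < r ^ 2 := by positivity
  constructor
  · have := h.1
    rw [inv_mul_eq_div, le_div_iff₀ h2] at this; linarith
  · have := h.2
    rw [inv_mul_eq_div, div_le_iff₀ h2] at this; linarith

lemma Nf_frozen (x : Fin n → ℝ) : (ε + x l) ^ 2 + (∑ i, if i ≠ l then x i ^ 2 else 0) = Nf l ε x := by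
  rw [Nf_eq]
  have h : ∑ i, x i ^ 2 = (∑ i, if i ≠ l then x i ^ 2 else 0) + x l ^ 2 := by
    have : ∀ i, x i ^ 2 = (if i ≠ l then x i ^ 2 else 0) + (if i = l then x i ^ 2 else 0) := by
      intro i; by_cases h : i = l <;> simp [h]
    rw [Finset.sum_congr rfl fun i _ => this i, Finset.sum_add_distrib]
    simp
  rw [h]; ring

lemma pd_U {U : (Fin n → ℝ) → ℝ} (hε : 0 < ε) (hU : ∀ y, U y = (ε / Nf l ε y) ^ (((n : ℝ) - 2) / 2)) {x}
    (hx : 0 < Nf l ε x) (a : Fin n) : pd a U x = -((n:ℝ) - 2) * Yf l ε a x / Nf l ε x * U x := by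
  have hU' : U = (fun y : ℝ => (ε / y) ^ (((n : ℝ) - 2) / 2)) ∘ Nf l ε := funext hU
  have h1 : HasDerivAt (fun t : ℝ => (ε / t)) (-ε / (Nf l ε x) ^ 2) (Nf l ε x) := by
    have := (hasDerivAt_const (Nf l ε x) ε).div (hasDerivAt_id (Nf l ε x)) hx.ne'
    have h0 : HasDerivAt (fun t : ℝ => (ε / t)) ((0 * id (Nf l ε x) - ε * 1) / id (Nf l ε x) ^ 2) (Nf l ε x) := this
    convert h0 using 1
    simp
  have hp : 0 < ε / Nf l ε x := div_pos hε hx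
  have h2 := h1.rpow_const (p := ((n : ℝ) - 2) / 2) (Or.inl hp.ne')
  have h3 := h2.comp_hasFDerivAt x ((Sm_N l ε).da x).hasFDerivAt
  have h4 := h3.fderiv
  rw [← hU'] at h4
  have h5 : fderiv ℝ (Nf l ε) x (Pi.single a 1) = 2 * Yf l ε a x := pd_N l ε a x
  unfold pd
  rw [h4, hU x]
  simp only [ContinuousLinearMap.smul_apply, smul_eq_mul, h5]
  rw [Real.rpow_sub_one hp.ne']
  field_simp

lemma U_sq {U : (Fin n → ℝ) → ℝ} (hn : 2 ≤ n) (hε : 0 < ε) (hU : ∀ y, U y = (ε / Nf l ε y) ^ (((n : ℝ) - 2) / 2)) {x}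
    (hx : 0 < Nf l ε x) : U x ^ 2 = ε ^ (n - 2) / Nf l ε x ^ (n - 2) := by
  have hp : 0 < ε / Nf l ε x := div_pos hε hx
  rw [hU, ← Real.rpow_natCast, ← Real.rpow_mul hp.le, ← div_pow, ← Real.rpow_natCast (ε / Nf l ε x)]
  congr 1
  rw [Nat.cast_sub hn]; push_cast; ring

lemma Q_eq {U : (Fin n → ℝ) → ℝ} (hn : 4 ≤ n) (hε : 0 < ε) (hU : ∀ y, U y = (ε / Nf l ε y) ^ (((n : ℝ) - 2) / 2))
    {T : Fin n → Fin n → (Fin n → ℝ) → ℝ} {x} (hx : 0 < Nf l ε x) (a b c : Fin n) :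
    U x * pd c (T a b) x
          - 2 / ((n : ℝ) - 2) * pd a U x * T b c x
          - 2 / ((n : ℝ) - 2) * pd b U x * T a c x
          + 2 / ((n : ℝ) - 2) * (∑ d : Fin n, pd d U x * T a d x) * (if b = c then 1 else 0)
          + 2 / ((n : ℝ) - 2) * (∑ d : Fin n, pd d U x * T b d x) * (if a = c then 1 else 0)
     = U x / Nf l ε x * Ph l ε T a b c x := by
  have hn2 : (n:ℝ) - 2 ≠ 0 := by
    have : (4:ℝ) ≤ n := by exact_mod_cast hn
    intro h; linarith
  have hs : ∀ a, (∑ d : Fin n, pd d U x * T a d x) = -((n:ℝ) - 2) / Nf l ε x * U x * uf l ε T a x := by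
    intro a
    simp only [uf, Finset.mul_sum, pd_U hε hU hx]
    exact Finset.sum_congr rfl fun d _ => by ring
  rw [hs, hs, pd_U hε hU hx, pd_U hε hU hx]
  unfold Ph
  simp only [dl]
  have := hx.ne'
  field_simp
  ring

lemma Ar_meas : MeasurableSet (Ar l r) := by
  have h1 : MeasurableSet {x : Fin n → ℝ | 0 ≤ x l} := (isClosed_le continuous_const (continuous_apply l)).measurableSet
  have h2 : MeasurableSet {x : Fin n → ℝ | r ≤ Real.sqrt (∑ a, x a ^ 2)} :=
    (isClosed_le continuous_const (Real.continuous_sqrt.comp cont_sq)).measurableSet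
  have h3 : MeasurableSet {x : Fin n → ℝ | Real.sqrt (∑ a, x a ^ 2) < 2 * r} :=
    (isOpen_lt (Real.continuous_sqrt.comp cont_sq) continuous_const).measurableSet
  exact h1.inter (h2.inter h3)

lemma Ar_sub (hr : 0 < r) : Ar l r ⊆ Metric.closedBall 0 (2 * r) := by
  intro x hx
  rw [mem_closedBall_zero_iff, pi_norm_le_iff_of_nonneg (by positivity)]
  intro i
  have h : x i ^ 2 ≤ ∑ a, x a ^ 2 :=
    Finset.single_le_sum (f := fun a => x a ^ 2) (fun _ _ => sq_nonneg _) (Finset.mem_univ i)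
  have h2 := hx.2.2
  rw [Real.sqrt_lt' (by positivity)] at h2
  exact abs_le_of_sq_le_sq (by linarith) (by positivity)

lemma Ar_intg (hr : 0 < r) {f : (Fin n → ℝ) → ℝ} (hf : Continuous f) : IntegrableOn f (Ar l r) :=
  ((hf.continuousOn).integrableOn_compact (isCompact_closedBall 0 (2 * r))).mono_set (Ar_sub hr)

lemma Q_int {U : (Fin n → ℝ) → ℝ} (hn : 4 ≤ n) (hε : 0 < ε) (her : ε ≤ r)
    (hU : ∀ y, U y = (ε / Nf l ε y) ^ (((n : ℝ) - 2) / 2))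
    {T : Fin n → Fin n → (Fin n → ℝ) → ℝ} (hT : ∀ a b, Sm (T a b)) {Q : Fin n → Fin n → Fin n → (Fin n → ℝ) → ℝ}
    (hQ : ∀ a b c x, 0 < Nf l ε x → Q a b c x = U x / Nf l ε x * Ph l ε T a b c x) :
    ε ^ (n - 2) / (9 * r ^ 2) ^ n * (∫ x in Ar l r, ∑ a, ∑ b, ∑ c, Ph l ε T a b c x ^ 2) ≤
      ∫ x in Ar l r, ∑ a, ∑ b, ∑ c, Q a b c x ^ 2 := by
  have hr : 0 < r := hε.trans_le her
  have cP : Continuous fun x => ∑ a, ∑ b, ∑ c, Ph l ε T a b c x ^ 2 :=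
    continuous_finset_sum _ fun a _ => continuous_finset_sum _ fun b _ => continuous_finset_sum _ fun c _ =>
    ((Sm_Ph l ε hT a b c).continuous.pow 2)
  have nP : ∀ x, 0 ≤ ∑ a, ∑ b, ∑ c, Ph l ε T a b c x ^ 2 := fun x =>
    Finset.sum_nonneg fun _ _ => Finset.sum_nonneg fun _ _ => Finset.sum_nonneg fun _ _ => sq_nonneg _
  have hr2 : 0 < r ^ 2 := by positivity
  have e : ∀ x ∈ Ar l r, ∑ a, ∑ b, ∑ c, Q a b c x ^ 2 =
      ε ^ (n - 2) / (max (Nf l ε x) (r ^ 2)) ^ n * ∑ a, ∑ b, ∑ c, Ph l ε T a b c x ^ 2 := by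
    intro x hx
    have h1 := (Ar_N hε her hx).1
    have hN : 0 < Nf l ε x := hr2.trans_le h1
    rw [max_eq_left h1]
    have hu : (U x / Nf l ε x) ^ 2 = ε ^ (n - 2) / Nf l ε x ^ n := by
      rw [div_pow, U_sq (by omega) hε hU hN, div_div, ← pow_add, Nat.sub_add_cancel (by omega)]
    simp only [hQ _ _ _ _ hN, mul_pow, hu, Finset.mul_sum]
  rw [setIntegral_congr_fun Ar_meas e, ← integral_const_mul]
  have cG : Continuous fun x => ε ^ (n - 2) / (max (Nf l ε x) (r ^ 2)) ^ n * ∑ a, ∑ b, ∑ c, Ph l ε T a b c x ^ 2 := by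
    refine Continuous.mul (Continuous.div continuous_const (((Sm_N l ε).continuous.max continuous_const).pow n) ?_) cP
    intro x
    exact (pow_pos (hr2.trans_le (le_max_right _ _)) n).ne'
  refine setIntegral_mono_on (Ar_intg hr (continuous_const.mul cP)) (Ar_intg hr cG) Ar_meas ?_
  intro x hx
  refine mul_le_mul_of_nonneg_right ?_ (nP x)
  have h1 := Ar_N hε her hx
  have : max (Nf l ε x) (r ^ 2) ≤ 9 * r ^ 2 := max_le h1.2 (by linarith)
  have h0 : 0 < max (Nf l ε x) (r ^ 2) := hr2.trans_le (le_max_right _ _)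
  gcongr
end
end B5

namespace B5
open MvPolynomial

section
variable {n : ℕ}

lemma d2_bound {D : ℕ} {H : Fin n → Fin n → MvPolynomial (Fin n) ℝ} {r K : ℝ} (hr : 0 < r)
    (hd : ∀ a b, ∀ s ∈ (H a b).support, dg s ≤ D)
    (hK : ∀ (k : KK n (SS n D)) (x : Fin n → ℝ), (∀ i, |x i| ≤ 2) → ∀ a b,
      (∀ c d, |eval x (pderiv c (pderiv d (poly k a b)))| ≤ K * Nn k)) {x : Fin n → ℝ} (hx : ∀ i, |x i| ≤ 2 * r) (a b c d) :
    |eval x (pderiv c (pderiv d (H a b)))| ≤ K * Nn (kr D r H) / r ^ 2 := by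
  have h := hK (kr D r H) (r⁻¹ • x) (fun i => by
    simp only [Pi.smul_apply, smul_eq_mul, abs_mul, abs_inv, abs_of_pos hr]
    rw [inv_mul_le_iff₀ hr, mul_comm]; exact hx i) a b c d
  rw [poly_kr hd, sc_pderiv, Derivation.leibniz, pderiv_C, sc_pderiv] at h
  simp only [smul_eq_mul, mul_zero, add_zero, map_mul, eval_C, sc_eval, smul_inv_smul₀ hr.ne'] at h
  rw [le_div_iff₀ (by positivity)]
  rw [abs_mul, abs_mul, abs_of_pos hr] at h
  linarith

lemma A_bound {H : Fin n → Fin n → MvPolynomial (Fin n) ℝ} {A : Fin n → Fin n → MvPolynomial (Fin n) ℝ} (hn : 4 ≤ n)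
    (hA : ∀ a c : Fin n, A a c =
        (∑ e : Fin n, (pderiv c (pderiv e (H a e)) + pderiv a (pderiv e (H c e)) - pderiv e (pderiv e (H a c))))
        - C (1 / ((n : ℝ) - 1)) * (∑ e : Fin n, ∑ f : Fin n, pderiv e (pderiv f (H e f))) * (if a = c then 1 else 0))
    {x : Fin n → ℝ} {β : ℝ} (hβ : 0 ≤ β) (h : ∀ a b c d, |eval x (pderiv c (pderiv d (H a b)))| ≤ β) (a c) :
    |eval x (A a c)| ≤ (3 * n + n ^ 2) * β := by
  have hn' : (4:ℝ) ≤ n := by exact_mod_cast hn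
  rw [hA]
  simp only [map_sub, map_mul, map_sum, map_add, eval_C]
  have h1 : |∑ e, (eval x (pderiv c (pderiv e (H a e))) + eval x (pderiv a (pderiv e (H c e))) - eval x (pderiv e (pderiv e (H a c))))| ≤ 3 * n * β := by
    calc _ ≤ ∑ e : Fin n, 3 * β := by
          refine (Finset.abs_sum_le_sum_abs _ _).trans (Finset.sum_le_sum fun e _ => ?_)
          have := abs_le.1 (h a e c e); have := abs_le.1 (h c e a e); have := abs_le.1 (h a c e e)
          rw [abs_le]; constructor <;> linarith
      _ = _ := by simp; ring
  have h2 : |∑ e, ∑ f, eval x (pderiv e (pderiv f (H e f)))| ≤ n ^ 2 * β := by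
    calc _ ≤ ∑ e : Fin n, ∑ f : Fin n, β := by
          refine (Finset.abs_sum_le_sum_abs _ _).trans (Finset.sum_le_sum fun e _ => ?_)
          exact (Finset.abs_sum_le_sum_abs _ _).trans (Finset.sum_le_sum fun f _ => h _ _ _ _)
      _ = _ := by simp; ring
  have h3 : |1 / ((n:ℝ) - 1)| ≤ 1 := by
    rw [abs_of_nonneg (by apply div_nonneg <;> linarith), div_le_one (by linarith)]; linarith
  have h4 : |eval x (if a = c then (1 : MvPolynomial (Fin n) ℝ) else 0)| ≤ 1 := by split_ifs <;> simp
  refine (abs_sub _ _).trans ?_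
  rw [abs_mul, abs_mul]
  have h5 : |1 / ((n:ℝ) - 1)| * |∑ e, ∑ f, eval x (pderiv e (pderiv f (H e f)))| * |eval x (if a = c then (1 : MvPolynomial (Fin n) ℝ) else 0)|
     ≤ 1 * (n ^ 2 * β) * 1 := by gcongr
  linarith

lemma Z_bound {H A : Fin n → Fin n → MvPolynomial (Fin n) ℝ} {Z : Fin n → Fin n → Fin n → Fin n → MvPolynomial (Fin n) ℝ} (hn : 4 ≤ n)
    (hZ : ∀ a b c d : Fin n, Z a b c d =
        pderiv b (pderiv d (H a c)) - pderiv b (pderiv c (H a d)) + pderiv a (pderiv c (H d b)) - pderiv a (pderiv d (H b c))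
          + C (1 / ((n : ℝ) - 2))
              * ((if b = d then A a c else 0) - (if b = c then A a d else 0)
                  + (if a = c then A b d else 0) - (if d = b then A b c else 0)))
    {x : Fin n → ℝ} {β γ : ℝ} (hβ : 0 ≤ β) (hγ : 0 ≤ γ) (h : ∀ a b c d, |eval x (pderiv c (pderiv d (H a b)))| ≤ β)
    (h' : ∀ a c, |eval x (A a c)| ≤ γ) (a b c d) :
    |eval x (Z a b c d)| ≤ 4 * β + 4 * γ := by
  have hn' : (4:ℝ) ≤ n := by exact_mod_cast hn
  have h3 : |1 / ((n:ℝ) - 2)| ≤ 1 := by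
    rw [abs_of_nonneg (by apply div_nonneg <;> linarith), div_le_one (by linarith)]; linarith
  have h4 : ∀ (p : Prop) [Decidable p] (a c), |eval x (if p then A a c else 0)| ≤ γ := by
    intro p _ a c; split_ifs
    · exact h' a c
    · simpa using hγ
  rw [hZ]
  simp only [map_sub, map_mul, map_add, eval_C]
  have g1 := h4 (b = d) a c
  have g2 := h4 (b = c) a d
  have g3 := h4 (a = c) b d
  have g4 := h4 (d = b) b c
  have h5 : |eval x (if b = d then A a c else 0) - eval x (if b = c then A a d else 0)
                  + eval x (if a = c then A b d else 0) - eval x (if d = b then A b c else 0)| ≤ 4 * γ := by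
    rw [abs_le] at g1 g2 g3 g4 ⊢
    constructor <;> linarith
  have h6 := mul_le_mul h3 h5 (abs_nonneg _) zero_le_one
  rw [← abs_mul] at h6
  have i1 := h a c b d; have i2 := h a d b c; have i3 := h d b a c; have i4 := h b c a d
  rw [abs_le] at h6 i1 i2 i3 i4 ⊢
  constructor <;> linarith

lemma int_bound {r B : ℝ} (hr : 0 < r) {s : Set (Fin n → ℝ)} (hs : s ⊆ Metric.closedBall 0 (2 * r)) (hB : 0 ≤ B)
    {Z : Fin n → Fin n → Fin n → Fin n → (Fin n → ℝ) → ℝ}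
    (h : ∀ x ∈ s, ∀ a b c d, |Z a b c d x| ≤ B) :
    ∫ x in s, ∑ a, ∑ b, ∑ c, ∑ d, Z a b c d x ^ 2 ≤ n ^ 4 * B ^ 2 * (4 * r) ^ n := by
  have hv := Real.volume_pi_closedBall (0 : Fin n → ℝ) (r := 2 * r) (by positivity)
  have hfin : volume (Metric.closedBall (0 : Fin n → ℝ) (2 * r)) < ⊤ := by rw [hv]; exact ENNReal.ofReal_lt_top
  have hb : ∀ x ∈ s, ‖∑ a, ∑ b, ∑ c, ∑ d, Z a b c d x ^ 2‖ ≤ n ^ 4 * B ^ 2 := by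
    intro x hx
    have h0 : 0 ≤ ∑ a, ∑ b, ∑ c, ∑ d, Z a b c d x ^ 2 :=
      Finset.sum_nonneg fun _ _ => Finset.sum_nonneg fun _ _ => Finset.sum_nonneg fun _ _ => Finset.sum_nonneg fun _ _ => sq_nonneg _
    rw [Real.norm_of_nonneg h0]
    calc _ ≤ ∑ a : Fin n, ∑ b : Fin n, ∑ c : Fin n, ∑ d : Fin n, B ^ 2 :=
          Finset.sum_le_sum fun a _ => Finset.sum_le_sum fun b _ => Finset.sum_le_sum fun c _ => Finset.sum_le_sum fun d _ =>
            sq_le_sq' (abs_le.1 (h x hx a b c d)).1 (abs_le.1 (h x hx a b c d)).2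
      _ = _ := by simp; ring
  have := norm_setIntegral_le_of_norm_le_const (lt_of_le_of_lt (measure_mono hs) hfin) hb
  refine (le_abs_self _).trans (this.trans (mul_le_mul_of_nonneg_left ?_ (by positivity)))
  refine (measureReal_mono hs hfin.ne).trans (le_of_eq ?_)
  rw [measureReal_def, hv, ENNReal.toReal_ofReal (by positivity), Fintype.card_fin]
  ring

lemma Ur_sub {r : ℝ} (hr : 0 < r) (P : Fin n → Prop) [DecidablePred P] :
    {x : Fin n → ℝ | Real.sqrt (∑ a : Fin n, (x a - if P a then 3 * r / 2 else 0) ^ 2) < r / 4} ⊆ Metric.closedBall 0 (2 * r) := by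
  intro x hx
  rw [Set.mem_setOf_eq, Real.sqrt_lt' (by positivity)] at hx
  rw [mem_closedBall_zero_iff, pi_norm_le_iff_of_nonneg (by positivity)]
  intro i
  have h : (x i - if P i then 3 * r / 2 else 0) ^ 2 ≤ _ :=
    Finset.single_le_sum (f := fun a => (x a - if P a then 3 * r / 2 else 0) ^ 2) (fun _ _ => sq_nonneg _) (Finset.mem_univ i)
  have h2 := abs_le_of_sq_le_sq (h.trans hx.le) (by positivity)
  rw [abs_le] at h2
  rw [Real.norm_eq_abs, abs_le]
  split_ifs at h2 <;> constructor <;> linarith [h2.1, h2.2]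

lemma e1_aux {r : ℝ} (hr : 0 < r) (E M K N P : ℝ) (k : ℕ) :
    E * r ^ ((6 : ℤ) - 2 * (k : ℤ)) * (P ^ 4 * (M * (K * N / r ^ 2)) ^ 2 * (4 * r) ^ k) =
      P ^ 4 * (M * K) ^ 2 * 4 ^ k * (E * r ^ 2 / r ^ k) * N ^ 2 := by
  have h : r ^ ((6 : ℤ) - 2 * (k : ℤ)) = r ^ 6 / (r ^ k) ^ 2 := by
    rw [zpow_sub₀ hr.ne', mul_comm (2:ℤ), zpow_mul, zpow_natCast]; norm_cast
  rw [h, mul_pow 4 r]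
  obtain ⟨R, hR⟩ : ∃ R, R = r ^ k := ⟨_, rfl⟩
  have hR0 : R ≠ 0 := hR ▸ (pow_pos hr k).ne'
  rw [← hR]
  field_simp
end
end B5

/-- with the notation of the paper (bubble `U_ε`, polynomial tensor `H` with
coefficients `h_{ij,α}`, corrector vector field `V`, `S`, `T = H − S`, `Q_{ab,c}`, and the
algebraic Weyl tensor `Z`), there is `C = C(n, C₀) > 0` such that for all `θ ∈ (0,1)`
and `r ≥ ε`:
`ε^{n−2} r^{6−2n} ∫_{U_r} Σ Z² ≤ (C/θ) ∫_{B⁺_{2r}∖B⁺_r} Σ Q² + θ ε^{n−2} Σ h² r^{2|α|+2−n}`. -/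
theorem stmt_5 (n : ℕ) (hn : 4 ≤ n) (C₀ : ℝ) (hC₀ : 0 < C₀) :
    ∃ C : ℝ, 0 < C ∧
    ∀ ε ρ : ℝ, 0 < ε → 0 < ρ →
    ∀ U : (Fin n → ℝ) → ℝ,
      (∀ y : Fin n → ℝ, U y =
        (ε / ((ε + y ⟨n - 1, by omega⟩) ^ 2
          + ∑ i : Fin n, if (i : ℕ) < n - 1 then y i ^ 2 else 0)) ^ (((n : ℝ) - 2) / 2)) →
    ∀ H : Fin n → Fin n → MvPolynomial (Fin n) ℝ,
      (∀ a b : Fin n, ∀ m ∈ (H a b).support,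
        1 ≤ m.sum (fun _ e => e) ∧ m.sum (fun _ e => e) ≤ (n - 2) / 2) →
      (∀ a b : Fin n, H a b = H b a) →
      ((∑ a : Fin n, H a a) = 0) →
      (∀ a : Fin n, H a ⟨n - 1, by omega⟩ = 0) →
      (∀ i j k : Fin n, (i : ℕ) < n - 1 → (j : ℕ) < n - 1 → (k : ℕ) < n - 1 →
        MvPolynomial.eval (0 : Fin n → ℝ) (MvPolynomial.pderiv k (H i j)) = 0) →
      (∀ i : Fin n, (i : ℕ) < n - 1 → ∀ x : Fin n → ℝ, x ⟨n - 1, by omega⟩ = 0 →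
        (∑ j : Fin n, if (j : ℕ) < n - 1 then x j * MvPolynomial.eval x (H i j) else 0) = 0) →
    ∀ A : Fin n → Fin n → MvPolynomial (Fin n) ℝ,
      (∀ a c : Fin n, A a c =
        (∑ e : Fin n,
          (MvPolynomial.pderiv c (MvPolynomial.pderiv e (H a e))
            + MvPolynomial.pderiv a (MvPolynomial.pderiv e (H c e))
            - MvPolynomial.pderiv e (MvPolynomial.pderiv e (H a c))))
        - MvPolynomial.C (1 / ((n : ℝ) - 1))
            * (∑ e : Fin n, ∑ f : Fin n,
                MvPolynomial.pderiv e (MvPolynomial.pderiv f (H e f)))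
            * (if a = c then 1 else 0)) →
    ∀ Z : Fin n → Fin n → Fin n → Fin n → MvPolynomial (Fin n) ℝ,
      (∀ a b c d : Fin n, Z a b c d =
        MvPolynomial.pderiv b (MvPolynomial.pderiv d (H a c))
          - MvPolynomial.pderiv b (MvPolynomial.pderiv c (H a d))
          + MvPolynomial.pderiv a (MvPolynomial.pderiv c (H d b))
          - MvPolynomial.pderiv a (MvPolynomial.pderiv d (H b c))
          + MvPolynomial.C (1 / ((n : ℝ) - 2))
              * ((if b = d then A a c else 0) - (if b = c then A a d else 0)
                  + (if a = c then A b d else 0) - (if d = b then A b c else 0))) →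
    ∀ η : ℝ → ℝ, ContDiff ℝ (⊤ : ℕ∞) η → (∀ t : ℝ, 0 ≤ η t ∧ η t ≤ 1) →
      (∀ t : ℝ, 0 ≤ t → t ≤ 4 / 3 → η t = 1) → (∀ t : ℝ, 5 / 3 ≤ t → η t = 0) →
    ∀ V : (Fin n → ℝ) → Fin n → ℝ, ContDiff ℝ (⊤ : ℕ∞) V →
      -- (i) the divergence-form equation on ℝⁿ₊
      (∀ a : Fin n, ∀ x : Fin n → ℝ, 0 ≤ x ⟨n - 1, by omega⟩ →
        (∑ b : Fin n, fderiv ℝ (fun z : Fin n → ℝ =>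
          U z ^ (2 * (n : ℝ) / ((n : ℝ) - 2))
            * (η (Real.sqrt (∑ c : Fin n, z c ^ 2) / ρ) * MvPolynomial.eval z (H a b)
              - fderiv ℝ (fun w : Fin n → ℝ => V w b) z (Pi.single a 1)
              - fderiv ℝ (fun w : Fin n → ℝ => V w a) z (Pi.single b 1)
              + 2 / (n : ℝ)
                  * (∑ c : Fin n, fderiv ℝ (fun w : Fin n → ℝ => V w c) z (Pi.single c 1))
                  * (if a = b then 1 else 0))) x (Pi.single b 1)) = 0) →
      -- (ii) the boundary conditions on ∂ℝⁿ₊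
      (∀ i : Fin n, (i : ℕ) < n - 1 → ∀ x : Fin n → ℝ, x ⟨n - 1, by omega⟩ = 0 →
        fderiv ℝ (fun w : Fin n → ℝ => V w i) x (Pi.single (⟨n - 1, by omega⟩ : Fin n) 1) = 0
          ∧ V x ⟨n - 1, by omega⟩ = 0) →
      -- (iii) the derivative bounds up to order 3 on ℝⁿ₊
      (∀ k : ℕ, k ≤ 3 → ∀ dirs : Fin k → Fin n, ∀ x : Fin n → ℝ, 0 ≤ x ⟨n - 1, by omega⟩ →
        ‖iteratedFDeriv ℝ k V x (fun m => Pi.single (dirs m) 1)‖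
          ≤ C₀ * ∑ i : Fin n, ∑ j : Fin n,
              if (i : ℕ) < n - 1 ∧ (j : ℕ) < n - 1 then
                ∑ m ∈ (H i j).support, |MvPolynomial.coeff m (H i j)|
                  * (ε + Real.sqrt (∑ c : Fin n, x c ^ 2))
                      ^ ((m.sum (fun _ e => e) : ℤ) + 1 - (k : ℤ))
              else 0) →
    ∀ S : Fin n → Fin n → (Fin n → ℝ) → ℝ,
      (∀ (a b : Fin n) (x : Fin n → ℝ), S a b x =
        fderiv ℝ (fun w : Fin n → ℝ => V w b) x (Pi.single a 1)
          + fderiv ℝ (fun w : Fin n → ℝ => V w a) x (Pi.single b 1)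
          - 2 / (n : ℝ)
              * (∑ c : Fin n, fderiv ℝ (fun w : Fin n → ℝ => V w c) x (Pi.single c 1))
              * (if a = b then 1 else 0)) →
    ∀ T : Fin n → Fin n → (Fin n → ℝ) → ℝ,
      (∀ (a b : Fin n) (x : Fin n → ℝ), T a b x = MvPolynomial.eval x (H a b) - S a b x) →
    ∀ Q : Fin n → Fin n → Fin n → (Fin n → ℝ) → ℝ,
      (∀ (a b c : Fin n) (x : Fin n → ℝ), Q a b c x =
        U x * fderiv ℝ (T a b) x (Pi.single c 1)
          - 2 / ((n : ℝ) - 2) * fderiv ℝ U x (Pi.single a 1) * T b c x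
          - 2 / ((n : ℝ) - 2) * fderiv ℝ U x (Pi.single b 1) * T a c x
          + 2 / ((n : ℝ) - 2)
              * (∑ d : Fin n, fderiv ℝ U x (Pi.single d 1) * T a d x)
              * (if b = c then 1 else 0)
          + 2 / ((n : ℝ) - 2)
              * (∑ d : Fin n, fderiv ℝ U x (Pi.single d 1) * T b d x)
              * (if a = c then 1 else 0)) →
    ∀ θ : ℝ, 0 < θ → θ < 1 → ∀ r : ℝ, ε ≤ r →
      ε ^ (n - 2) * r ^ ((6 : ℤ) - 2 * (n : ℤ))
          * ∫ x in {x : Fin n → ℝ |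
              Real.sqrt (∑ a : Fin n,
                (x a - if (a : ℕ) = n - 1 then 3 * r / 2 else 0) ^ 2) < r / 4},
            ∑ a : Fin n, ∑ b : Fin n, ∑ c : Fin n, ∑ d : Fin n,
              (MvPolynomial.eval x (Z a b c d)) ^ 2
        ≤ C / θ * (∫ x in {x : Fin n → ℝ | 0 ≤ x ⟨n - 1, by omega⟩
              ∧ r ≤ Real.sqrt (∑ a : Fin n, x a ^ 2)
              ∧ Real.sqrt (∑ a : Fin n, x a ^ 2) < 2 * r},
            ∑ a : Fin n, ∑ b : Fin n, ∑ c : Fin n, (Q a b c x) ^ 2)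
          + θ * ε ^ (n - 2) * ∑ i : Fin n, ∑ j : Fin n,
              if (i : ℕ) < n - 1 ∧ (j : ℕ) < n - 1 then
                ∑ m ∈ (H i j).support,
                  (MvPolynomial.coeff m (H i j)) ^ 2
                    * r ^ (2 * (m.sum (fun _ e => e) : ℤ) + 2 - (n : ℤ))
              else 0 := by
  obtain ⟨m, rfl⟩ : ∃ m, n = m + 1 := ⟨n - 1, by omega⟩
  obtain ⟨D, hD⟩ : ∃ D, D = (m + 1 - 2) / 2 := ⟨_, rfl⟩
  obtain ⟨Kc, hKc0, hKc⟩ := B5.core (m := m) (S := B5.SS (m + 1) D) (by omega) (C1 := C₀ * 3 ^ (D + 1)) (by positivity)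
  obtain ⟨K, hK0, hK⟩ := B5.poly_bounds (n := m + 1) (S := B5.SS (m + 1) D)
  obtain ⟨M, hM⟩ : ∃ M : ℝ, M = 4 + 4 * (3 * ((m + 1 : ℕ) : ℝ) + ((m + 1 : ℕ) : ℝ) ^ 2) := ⟨_, rfl⟩
  have hM0 : 0 ≤ M := by rw [hM]; positivity
  obtain ⟨c, hc⟩ : ∃ c : ℝ, c = ((m + 1 : ℕ) : ℝ) ^ 4 * (M * K) ^ 2 * 4 ^ (m + 1) := ⟨_, rfl⟩
  have hc0 : 0 ≤ c := by rw [hc]; positivity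
  refine ⟨c * Kc * 9 ^ (m + 1) + 1, by positivity, ?_⟩
  intro ε ρ hε hρ U hU H hdeg hsym htr hlast _ hrad A hA Z hZ η _ _ _ _ V hV _ hbc hbd S hS T hT Q hQ θ hθ0 hθ1 r her
  have hr : 0 < r := hε.trans_le her
  have hlt : ∀ i : Fin (m + 1), ((i : ℕ) < m + 1 - 1) ↔ i ≠ Fin.last m := by
    intro i
    rw [Ne, Fin.ext_iff, Fin.val_last]
    have := i.2
    omega
  have hd : ∀ a b, ∀ s ∈ (H a b).support, B5.dg s ≤ D := fun a b s hs => hD ▸ (hdeg a b s hs).2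
  have hU' : ∀ y, U y = (ε / B5.Nf (Fin.last m) ε y) ^ ((((m + 1 : ℕ) : ℝ) - 2) / 2) := by
    intro y
    rw [hU, ← B5.Nf_frozen]
    simp only [hlt]
    rfl
  have sV : ∀ a, B5.Sm (fun x => V x a) := fun a => contDiff_pi.1 hV a
  have hTT : T = B5.Tf H (fun a x => V x a) := by
    funext a b x
    rw [hT, hS]
    rfl
  have hQ' : ∀ a b c x, 0 < B5.Nf (Fin.last m) ε x →
      Q a b c x = U x / B5.Nf (Fin.last m) ε x * B5.Ph (Fin.last m) ε T a b c x := by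
    intro a b c x hx
    rw [hQ]
    exact B5.Q_eq hn hε hU' hx a b c
  have hadm := B5.adm_of (H := H) (D := D) (C₀ := C₀) (V := V) hε her hC₀.le hd hsym htr hlast
    (by
      intro i hi x hx
      rw [← hrad i ((hlt i).2 hi) x hx]
      refine Finset.sum_congr rfl fun j _ => ?_
      by_cases hj : j = Fin.last m
      · subst hj
        have h0 : x (Fin.last m) = 0 := hx
        simp [h0]
      · rw [if_pos ((hlt j).2 hj)])
    hV
    (fun x hx => (hbc 0 (by simp; omega) x hx).2)
    (fun i hi x hx => (hbc i ((hlt i).2 hi) x hx).1)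
    (by
      intro k hk dirs x hx
      refine (hbd k hk dirs x hx.1).trans (mul_le_mul_of_nonneg_left ?_ hC₀.le)
      have h1 := hx.2.1
      have h2 := hx.2.2
      exact B5.rhs_bound _ hr (by linarith) (by linarith) hd k)
  have hcore := hKc _ _ _ hadm
  have hJ := B5.JJ_scale (l := Fin.last m) sV hr hd ε
  have hQi := B5.Q_int hn hε her hU' (fun a b => hTT ▸ B5.Sm_T sV a b) hQ'
  rw [hTT, ← hJ] at hQi
  obtain ⟨N, hN⟩ : ∃ N, N = B5.Nn (B5.kr D r H) := ⟨_, rfl⟩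
  obtain ⟨J, hJe⟩ : ∃ J, J = B5.JJ (Fin.last m) (ε / r) (B5.kr D r H) (B5.Vr r fun a x => V x a) := ⟨_, rfl⟩
  have hN0 : 0 ≤ N := hN ▸ B5.Nn_nonneg _
  rw [← hN, ← hJe] at hcore
  rw [← hJe] at hQi
  obtain ⟨I, hI⟩ : ∃ I, I = ∫ x in B5.Ar (Fin.last m) r, ∑ a, ∑ b, ∑ c, Q a b c x ^ 2 := ⟨_, rfl⟩
  rw [← hI] at hQi
  have hI0 : 0 ≤ I := by
    rw [hI]
    exact integral_nonneg fun x => Finset.sum_nonneg fun _ _ => Finset.sum_nonneg fun _ _ => Finset.sum_nonneg fun _ _ => sq_nonneg _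
  have hZb := B5.int_bound hr (B5.Ur_sub (n := m + 1) hr (fun a => (a : ℕ) = m + 1 - 1)) (B := M * (K * N / r ^ 2)) (by positivity)
    (Z := fun a b c d x => MvPolynomial.eval x (Z a b c d))
    (by
      intro x hx a b c d
      have hx' : ∀ i, |x i| ≤ 2 * r := by
        have := B5.Ur_sub (n := m + 1) hr _ hx
        rw [mem_closedBall_zero_iff, pi_norm_le_iff_of_nonneg (by positivity)] at this
        exact this
      have hβ : 0 ≤ K * N / r ^ 2 := by positivity
      have h2 : ∀ a b c d, |MvPolynomial.eval x (MvPolynomial.pderiv c (MvPolynomial.pderiv d (H a b)))| ≤ K * N / r ^ 2 := by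
        intro a b c d
        rw [hN]
        exact B5.d2_bound hr hd (fun k x hx a b => (hK k x hx a b).2.2) hx' a b c d
      have h3 := B5.A_bound hn hA hβ h2
      have h4 := B5.Z_bound hn hZ hβ (by positivity) h2 h3 a b c d
      refine h4.trans (le_of_eq ?_)
      rw [hM]; ring)
  have hmain : ε ^ (m + 1 - 2) * r ^ ((6 : ℤ) - 2 * ((m + 1 : ℕ) : ℤ)) *
      (((m + 1 : ℕ) : ℝ) ^ 4 * (M * (K * N / r ^ 2)) ^ 2 * (4 * r) ^ (m + 1)) ≤ c * Kc * 9 ^ (m + 1) * I := by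
    have e1 : ε ^ (m + 1 - 2) * r ^ ((6 : ℤ) - 2 * ((m + 1 : ℕ) : ℤ)) *
      (((m + 1 : ℕ) : ℝ) ^ 4 * (M * (K * N / r ^ 2)) ^ 2 * (4 * r) ^ (m + 1)) = c * (ε ^ (m + 1 - 2) * r ^ 2 / r ^ (m + 1)) * N ^ 2 := by
      rw [hc]; exact B5.e1_aux hr _ _ _ _ _ _
    have e2 : ε ^ (m + 1 - 2) / (9 * r ^ 2) ^ (m + 1) * (r ^ (m + 1 + 2) * J) * 9 ^ (m + 1) = (ε ^ (m + 1 - 2) * r ^ 2 / r ^ (m + 1)) * J := by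
      rw [mul_pow 9, ← pow_mul, mul_comm 2 (m + 1), pow_mul, pow_add r (m + 1) 2]
      field_simp
    rw [e1]
    have hp : 0 ≤ ε ^ (m + 1 - 2) * r ^ 2 / r ^ (m + 1) := by positivity
    calc c * (ε ^ (m + 1 - 2) * r ^ 2 / r ^ (m + 1)) * N ^ 2
        ≤ c * (ε ^ (m + 1 - 2) * r ^ 2 / r ^ (m + 1)) * (Kc * J) := by gcongr
      _ = c * Kc * ((ε ^ (m + 1 - 2) * r ^ 2 / r ^ (m + 1)) * J) := by ring
      _ = c * Kc * (ε ^ (m + 1 - 2) / (9 * r ^ 2) ^ (m + 1) * (r ^ (m + 1 + 2) * J) * 9 ^ (m + 1)) := by rw [e2]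
      _ ≤ c * Kc * (I * 9 ^ (m + 1)) := by gcongr
      _ = _ := by ring
  have hpos : 0 ≤ ε ^ (m + 1 - 2) * r ^ ((6 : ℤ) - 2 * ((m + 1 : ℕ) : ℤ)) := by positivity
  have hlhs := (mul_le_mul_of_nonneg_left hZb hpos).trans hmain
  have hθ : c * Kc * 9 ^ (m + 1) * I ≤ (c * Kc * 9 ^ (m + 1) + 1) / θ * I := by
    refine mul_le_mul_of_nonneg_right ?_ hI0
    rw [le_div_iff₀ hθ0]
    have : 0 ≤ c * Kc * 9 ^ (m + 1) := by positivity
    nlinarith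
  have hlast0 : 0 ≤ θ * ε ^ (m + 1 - 2) * ∑ i : Fin (m + 1), ∑ j : Fin (m + 1),
              if (i : ℕ) < m + 1 - 1 ∧ (j : ℕ) < m + 1 - 1 then
                ∑ s ∈ (H i j).support,
                  (MvPolynomial.coeff s (H i j)) ^ 2
                    * r ^ (2 * (s.sum (fun _ e => e) : ℤ) + 2 - ((m + 1 : ℕ) : ℤ))
              else 0 := by
    refine mul_nonneg (by positivity) (Finset.sum_nonneg fun i _ => Finset.sum_nonneg fun j _ => ?_)
    split_ifs
    · exact Finset.sum_nonneg fun s _ => by positivity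
    · exact le_rfl
  refine (hlhs.trans hθ).trans ?_
  rw [hI]
  exact le_add_of_nonneg_right hlast0
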